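/- arXiv:2208.07534 — 6 statements merged into one kernel-verified Lean document; each statement's English description precedes it below -/
import Mathlib

section
/- Let λ > 0 be real, let ξ₀, b₀, b₁, b₂ ∈ ℂ, and let u : ℝ → ℂ be a twice continuously differentiable function satisfying the ordinary differential equation u''(y) = (y³ + 2ξ₀·y + b₂λ − ξ₀²λ⁻² + b₀ξ₀λ⁻³ − b₁²λ⁻⁴/4)·u(y) for all y ∈ ℝ. Define U : ℝ³ → ℂ by U(x₀, x₁, x₂) = exp(i·ξ₀·λ·x₀ + i·λ⁵·x₂ − i·(b₁/2)·x₁) · u(λ²·x₁). Then (P_mod + b₀D₀ + b₁D₁ + b₂D₂)U = 0 identically on ℝ³. -/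
open Complex

/-- Partial derivative in the `j`-th coordinate direction. -/
noncomputable def pd {n : ℕ} (j : Fin n) (f : (Fin n → ℝ) → ℂ) (x : Fin n → ℝ) : ℂ :=
  fderiv ℝ f x (Pi.single j 1)

/-- The operator `P_mod = -D₀² + 2x₁D₀D₂ + D₁² + x₁³D₂²`, where `D_j = -i ∂_j`;
equivalently `P_mod u = ∂₀²u - 2x₁ ∂₀∂₂u - ∂₁²u - x₁³ ∂₂²u`. -/
noncomputable def Pmod (u : (Fin 3 → ℝ) → ℂ) (x : Fin 3 → ℝ) : ℂ :=
  pd 0 (pd 0 u) x - 2 * (x 1 : ℂ) * pd 2 (pd 0 u) x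
    - pd 1 (pd 1 u) x - (x 1 : ℂ) ^ 3 * pd 2 (pd 2 u) x

/-- The operator `P_mod + b₀D₀ + b₁D₁ + b₂D₂`. -/
noncomputable def Pop (b₀ b₁ b₂ : ℂ) (u : (Fin 3 → ℝ) → ℂ) (x : Fin 3 → ℝ) : ℂ :=
  Pmod u x + b₀ * (-I * pd 0 u x) + b₁ * (-I * pd 1 u x) + b₂ * (-I * pd 2 u x)


/-- The exponential ansatz. -/
noncomputable def ansatz (a b c : ℂ) (k : ℝ) (v : ℝ → ℂ) (x : Fin 3 → ℝ) : ℂ :=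
  Complex.exp (a * (x 0 : ℂ) + b * (x 2 : ℂ) - c * (x 1 : ℂ)) * v (k * x 1)

lemma pd_ansatz (a b c : ℂ) (k : ℝ) (v : ℝ → ℂ) (hv : Differentiable ℝ v) (j : Fin 3)
    (x : Fin 3 → ℝ) :
    pd j (ansatz a b c k v) x =
      Complex.exp (a * (x 0 : ℂ) + b * (x 2 : ℂ) - c * (x 1 : ℂ)) *
        ((a * ((Pi.single j 1 : Fin 3 → ℝ) 0 : ℂ) + b * ((Pi.single j 1 : Fin 3 → ℝ) 2 : ℂ)
          - c * ((Pi.single j 1 : Fin 3 → ℝ) 1 : ℂ)) * v (k * x 1)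
          + ((Pi.single j 1 : Fin 3 → ℝ) 1 : ℂ) * k * deriv v (k * x 1)) := by
  have hp : ∀ i : Fin 3, HasFDerivAt (fun y : Fin 3 → ℝ => y i)
      (ContinuousLinearMap.proj (R := ℝ) (φ := fun _ : Fin 3 => ℝ) i) x := fun i =>
    (ContinuousLinearMap.proj (R := ℝ) (φ := fun _ : Fin 3 => ℝ) i).hasFDerivAt
  have hc : ∀ i : Fin 3, HasFDerivAt (fun y : Fin 3 → ℝ => (y i : ℂ))
      (Complex.ofRealCLM.comp
        (ContinuousLinearMap.proj (R := ℝ) (φ := fun _ : Fin 3 => ℝ) i)) x := fun i =>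
    (Complex.ofRealCLM.comp
        (ContinuousLinearMap.proj (R := ℝ) (φ := fun _ : Fin 3 => ℝ) i)).hasFDerivAt
  have he := ((((hc 0).const_mul a).add ((hc 2).const_mul b)).sub ((hc 1).const_mul c)).cexp
  have hw := (hv (k * x 1)).hasFDerivAt.comp x ((hp 1).const_mul k)
  have h := he.mul hw
  have h2 : fderiv ℝ (ansatz a b c k v) x = _ := HasFDerivAt.fderiv h
  unfold pd
  rw [h2]
  simp [fderiv_eq_smul_deriv]
  ring

lemma pd_zero_ansatz (a b c : ℂ) (k : ℝ) (v : ℝ → ℂ) (hv : Differentiable ℝ v) :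
    pd 0 (ansatz a b c k v) = ansatz a b c k (fun y => a * v y) := by
  funext x
  rw [pd_ansatz a b c k v hv]
  simp [ansatz]

lemma pd_two_ansatz (a b c : ℂ) (k : ℝ) (v : ℝ → ℂ) (hv : Differentiable ℝ v) :
    pd 2 (ansatz a b c k v) = ansatz a b c k (fun y => b * v y) := by
  funext x
  rw [pd_ansatz a b c k v hv]
  simp [ansatz]

lemma pd_one_ansatz (a b c : ℂ) (k : ℝ) (v : ℝ → ℂ) (hv : Differentiable ℝ v) :
    pd 1 (ansatz a b c k v) = ansatz a b c k (fun y => -c * v y + k * deriv v y) := by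
  funext x
  rw [pd_ansatz a b c k v hv]
  simp [ansatz]

/-- If `u : ℝ → ℂ` is `C²` and solves
`u'' = (y³ + 2ξ₀y + b₂λ − ξ₀²λ⁻² + b₀ξ₀λ⁻³ − b₁²λ⁻⁴/4)·u`, then
`U(x) = exp(iξ₀λx₀ + iλ⁵x₂ − i(b₁/2)x₁)·u(λ²x₁)` solves
`(P_mod + b₀D₀ + b₁D₁ + b₂D₂)U = 0` on `ℝ³`. -/
theorem exact_solution_family (lam : ℝ) (hlam : 0 < lam) (ξ₀ b₀ b₁ b₂ : ℂ)
    (u : ℝ → ℂ) (hu : ContDiff ℝ 2 u)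
    (hODE : ∀ y : ℝ, deriv (deriv u) y =
      ((y : ℂ) ^ 3 + 2 * ξ₀ * (y : ℂ) + b₂ * (lam : ℂ)
        - ξ₀ ^ 2 * ((lam : ℂ) ^ 2)⁻¹ + b₀ * ξ₀ * ((lam : ℂ) ^ 3)⁻¹
        - b₁ ^ 2 * ((lam : ℂ) ^ 4)⁻¹ / 4) * u y) :
    ∀ x : Fin 3 → ℝ,
      Pop b₀ b₁ b₂
        (fun x : Fin 3 → ℝ =>
          Complex.exp (I * ξ₀ * (lam : ℂ) * (x 0 : ℂ) + I * (lam : ℂ) ^ 5 * (x 2 : ℂ)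
              - I * (b₁ / 2) * (x 1 : ℂ)) * u (lam ^ 2 * x 1)) x = 0 := by
  intro x
  have hd : Differentiable ℝ u := hu.differentiable (by norm_num)
  have hd' : Differentiable ℝ (deriv u) :=
    ((contDiff_succ_iff_deriv (n := 1)).1 (by rw [one_add_one_eq_two]; exact hu)).2.2.differentiable (by norm_num)
  change Pop b₀ b₁ b₂ (ansatz (I * ξ₀ * (lam : ℂ)) (I * (lam : ℂ) ^ 5) (I * (b₁ / 2))
    (lam ^ 2) u) x = 0
  have hl : (lam : ℂ) ≠ 0 := by exact_mod_cast hlam.ne'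
  have hderiv : ∀ (c k : ℂ) (y : ℝ), deriv (fun y => -c * u y + k * deriv u y) y
      = -c * deriv u y + k * deriv (deriv u) y := fun c k y =>
    (((hd y).hasDerivAt.const_mul (-c)).add ((hd' y).hasDerivAt.const_mul k)).deriv
  unfold Pop Pmod
  rw [pd_zero_ansatz _ _ _ _ _ hd, pd_one_ansatz _ _ _ _ _ hd, pd_two_ansatz _ _ _ _ _ hd,
    pd_zero_ansatz _ _ _ _ _ (hd.const_mul _), pd_two_ansatz _ _ _ _ _ (hd.const_mul _),
    pd_two_ansatz _ _ _ _ _ (hd.const_mul _),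
    pd_one_ansatz _ _ _ _ (fun y => _ * u y + _ * deriv u y)
      ((hd.const_mul _).add (hd'.const_mul _))]
  simp only [ansatz, hderiv, hODE]
  generalize Complex.exp _ = E
  generalize deriv u _ = u1
  generalize u _ = u0
  push_cast
  field_simp
  ring_nf
  simp only [I_sq]
  ring
end

section
/- Let p(x, ξ) = −ξ₀² + 2x₁ξ₀ξ₂ + ξ₁² + x₁³ξ₂² and let ρ = (x, ξ) be any point with x₁ = 0, ξ₀ = ξ₁ = 0 and ξ₂ ≠ 0. Let F = F_p(ρ) be the Hamilton map of p at ρ, i.e. the 6×6 real matrix that is the Jacobian at ρ of the Hamilton vector field H_p = (∂p/∂ξ₀, ∂p/∂ξ₁, ∂p/∂ξ₂, −∂p/∂x₀, −∂p/∂x₁, −∂p/∂x₂). Then F⁴ = 0 (so in particular F has no nonzero real eigenvalues), and Ker(F²) ∩ Im(F²) ≠ {0}; in fact Ker(F²) ∩ Im(F²) contains the two-dimensional span of the coordinate vectors in the x₀- and x₁-directions, so p is of spectral type 2 at every point of Σ = {x₁ = 0, ξ₀ = ξ₁ = 0, ξ₂ ≠ 0}. -/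
/-- The principal symbol `p(x,ξ) = −ξ₀² + 2x₁ξ₀ξ₂ + ξ₁² + x₁³ξ₂²` of `P_mod`. -/
noncomputable def psym (ρ : (Fin 3 → ℝ) × (Fin 3 → ℝ)) : ℝ :=
  -(ρ.2 0) ^ 2 + 2 * (ρ.1 1) * (ρ.2 0) * (ρ.2 2) + (ρ.2 1) ^ 2 + (ρ.1 1) ^ 3 * (ρ.2 2) ^ 2

/-- The Hamilton vector field `H_p = (∂p/∂ξ, −∂p/∂x)` of `psym` on `ℝ³ × ℝ³`. -/
noncomputable def Hp (ρ : (Fin 3 → ℝ) × (Fin 3 → ℝ)) : (Fin 3 → ℝ) × (Fin 3 → ℝ) :=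
  (fun i => fderiv ℝ psym ρ (0, Pi.single i 1),
   fun i => -(fderiv ℝ psym ρ (Pi.single i 1, 0)))

/-- The Hamilton map of `psym` at `ρ`: the linearization (Jacobian) of the Hamilton
vector field at `ρ`, as a linear endomorphism of `ℝ³ × ℝ³`. -/
noncomputable def HamiltonMap (ρ : (Fin 3 → ℝ) × (Fin 3 → ℝ)) :
    ((Fin 3 → ℝ) × (Fin 3 → ℝ)) →ₗ[ℝ] ((Fin 3 → ℝ) × (Fin 3 → ℝ)) :=
  (fderiv ℝ Hp ρ).toLinearMap

theorem coordX_hasFDerivAt (i : Fin 3) (ρ : (Fin 3 → ℝ) × (Fin 3 → ℝ)) :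
    HasFDerivAt (fun ρ : (Fin 3 → ℝ) × (Fin 3 → ℝ) => ρ.1 i)
      ((ContinuousLinearMap.proj (R := ℝ) (φ := fun _ : Fin 3 => ℝ) i).comp
        (ContinuousLinearMap.fst ℝ (Fin 3 → ℝ) (Fin 3 → ℝ))) ρ :=
  ContinuousLinearMap.hasFDerivAt ((ContinuousLinearMap.proj (R := ℝ) (φ := fun _ : Fin 3 => ℝ) i).comp
        (ContinuousLinearMap.fst ℝ (Fin 3 → ℝ) (Fin 3 → ℝ)))

theorem coordXi_hasFDerivAt (i : Fin 3) (ρ : (Fin 3 → ℝ) × (Fin 3 → ℝ)) :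
    HasFDerivAt (fun ρ : (Fin 3 → ℝ) × (Fin 3 → ℝ) => ρ.2 i)
      ((ContinuousLinearMap.proj (R := ℝ) (φ := fun _ : Fin 3 => ℝ) i).comp
        (ContinuousLinearMap.snd ℝ (Fin 3 → ℝ) (Fin 3 → ℝ))) ρ :=
  ContinuousLinearMap.hasFDerivAt ((ContinuousLinearMap.proj (R := ℝ) (φ := fun _ : Fin 3 => ℝ) i).comp
        (ContinuousLinearMap.snd ℝ (Fin 3 → ℝ) (Fin 3 → ℝ)))

theorem fderiv_psym_apply (ρ v : (Fin 3 → ℝ) × (Fin 3 → ℝ)) :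
    fderiv ℝ psym ρ v =
      (-2 * ρ.2 0 + 2 * ρ.1 1 * ρ.2 2) * v.2 0 + 2 * ρ.2 1 * v.2 1
      + (2 * ρ.1 1 * ρ.2 0 + 2 * ρ.1 1 ^ 3 * ρ.2 2) * v.2 2
      + (2 * ρ.2 0 * ρ.2 2 + 3 * ρ.1 1 ^ 2 * ρ.2 2 ^ 2) * v.1 1 := by
  have h := (((((coordXi_hasFDerivAt 0 ρ).pow 2).neg).add
    ((((coordX_hasFDerivAt 1 ρ).const_mul 2).mul (coordXi_hasFDerivAt 0 ρ)).mul
      (coordXi_hasFDerivAt 2 ρ))).add ((coordXi_hasFDerivAt 1 ρ).pow 2)).add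
    (((coordX_hasFDerivAt 1 ρ).pow 3).mul ((coordXi_hasFDerivAt 2 ρ).pow 2))
  have h2 : fderiv ℝ psym ρ = _ := HasFDerivAt.fderiv (f := psym) h
  rw [h2]
  simp
  ring

theorem Hp_eq : Hp = fun ρ : (Fin 3 → ℝ) × (Fin 3 → ℝ) =>
    ((![-2 * ρ.2 0 + 2 * ρ.1 1 * ρ.2 2, 2 * ρ.2 1,
        2 * ρ.1 1 * ρ.2 0 + 2 * ρ.1 1 ^ 3 * ρ.2 2] : Fin 3 → ℝ),
     (![0, -(2 * ρ.2 0 * ρ.2 2 + 3 * ρ.1 1 ^ 2 * ρ.2 2 ^ 2), 0] : Fin 3 → ℝ)) := by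
  funext ρ
  unfold Hp
  refine Prod.ext ?_ ?_ <;> funext i <;> fin_cases i <;> simp [fderiv_psym_apply]

theorem vec3_hasFDerivAt {E : Type*} [NormedAddCommGroup E] [NormedSpace ℝ E]
    {f0 f1 f2 : E → ℝ} {g0 g1 g2 : E →L[ℝ] ℝ} {ρ : E} (h0 : HasFDerivAt f0 g0 ρ)
    (h1 : HasFDerivAt f1 g1 ρ) (h2 : HasFDerivAt f2 g2 ρ) :
    HasFDerivAt (fun p => (![f0 p, f1 p, f2 p] : Fin 3 → ℝ))
      (ContinuousLinearMap.pi (![g0, g1, g2] : Fin 3 → E →L[ℝ] ℝ)) ρ := by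
  rw [hasFDerivAt_pi]
  intro i
  fin_cases i
  · exact h0
  · exact h1
  · exact h2

theorem HamiltonMap_apply (x ξ : Fin 3 → ℝ) (hx : x 1 = 0) (hξ0 : ξ 0 = 0)
    (v : (Fin 3 → ℝ) × (Fin 3 → ℝ)) :
    HamiltonMap (x, ξ) v =
      ((![-2 * v.2 0 + 2 * ξ 2 * v.1 1, 2 * v.2 1, 0] : Fin 3 → ℝ),
       (![0, -(2 * ξ 2 * v.2 0), 0] : Fin 3 → ℝ)) := by
  set ρ : (Fin 3 → ℝ) × (Fin 3 → ℝ) := (x, ξ) with hρ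
  have X := coordX_hasFDerivAt 1 ρ
  have Y0 := coordXi_hasFDerivAt 0 ρ
  have Y1 := coordXi_hasFDerivAt 1 ρ
  have Y2 := coordXi_hasFDerivAt 2 ρ
  have a0 := (Y0.const_mul (-2)).add ((X.const_mul 2).mul Y2)
  have a1 := Y1.const_mul 2
  have a2 := ((X.const_mul 2).mul Y0).add (((X.pow 3).const_mul 2).mul Y2)
  have b1 := (((Y0.const_mul 2).mul Y2).add (((X.pow 2).const_mul 3).mul (Y2.pow 2))).neg
  have z := hasFDerivAt_const (𝕜 := ℝ) (0 : ℝ) ρ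
  have hH := (vec3_hasFDerivAt a0 a1 a2).prodMk (vec3_hasFDerivAt z b1 z)
  unfold HamiltonMap
  rw [Hp_eq]
  refine (congrArg (fun L : ((Fin 3 → ℝ) × (Fin 3 → ℝ)) →L[ℝ] ((Fin 3 → ℝ) × (Fin 3 → ℝ)) => L v)
    hH.fderiv).trans ?_
  refine Prod.ext ?_ ?_ <;> funext i <;> fin_cases i <;> simp [hρ, hx, hξ0]
  all_goals ring

theorem HamiltonMap_sq_apply (x ξ : Fin 3 → ℝ) (hx : x 1 = 0) (hξ0 : ξ 0 = 0)
    (v : (Fin 3 → ℝ) × (Fin 3 → ℝ)) :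
    (HamiltonMap (x, ξ) ^ 2) v =
      ((![4 * ξ 2 * v.2 1, -(4 * ξ 2 * v.2 0), 0] : Fin 3 → ℝ), (0 : Fin 3 → ℝ)) := by
  rw [pow_two, Module.End.mul_apply, HamiltonMap_apply x ξ hx hξ0, HamiltonMap_apply x ξ hx hξ0]
  refine Prod.ext ?_ ?_ <;> funext i <;> fin_cases i <;> simp <;> ring

/-- At every point `ρ = (x, ξ)` of `Σ = {x₁ = 0, ξ₀ = ξ₁ = 0, ξ₂ ≠ 0}`, the Hamilton map
`F = F_p(ρ)` satisfies `F⁴ = 0` (so `F` has no nonzero real eigenvalue), and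
`Ker F² ∩ Im F²` contains the span of the coordinate vectors in the `x₀`- and
`x₁`-directions (which is two-dimensional since these vectors are linearly independent);
in particular `Ker F² ∩ Im F² ≠ {0}`, i.e. `p` is of spectral type 2 on `Σ`. -/
theorem hamilton_map_spectral_type_two (x ξ : Fin 3 → ℝ)
    (hx : x 1 = 0) (hξ0 : ξ 0 = 0) (hξ1 : ξ 1 = 0) (hξ2 : ξ 2 ≠ 0) :
    (HamiltonMap (x, ξ)) ^ 4 = 0 ∧
    LinearMap.ker ((HamiltonMap (x, ξ)) ^ 2) ⊓ LinearMap.range ((HamiltonMap (x, ξ)) ^ 2)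
      ≠ ⊥ ∧
    Submodule.span ℝ
        {((Pi.single 0 1, 0) : (Fin 3 → ℝ) × (Fin 3 → ℝ)),
         ((Pi.single 1 1, 0) : (Fin 3 → ℝ) × (Fin 3 → ℝ))}
      ≤ LinearMap.ker ((HamiltonMap (x, ξ)) ^ 2)
          ⊓ LinearMap.range ((HamiltonMap (x, ξ)) ^ 2) ∧
    LinearIndependent ℝ
      ![((Pi.single 0 1, 0) : (Fin 3 → ℝ) × (Fin 3 → ℝ)),
        ((Pi.single 1 1, 0) : (Fin 3 → ℝ) × (Fin 3 → ℝ))] := by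
  have hle : Submodule.span ℝ
        {((Pi.single 0 1, 0) : (Fin 3 → ℝ) × (Fin 3 → ℝ)),
         ((Pi.single 1 1, 0) : (Fin 3 → ℝ) × (Fin 3 → ℝ))}
      ≤ LinearMap.ker ((HamiltonMap (x, ξ)) ^ 2)
          ⊓ LinearMap.range ((HamiltonMap (x, ξ)) ^ 2) := by
    rw [Submodule.span_le]
    rintro w (rfl | rfl)
    · refine ⟨?_, ⟨(0, Pi.single 1 (1 / (4 * ξ 2))), ?_⟩⟩
      · simp only [SetLike.mem_coe, LinearMap.mem_ker]
        rw [HamiltonMap_sq_apply x ξ hx hξ0]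
        refine Prod.ext ?_ ?_ <;> funext i <;> fin_cases i <;> simp
      · rw [HamiltonMap_sq_apply x ξ hx hξ0]
        refine Prod.ext ?_ ?_ <;> funext i <;> fin_cases i <;> simp
        field_simp
    · refine ⟨?_, ⟨(0, Pi.single 0 (-1 / (4 * ξ 2))), ?_⟩⟩
      · simp only [SetLike.mem_coe, LinearMap.mem_ker]
        rw [HamiltonMap_sq_apply x ξ hx hξ0]
        refine Prod.ext ?_ ?_ <;> funext i <;> fin_cases i <;> simp
      · rw [HamiltonMap_sq_apply x ξ hx hξ0]
        refine Prod.ext ?_ ?_ <;> funext i <;> fin_cases i <;> simp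
        field_simp
  refine ⟨?_, ?_, hle, ?_⟩
  · refine LinearMap.ext fun v => ?_
    rw [show (4 : ℕ) = 2 + 2 from rfl, pow_add, Module.End.mul_apply,
      HamiltonMap_sq_apply x ξ hx hξ0, HamiltonMap_sq_apply x ξ hx hξ0]
    refine Prod.ext ?_ ?_ <;> funext i <;> fin_cases i <;> simp
  · intro hbot
    rw [hbot] at hle
    have h := hle (Submodule.subset_span (Set.mem_insert _ _))
    rw [Submodule.mem_bot] at h
    have h1 := congrFun (congrArg Prod.fst h) 0
    simp at h1
  · rw [LinearIndependent.pair_iff]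
    intro s t h
    have h0 := congrFun (congrArg Prod.fst h) 0
    have h1 := congrFun (congrArg Prod.fst h) 1
    simp at h0 h1
    exact ⟨h0, h1⟩
end

section
/- Let p(x, ξ) = −ξ₀² + 2x₁ξ₀ξ₂ + ξ₁² + x₁³ξ₂² and define the curve γ : ℝ → ℝ³ × ℝ³ by γ(t) = ((t, −t²/4, t⁵/80), (0, t³/8, 1)). Then: (i) p(γ(t)) = 0 for all t ∈ ℝ; (ii) for all t ∈ ℝ, H_p(γ(t)) = (−t²/2)·γ'(t), where H_p = (∂p/∂ξ, −∂p/∂x) is the Hamilton vector field of p, so γ is a reparametrized null bicharacteristic of p; (iii) γ(0) lies in Σ = {x₁ = 0, ξ₀ = ξ₁ = 0} and γ'(0) is tangent to Σ, i.e. the x₁-, ξ₀- and ξ₁-components of γ'(0) all vanish. -/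
/-- The curve `γ(t) = ((t, −t²/4, t⁵/80), (0, t³/8, 1))`. -/
noncomputable def tangentCurve (t : ℝ) : (Fin 3 → ℝ) × (Fin 3 → ℝ) :=
  (![t, -t ^ 2 / 4, t ^ 5 / 80], ![0, t ^ 3 / 8, 1])

/-- Explicit differential of the symbol. -/
lemma psym_fderiv (ρ v : (Fin 3 → ℝ) × (Fin 3 → ℝ)) :
    fderiv ℝ psym ρ v = -(2 * ρ.2 0 * v.2 0)
      + 2 * (v.1 1 * ρ.2 0 * ρ.2 2 + ρ.1 1 * v.2 0 * ρ.2 2 + ρ.1 1 * ρ.2 0 * v.2 2)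
      + 2 * ρ.2 1 * v.2 1
      + (3 * ρ.1 1 ^ 2 * v.1 1 * ρ.2 2 ^ 2 + ρ.1 1 ^ 3 * (2 * ρ.2 2 * v.2 2)) := by
  have hx (i : Fin 3) : HasFDerivAt (fun ρ : (Fin 3 → ℝ) × (Fin 3 → ℝ) => ρ.1 i)
      ((ContinuousLinearMap.proj (R := ℝ) (φ := fun _ : Fin 3 => ℝ) i).comp
        (ContinuousLinearMap.fst ℝ (Fin 3 → ℝ) (Fin 3 → ℝ))) ρ :=
    ((ContinuousLinearMap.proj (R := ℝ) (φ := fun _ : Fin 3 => ℝ) i).comp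
        (ContinuousLinearMap.fst ℝ (Fin 3 → ℝ) (Fin 3 → ℝ))).hasFDerivAt
  have hξ (i : Fin 3) : HasFDerivAt (fun ρ : (Fin 3 → ℝ) × (Fin 3 → ℝ) => ρ.2 i)
      ((ContinuousLinearMap.proj (R := ℝ) (φ := fun _ : Fin 3 => ℝ) i).comp
        (ContinuousLinearMap.snd ℝ (Fin 3 → ℝ) (Fin 3 → ℝ))) ρ :=
    ((ContinuousLinearMap.proj (R := ℝ) (φ := fun _ : Fin 3 => ℝ) i).comp
        (ContinuousLinearMap.snd ℝ (Fin 3 → ℝ) (Fin 3 → ℝ))).hasFDerivAt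
  have h : HasFDerivAt psym _ ρ :=
    (((((hξ 0).pow 2).neg).add ((((hx 1).const_mul 2).mul (hξ 0)).mul (hξ 2))).add
      ((hξ 1).pow 2)).add (((hx 1).pow 3).mul ((hξ 2).pow 2))
  rw [h.fderiv]
  simp
  ring

/-- Explicit derivative of the curve. -/
lemma tangentCurve_deriv (t : ℝ) :
    deriv tangentCurve t = (![1, -t / 2, t ^ 4 / 16], ![0, 3 * t ^ 2 / 8, 0]) := by
  apply HasDerivAt.deriv
  have h1 : HasDerivAt (fun t : ℝ => -t ^ 2 / 4) (-t / 2) t := by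
    refine HasDerivAt.congr_deriv ((hasDerivAt_pow 2 t).neg.div_const 4) ?_
    push_cast
    ring
  have h2 : HasDerivAt (fun t : ℝ => t ^ 5 / 80) (t ^ 4 / 16) t := by
    refine HasDerivAt.congr_deriv ((hasDerivAt_pow 5 t).div_const 80) ?_
    push_cast
    ring
  have h3 : HasDerivAt (fun t : ℝ => t ^ 3 / 8) (3 * t ^ 2 / 8) t := by
    refine HasDerivAt.congr_deriv ((hasDerivAt_pow 3 t).div_const 8) ?_
    push_cast
    ring
  refine HasDerivAt.prodMk (hasDerivAt_pi.2 fun i => ?_) (hasDerivAt_pi.2 fun i => ?_)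
  · fin_cases i
    · exact hasDerivAt_id t
    · exact h1
    · exact h2
  · fin_cases i
    · exact hasDerivAt_const t (0 : ℝ)
    · exact h3
    · exact hasDerivAt_const t (1 : ℝ)

/-- The curve `γ(t) = ((t, −t²/4, t⁵/80), (0, t³/8, 1))` is a reparametrized null
bicharacteristic of `p` which is tangent to `Σ = {x₁ = 0, ξ₀ = ξ₁ = 0}` at `γ(0)`:
(i) `p(γ(t)) = 0`; (ii) `H_p(γ(t)) = (−t²/2)·γ'(t)`;
(iii) `γ(0) ∈ Σ` and the `x₁`-, `ξ₀`- and `ξ₁`-components of `γ'(0)` vanish. -/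
theorem tangent_bicharacteristic :
    (∀ t : ℝ, psym (tangentCurve t) = 0) ∧
    (∀ t : ℝ, Hp (tangentCurve t) = (-(t ^ 2) / 2) • deriv tangentCurve t) ∧
    ((tangentCurve 0).1 1 = 0 ∧ (tangentCurve 0).2 0 = 0 ∧ (tangentCurve 0).2 1 = 0) ∧
    ((deriv tangentCurve 0).1 1 = 0 ∧ (deriv tangentCurve 0).2 0 = 0 ∧
      (deriv tangentCurve 0).2 1 = 0) := by
  refine ⟨fun t => ?_, fun t => ?_, ?_, ?_⟩
  · simp [psym, tangentCurve]
    ring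
  · rw [tangentCurve_deriv]
    refine Prod.ext (funext fun i => ?_) (funext fun i => ?_)
    · fin_cases i <;> simp [Hp, psym_fderiv, tangentCurve] <;> ring
    · fin_cases i <;> simp [Hp, psym_fderiv, tangentCurve]
      ring
  · simp [tangentCurve]
  · simp [tangentCurve_deriv]
end

section
/- Let ω = e^(2πi/5) and let B > 0. (i) If A ∈ ℂ satisfies 0 < arg A < π, define ζ = e^(−πi/5)·A^(1/6)·(1 + λ^(−5/6)z)·λ^(1/6) for λ > 0 and z ∈ ℂ with |z| ≤ B, where A^(1/6) is the principal sixth root. Then there exist ε > 0 and λ₀ > 0 (depending only on A and B) such that for all λ ≥ λ₀ and all |z| ≤ B one has |arg ζ| < π/4 − ε and Im(ω²ζ⁴) > 0. (ii) If A ∈ ℂ satisfies −π ≤ arg A < −π/2, the same conclusions hold for ζ = e^(2πi/15)·A^(1/6)·(1 + λ^(−5/6)z)·λ^(1/6). -/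
open Real Complex

/-- `ω = e^(2πi/5)`. -/
noncomputable def omega5 : ℂ := Complex.exp (2 * (π : ℂ) * I / 5)

lemma zeta_aux (B : ℝ) (hB : 0 < B) (W : ℂ) (r θ : ℝ) (hr : 0 < r)
    (hW : W = (r : ℂ) * Complex.exp (θ * I))
    (h1 : |θ| < π / 4) (h2 : 0 < 4 * π / 5 + 4 * θ) (h3 : 4 * π / 5 + 4 * θ < π) :
    ∃ ε > (0:ℝ), ∃ lam₀ > (0:ℝ), ∀ lam : ℝ, lam₀ ≤ lam → ∀ z : ℂ, ‖z‖ ≤ B →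
        |(W * (1 + ((lam ^ ((-5 : ℝ) / 6) : ℝ) : ℂ) * z)
            * ((lam ^ ((1 : ℝ) / 6) : ℝ) : ℂ)).arg| < π / 4 - ε ∧
        0 < (omega5 ^ 2 * (W * (1 + ((lam ^ ((-5 : ℝ) / 6) : ℝ) : ℂ) * z)
            * ((lam ^ ((1 : ℝ) / 6) : ℝ) : ℂ)) ^ 4).im := by
  have hpi := Real.pi_pos
  have hab := abs_lt.1 h1
  have hWarg : W.arg = θ := by
    rw [hW, Complex.exp_mul_I]
    exact Complex.arg_mul_cos_add_sin_mul_I hr ⟨by linarith, by linarith⟩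
  have hW0 : W ≠ 0 := by
    rw [hW]; exact mul_ne_zero (by exact_mod_cast hr.ne') (Complex.exp_ne_zero _)
  have hWs : W ∈ slitPlane := by
    rw [Complex.mem_slitPlane_iff_arg, hWarg]
    exact ⟨by linarith, hW0⟩
  have hWim : 0 < (omega5 ^ 2 * W ^ 4).im := by
    have : omega5 ^ 2 * W ^ 4 = ((r ^ 4 : ℝ) : ℂ) * Complex.exp (((4 * π / 5 + 4 * θ : ℝ) : ℂ) * I) := by
      rw [hW, omega5, mul_pow, ← Complex.exp_nat_mul, ← Complex.exp_nat_mul, mul_left_comm,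
        ← Complex.exp_add]
      push_cast
      congr 2
      ring
    rw [this, Complex.im_ofReal_mul, Complex.exp_ofReal_mul_I_im]
    exact mul_pos (by positivity) (Real.sin_pos_of_pos_of_lt_pi h2 h3)
  have e1 : ∀ᶠ u : ℂ in nhds 1, |(W * u).arg| < π / 4 - (π / 4 - |θ|) / 2 := by
    have hc : ContinuousAt (fun u : ℂ => |(W * u).arg|) 1 := by
      have : ContinuousAt (fun u : ℂ => (W * u).arg) 1 :=
        ContinuousAt.comp (g := Complex.arg) (f := fun u : ℂ => W * u)
          (by simpa using Complex.continuousAt_arg hWs) (by fun_prop)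
      exact this.abs
    refine hc.eventually_lt continuousAt_const ?_
    simp only [mul_one, hWarg]; linarith
  have e2 : ∀ᶠ u : ℂ in nhds 1, 0 < (omega5 ^ 2 * (W * u) ^ 4).im := by
    have hc : ContinuousAt (fun u : ℂ => (omega5 ^ 2 * (W * u) ^ 4).im) 1 := by fun_prop
    refine continuousAt_const.eventually_lt hc ?_
    simpa using hWim
  obtain ⟨δ, hδ, hball⟩ := Metric.eventually_nhds_iff.1 (e1.and e2)
  have ht : ∀ᶠ x : ℝ in Filter.atTop, x ^ (-(5 / 6 : ℝ)) < δ / B :=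
    (tendsto_rpow_neg_atTop (by norm_num)).eventually_lt_const (by positivity)
  obtain ⟨L, hL⟩ := Filter.eventually_atTop.1 ht
  refine ⟨(π / 4 - |θ|) / 2, by linarith, max L 1, by positivity, ?_⟩
  intro lam hlam z hz
  have hl : 0 < lam := lt_of_lt_of_le (by positivity) hlam
  have hs := hL lam (le_trans (le_max_left _ _) hlam)
  rw [← neg_div] at hs
  have hs0 : 0 < lam ^ ((-5 : ℝ) / 6) := by positivity
  have ht0 : 0 < lam ^ ((1 : ℝ) / 6) := by positivity
  generalize lam ^ ((-5 : ℝ) / 6) = s at *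
  generalize lam ^ ((1 : ℝ) / 6) = t at *
  have hd : dist (1 + (s : ℂ) * z) 1 < δ := by
    rw [dist_eq_norm, add_sub_cancel_left, norm_mul, Complex.norm_real, Real.norm_of_nonneg hs0.le]
    calc s * ‖z‖ ≤ s * B := by gcongr
      _ < δ := (lt_div_iff₀ hB).1 hs
  obtain ⟨g1, g2⟩ := hball hd
  generalize W * (1 + (s : ℂ) * z) = V at *
  constructor
  · rw [mul_comm, Complex.arg_real_mul _ ht0]; exact g1
  · have : omega5 ^ 2 * (V * (t : ℂ)) ^ 4 = ((t ^ 4 : ℝ) : ℂ) * (omega5 ^ 2 * V ^ 4) := by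
      push_cast; ring
    rw [this, Complex.im_ofReal_mul]
    positivity

lemma zeta_polar (A : ℂ) (hA : A ≠ 0) (c : ℝ) :
    Complex.exp (c * I) * A ^ ((1 : ℂ) / 6) =
      ((Real.exp (Real.log ‖A‖ / 6) : ℝ) : ℂ) * Complex.exp (((c + A.arg / 6 : ℝ) : ℂ) * I) := by
  rw [Complex.cpow_def_of_ne_zero hA, ← Complex.exp_add, Complex.ofReal_exp, ← Complex.exp_add,
    Complex.log]
  congr 1
  push_cast
  ring

/-- For `ζ(λ, z) = e^(−πi/5)A^(1/6)(1 + λ^(−5/6)z)λ^(1/6)` (when `0 < arg A < π`), resp.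
`ζ(λ, z) = e^(2πi/15)A^(1/6)(1 + λ^(−5/6)z)λ^(1/6)` (when `−π ≤ arg A < −π/2`), there are
`ε > 0` and `λ₀ > 0`, depending only on `A` and `B`, such that `|arg ζ| < π/4 − ε` and
`Im(ω²ζ⁴) > 0` for all `λ ≥ λ₀` and `|z| ≤ B`. -/
theorem zeta_sector_conditions (B : ℝ) (hB : 0 < B) :
    (∀ A : ℂ, 0 < A.arg → A.arg < π →
      ∃ ε > (0:ℝ), ∃ lam₀ > (0:ℝ), ∀ lam : ℝ, lam₀ ≤ lam → ∀ z : ℂ, ‖z‖ ≤ B →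
        |(Complex.exp (-(π : ℂ) * I / 5) * A ^ ((1 : ℂ) / 6)
            * (1 + ((lam ^ ((-5 : ℝ) / 6) : ℝ) : ℂ) * z)
            * ((lam ^ ((1 : ℝ) / 6) : ℝ) : ℂ)).arg| < π / 4 - ε ∧
        0 < (omega5 ^ 2 * (Complex.exp (-(π : ℂ) * I / 5) * A ^ ((1 : ℂ) / 6)
            * (1 + ((lam ^ ((-5 : ℝ) / 6) : ℝ) : ℂ) * z)
            * ((lam ^ ((1 : ℝ) / 6) : ℝ) : ℂ)) ^ 4).im) ∧
    (∀ A : ℂ, -π ≤ A.arg → A.arg < -(π / 2) →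
      ∃ ε > (0:ℝ), ∃ lam₀ > (0:ℝ), ∀ lam : ℝ, lam₀ ≤ lam → ∀ z : ℂ, ‖z‖ ≤ B →
        |(Complex.exp (2 * (π : ℂ) * I / 15) * A ^ ((1 : ℂ) / 6)
            * (1 + ((lam ^ ((-5 : ℝ) / 6) : ℝ) : ℂ) * z)
            * ((lam ^ ((1 : ℝ) / 6) : ℝ) : ℂ)).arg| < π / 4 - ε ∧
        0 < (omega5 ^ 2 * (Complex.exp (2 * (π : ℂ) * I / 15) * A ^ ((1 : ℂ) / 6)
            * (1 + ((lam ^ ((-5 : ℝ) / 6) : ℝ) : ℂ) * z)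
            * ((lam ^ ((1 : ℝ) / 6) : ℝ) : ℂ)) ^ 4).im) := by
  have hpi := Real.pi_pos
  constructor
  · intro A h1 h2
    have hA : A ≠ 0 := by rintro rfl; simp at h1
    have hc : Complex.exp (-(π : ℂ) * I / 5) = Complex.exp (((-π / 5 : ℝ) : ℂ) * I) := by
      congr 1; push_cast; ring
    rw [hc]
    exact zeta_aux B hB _ _ _ (Real.exp_pos _) (zeta_polar A hA _)
      (abs_lt.2 ⟨by linarith, by linarith⟩) (by linarith) (by linarith)
  · intro A _ h2
    have h1 := Complex.neg_pi_lt_arg A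
    have hA : A ≠ 0 := by rintro rfl; simp at h2; linarith
    have hc : Complex.exp (2 * (π : ℂ) * I / 15) = Complex.exp (((2 * π / 15 : ℝ) : ℂ) * I) := by
      congr 1; push_cast; ring
    rw [hc]
    exact zeta_aux B hB _ _ _ (Real.exp_pos _) (zeta_polar A hA _)
      (abs_lt.2 ⟨by linarith, by linarith⟩) (by linarith) (by linarith)
end

section
/- Let M > 0. There exist constants c > 0, C > 0, ℓ₁ > 0, ℓ₂ > 0, depending only on M, with the following property: for all a, b ∈ ℂ with |a| ≤ M and |b| ≤ M, all λ ≥ 1, and every smooth function y : ℝ → ℂ satisfying y''(x) = (x³ + a·λ^(2/3)·x + b·λ)·y(x) for all x ∈ ℝ, one has, for every T > 0, every integer k ≥ 0, and every x with |x| ≤ T: |y^(k)(x)| ≤ C^(k+1)·(k + λ^(1/3) + |x|)^(3k/2)·λ^(ℓ₁)·(1 + T)^(ℓ₂)·exp(c·λ^(5/6)·(1 + λ^(−1/3)·T)^(5/2))·(|y(T)| + |y'(T)|). -/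
open Real

namespace AiryType

/-- Differentiated form of the ODE, with truncated subtraction in indices. -/
lemma recurrence (f : ℕ → ℝ → ℂ) (hf : ∀ n x, HasDerivAt (f n) (f (n + 1) x) x)
    (α β : ℂ) (h0 : ∀ x : ℝ, f 2 x = ((x : ℂ) ^ 3 + α * x + β) * f 0 x) (k : ℕ) :
    ∀ x : ℝ, f (k + 2) x = ((x : ℂ) ^ 3 + α * x + β) * f k x
      + (k : ℂ) * ((3 * (x : ℂ) ^ 2 + α) * f (k - 1) x)
      + ((k : ℂ) * (k - 1)) * (3 * (x : ℂ) * f (k - 2) x)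
      + ((k : ℂ) * (k - 1) * (k - 2)) * f (k - 3) x := by
  induction k with
  | zero => intro x; simp [h0 x]
  | succ k ih =>
    intro x
    have hx : HasDerivAt (fun t : ℝ => (t : ℂ)) 1 x := by
      simpa using (hasDerivAt_id x).ofReal_comp
    have hx2 : HasDerivAt (fun t : ℝ => (t : ℂ) ^ 2) (2 * (x : ℂ)) x := by
      simpa [Pi.pow_def] using hx.pow 2
    have hx3 : HasDerivAt (fun t : ℝ => (t : ℂ) ^ 3) (3 * (x : ℂ) ^ 2) x := by
      simpa [Pi.pow_def] using hx.pow 3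
    have hP : HasDerivAt (fun t : ℝ => (t : ℂ) ^ 3 + α * t + β) (3 * (x : ℂ) ^ 2 + α) x := by
      simpa using (hx3.add (hx.const_mul α)).add_const β
    have hP1 : HasDerivAt (fun t : ℝ => 3 * (t : ℂ) ^ 2 + α) (3 * (2 * (x : ℂ))) x :=
      (hx2.const_mul 3).add_const α
    have hP2 : HasDerivAt (fun t : ℝ => 3 * (t : ℂ)) 3 x := by
      simpa using hx.const_mul 3
    have H := (((hP.mul (hf k x)).add ((hP1.mul (hf (k - 1) x)).const_mul (k : ℂ))).add
      ((hP2.mul (hf (k - 2) x)).const_mul ((k : ℂ) * (k - 1)))).add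
      ((hf (k - 3) x).const_mul ((k : ℂ) * (k - 1) * (k - 2)))
    have H2 := hf (k + 2) x
    have e : f (k + 2) = _ := funext ih
    rw [e] at H2
    have := H2.unique H
    rw [show k + 1 + 2 = k + 2 + 1 by ring, this]
    match k with
    | 0 => simp; ring
    | 1 => simp; ring
    | 2 => simp; ring
    | k + 3 =>
      simp only [show k + 3 - 1 = k + 2 by omega, show k + 3 - 2 = k + 1 by omega,
        show k + 3 - 3 = k by omega, show k + 3 + 1 - 1 = k + 3 by omega,
        show k + 3 + 1 - 2 = k + 2 by omega, show k + 3 + 1 - 3 = k + 1 by omega]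
      push_cast
      ring

lemma deriv_bound (f : ℕ → ℂ) (p0 p1 p2 : ℂ) (M N q G : ℝ) (hM : 0 < M) (hN : 0 ≤ N)
    (hG : 0 ≤ G) (hq : 1 ≤ q) (hq2 : (8 + 2 * M) * N ^ 3 ≤ q ^ 2)
    (h0 : ‖p0‖ ≤ (1 + M) * N ^ 3) (h1 : ‖p1‖ ≤ (3 + M) * N ^ 2) (h2 : ‖p2‖ ≤ 3 * N)
    (n : ℕ) (hn : (n : ℝ) ≤ N)
    (hf : ∀ k : ℕ, f (k + 2) = p0 * f k + (k : ℂ) * (p1 * f (k - 1))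
      + ((k : ℂ) * (k - 1)) * (p2 * f (k - 2)) + ((k : ℂ) * (k - 1) * (k - 2)) * f (k - 3))
    (hf0 : ‖f 0‖ ≤ G) (hf1 : ‖f 1‖ ≤ G) (j : ℕ) (hj : j ≤ n) : ‖f j‖ ≤ q ^ j * G := by
  induction j using Nat.strong_induction_on with
  | _ j ih =>
    match j with
    | 0 => simpa using hf0
    | 1 => rw [pow_one]; nlinarith
    | j + 2 =>
      have hb : ∀ i, ‖f (j - i)‖ ≤ q ^ j * G := fun i =>
        (ih (j - i) (by omega) (by omega)).trans
          (mul_le_mul_of_nonneg_right (pow_le_pow_right₀ hq (by omega)) hG)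
      have hjN : (j : ℝ) ≤ N := le_trans (by exact_mod_cast (by omega : j ≤ n)) hn
      have c1 : ‖(j : ℂ)‖ ≤ N := by simpa using hjN
      have c2 : ‖(j : ℂ) * (j - 1)‖ ≤ N ^ 2 := by
        match j with
        | 0 => simp; positivity
        | j + 1 =>
          have : ((j + 1 : ℕ) : ℂ) * ((j + 1 : ℕ) - 1) = (((j + 1) * j : ℕ) : ℂ) := by
            push_cast; ring
          rw [this, Complex.norm_natCast]
          push_cast at hjN ⊢
          have : (0 : ℝ) ≤ j := by positivity
          nlinarith
      have c3 : ‖(j : ℂ) * (j - 1) * (j - 2)‖ ≤ N ^ 3 := by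
        match j with
        | 0 => simp; positivity
        | 1 => simp; positivity
        | j + 2 =>
          have : ‖((j + 2 : ℕ) : ℂ) - 2‖ ≤ N := by
            rw [show ((j + 2 : ℕ) : ℂ) - 2 = ((j : ℕ) : ℂ) by push_cast; ring,
              Complex.norm_natCast]
            push_cast at hjN
            linarith
          rw [norm_mul, pow_succ]
          exact mul_le_mul c2 this (norm_nonneg _) (by positivity)
      have hQ : 0 ≤ q ^ j * G := by positivity
      rw [hf j]
      have b0 : ‖p0 * f j‖ ≤ (1 + M) * N ^ 3 * (q ^ j * G) := by
        rw [norm_mul]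
        exact mul_le_mul h0 (by simpa using hb 0) (norm_nonneg _) (by positivity)
      have b1 : ‖(j : ℂ) * (p1 * f (j - 1))‖ ≤ N * ((3 + M) * N ^ 2 * (q ^ j * G)) := by
        rw [norm_mul, norm_mul]
        exact mul_le_mul c1 (mul_le_mul h1 (hb 1) (norm_nonneg _) (by positivity))
          (by positivity) hN
      have b2 : ‖((j : ℂ) * (j - 1)) * (p2 * f (j - 2))‖ ≤ N ^ 2 * (3 * N * (q ^ j * G)) := by
        rw [norm_mul, norm_mul p2]
        exact mul_le_mul c2 (mul_le_mul h2 (hb 2) (norm_nonneg _) (by positivity))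
          (by positivity) (by positivity)
      have b3 : ‖((j : ℂ) * (j - 1) * (j - 2)) * f (j - 3)‖ ≤ N ^ 3 * (q ^ j * G) := by
        rw [norm_mul]
        exact mul_le_mul c3 (hb 3) (norm_nonneg _) (by positivity)
      calc _ ≤ (1 + M) * N ^ 3 * (q ^ j * G) + N * ((3 + M) * N ^ 2 * (q ^ j * G))
            + N ^ 2 * (3 * N * (q ^ j * G)) + N ^ 3 * (q ^ j * G) :=
            (norm_add_le _ _).trans (add_le_add ((norm_add_le _ _).trans
              (add_le_add ((norm_add_le _ _).trans (add_le_add b0 b1)) b2)) b3)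
        _ = ((8 + 2 * M) * N ^ 3) * (q ^ j * G) := by ring
        _ ≤ q ^ 2 * (q ^ j * G) := mul_le_mul_of_nonneg_right hq2 hQ
        _ = q ^ (j + 2) * G := by ring

lemma energy (y y1 : ℝ → ℂ) (P : ℝ → ℂ) (hy : ∀ x, HasDerivAt y (y1 x) x)
    (hy1 : ∀ x, HasDerivAt y1 (P x * y x) x) (T σ K : ℝ) (hT : 0 < T) (hσ : 1 ≤ σ)
    (hK : 1 ≤ K) (hP : ∀ x, |x| ≤ T → ‖P x‖ ≤ K * σ ^ 2) (x : ℝ) (hx : |x| ≤ T) :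
    ‖y x‖ ≤ σ * (‖y T‖ + ‖y1 T‖) * Real.exp (K * σ * (2 * T)) ∧
    ‖y1 x‖ ≤ σ * (‖y T‖ + ‖y1 T‖) * Real.exp (K * σ * (2 * T)) := by
  have hσ0 : 0 < σ := by linarith
  have hs : ‖(σ : ℂ)‖ = σ := by simp [abs_of_pos hσ0]
  let g : ℝ → ℂ × ℂ := fun t => ((σ : ℂ) * y (T - t), y1 (T - t))
  let g' : ℝ → ℂ × ℂ := fun t => ((σ : ℂ) * (-y1 (T - t)), -(P (T - t) * y (T - t)))
  have hg : ∀ t, HasDerivAt g (g' t) t := by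
    intro t
    have h1 : HasDerivAt (fun t => y (T - t)) (-y1 (T - t)) t := by
      simpa using HasDerivAt.comp_const_sub T t (hy (T - t))
    have h2 : HasDerivAt (fun t => y1 (T - t)) (-(P (T - t) * y (T - t))) t := by
      simpa using HasDerivAt.comp_const_sub T t (hy1 (T - t))
    exact (h1.const_mul (σ : ℂ)).prodMk h2
  have key := norm_le_gronwallBound_of_norm_deriv_right_le (f := g) (f' := g')
    (δ := σ * (‖y T‖ + ‖y1 T‖)) (K := K * σ) (ε := 0) (a := 0) (b := 2 * T)
    (fun t _ => (hg t).continuousAt.continuousWithinAt)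
    (fun t _ => (hg t).hasDerivWithinAt)
    (by
      simp only [g, sub_zero, Prod.norm_def, norm_mul, hs]
      have := norm_nonneg (y T)
      have := norm_nonneg (y1 T)
      apply max_le <;> nlinarith)
    (by
      intro t ht
      have hP' := hP (T - t) (by rw [abs_le]; constructor <;> linarith [ht.1, ht.2])
      have e1 : σ * ‖y (T - t)‖ ≤ ‖g t‖ := by
        have := norm_fst_le (g t); simpa only [g, norm_mul, hs] using this
      have e2 : ‖y1 (T - t)‖ ≤ ‖g t‖ := norm_snd_le (g t)
      rw [add_zero, Prod.norm_def]
      apply max_le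
      · simp only [g', norm_mul, norm_neg, hs]
        calc σ * ‖y1 (T - t)‖ ≤ σ * ‖g t‖ := by gcongr
          _ ≤ K * σ * ‖g t‖ := by
            apply mul_le_mul_of_nonneg_right _ (norm_nonneg _); nlinarith
      · simp only [g', norm_mul, norm_neg]
        calc ‖P (T - t)‖ * ‖y (T - t)‖ ≤ K * σ ^ 2 * ‖y (T - t)‖ := by gcongr
          _ = K * σ * (σ * ‖y (T - t)‖) := by ring
          _ ≤ _ := by gcongr)
    (T - x) (by rw [abs_le] at hx; constructor <;> linarith)
  rw [gronwallBound_ε0] at key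
  have key2 : ‖g (T - x)‖ ≤ σ * (‖y T‖ + ‖y1 T‖) * Real.exp (K * σ * (2 * T)) := by
    refine key.trans ?_
    rw [abs_le] at hx
    gcongr
    linarith
  have f1 := norm_fst_le (g (T - x))
  have f2 := norm_snd_le (g (T - x))
  simp only [g, norm_mul, hs, sub_sub_cancel] at f1 f2 key2
  refine ⟨le_trans ?_ (f1.trans key2), f2.trans key2⟩
  nlinarith [norm_nonneg (y x)]

lemma pot_bounds (M μ R x : ℝ) (a b : ℂ) (hM : 0 < M) (ha : ‖a‖ ≤ M) (hb : ‖b‖ ≤ M)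
    (hμ : 1 ≤ μ) (hR : μ + |x| ≤ R) :
    ‖(x : ℂ) ^ 3 + a * ((μ ^ 2 : ℝ) : ℂ) * x + b * ((μ ^ 3 : ℝ) : ℂ)‖ ≤ (1 + M) * R ^ 3 ∧
    ‖3 * (x : ℂ) ^ 2 + a * ((μ ^ 2 : ℝ) : ℂ)‖ ≤ (3 + M) * R ^ 2 ∧
    ‖3 * (x : ℂ)‖ ≤ 3 * R := by
  have hx := abs_nonneg x
  have hx1 : |x| ≤ R := by linarith
  have hμ1 : μ ≤ R := by linarith
  have hμ0 : 0 ≤ μ := by linarith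
  have hR0 : 0 ≤ R := by linarith
  have nx : ‖(x : ℂ)‖ = |x| := by simp
  have n2 : ‖((μ ^ 2 : ℝ) : ℂ)‖ = μ ^ 2 := by
    rw [Complex.norm_real, Real.norm_eq_abs, abs_of_nonneg (by positivity)]
  have n3 : ‖((μ ^ 3 : ℝ) : ℂ)‖ = μ ^ 3 := by
    rw [Complex.norm_real, Real.norm_eq_abs, abs_of_nonneg (by positivity)]
  refine ⟨?_, ?_, ?_⟩
  · calc _ ≤ |x| ^ 3 + ‖a‖ * μ ^ 2 * |x| + ‖b‖ * μ ^ 3 := by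
          refine (norm_add₃_le).trans ?_
          simp only [norm_mul, norm_pow, nx, n2, n3, le_refl]
      _ ≤ |x| ^ 3 + M * μ ^ 2 * |x| + M * μ ^ 3 := by gcongr
      _ = |x| ^ 3 + M * (μ ^ 2 * (μ + |x|)) := by ring
      _ ≤ R ^ 3 + M * (R ^ 2 * R) := by gcongr
      _ = _ := by ring
  · calc _ ≤ 3 * |x| ^ 2 + ‖a‖ * μ ^ 2 := by
          refine (norm_add_le _ _).trans ?_
          rw [norm_mul, norm_mul, norm_pow, nx, n2]; simp
      _ ≤ 3 * R ^ 2 + M * R ^ 2 := by gcongr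
      _ = _ := by ring
  · rw [norm_mul, nx]; simpa using hx1

end AiryType

set_option maxHeartbeats 1600000 in
/-- A priori derivative estimates for solutions of `y'' = (x³ + aλ^(2/3)x + bλ)y`:
for every `M > 0` there are `c, C, ℓ₁, ℓ₂ > 0` depending only on `M` such that for
`|a|, |b| ≤ M`, `λ ≥ 1`, every smooth solution `y` and every `T > 0`, `k ∈ ℕ`, `|x| ≤ T`:
`|y^(k)(x)| ≤ C^(k+1)(k + λ^(1/3) + |x|)^(3k/2) λ^(ℓ₁)(1+T)^(ℓ₂)
   exp(cλ^(5/6)(1 + λ^(−1/3)T)^(5/2))(|y(T)| + |y'(T)|)`. -/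
theorem derivative_estimates_airy_type (M : ℝ) (hM : 0 < M) :
    ∃ c > (0:ℝ), ∃ C > (0:ℝ), ∃ l₁ > (0:ℝ), ∃ l₂ > (0:ℝ),
      ∀ a b : ℂ, ‖a‖ ≤ M → ‖b‖ ≤ M → ∀ lam : ℝ, 1 ≤ lam →
        ∀ y : ℝ → ℂ, ContDiff ℝ (⊤ : ℕ∞) y →
          (∀ x : ℝ, deriv (deriv y) x =
            ((x : ℂ) ^ 3 + a * ((lam ^ ((2 : ℝ) / 3) : ℝ) : ℂ) * (x : ℂ)
              + b * (lam : ℂ)) * y x) →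
          ∀ T : ℝ, 0 < T → ∀ k : ℕ, ∀ x : ℝ, |x| ≤ T →
            ‖iteratedDeriv k y x‖ ≤
              C ^ (k + 1) * ((k : ℝ) + lam ^ ((1 : ℝ) / 3) + |x|) ^ (3 * (k : ℝ) / 2)
                * lam ^ l₁ * (1 + T) ^ l₂
                * Real.exp (c * lam ^ ((5 : ℝ) / 6)
                    * (1 + lam ^ ((-1 : ℝ) / 3) * T) ^ ((5 : ℝ) / 2))
                * (‖y T‖ + ‖deriv y T‖) := by
  refine ⟨2 * (1 + M) + 1, by positivity, 8 + 2 * M, by positivity, 1, one_pos, 1, one_pos, ?_⟩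
  intro a b ha hb lam hlam y hy hode T hT k x hx
  have hl0 : 0 ≤ lam := by linarith
  obtain ⟨μ, hμdef⟩ : ∃ μ, μ = lam ^ ((1 : ℝ) / 3) := ⟨_, rfl⟩
  have hμ : 1 ≤ μ := by rw [hμdef]; exact Real.one_le_rpow hlam (by norm_num)
  have hμ0 : 0 < μ := by linarith
  have e2 : lam ^ ((2 : ℝ) / 3) = μ ^ 2 := by
    rw [hμdef, ← Real.rpow_natCast, ← Real.rpow_mul hl0]; norm_num
  have e3 : lam = μ ^ 3 := by
    rw [hμdef, ← Real.rpow_natCast, ← Real.rpow_mul hl0]; norm_num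
  have e5 : lam ^ ((5 : ℝ) / 6) = μ ^ ((5 : ℝ) / 2) := by
    rw [hμdef, ← Real.rpow_mul hl0]; norm_num
  have em : lam ^ ((-1 : ℝ) / 3) = μ⁻¹ := by
    rw [hμdef, ← Real.rpow_neg hl0]; norm_num
  have hS : 1 ≤ μ + T := by linarith
  have hS0 : 0 < μ + T := by linarith
  have hexp : (2 * (1 + M) + 1) * lam ^ ((5 : ℝ) / 6) *
      (1 + lam ^ ((-1 : ℝ) / 3) * T) ^ ((5 : ℝ) / 2)
      = (2 * (1 + M) + 1) * (μ + T) ^ ((5 : ℝ) / 2) := by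
    rw [e5, em, mul_assoc, ← Real.mul_rpow hμ0.le (by positivity)]
    congr 2
    field_simp
  rw [hexp, ← hμdef]
  set σ := (μ + T) ^ ((3 : ℝ) / 2) with hσ
  have hσ1 : 1 ≤ σ := Real.one_le_rpow hS (by norm_num)
  have hσ2 : σ ^ 2 = (μ + T) ^ 3 := by
    rw [hσ, ← Real.rpow_natCast, ← Real.rpow_mul hS0.le, ← Real.rpow_natCast]; norm_num
  have hσS : σ * (μ + T) = (μ + T) ^ ((5 : ℝ) / 2) := by
    rw [hσ, ← Real.rpow_add_one hS0.ne']; norm_num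
  -- derivatives
  have hf : ∀ n t, HasDerivAt (iteratedDeriv n y) (iteratedDeriv (n + 1) y t) t := by
    intro n t
    rw [iteratedDeriv_succ]
    have hd : Differentiable ℝ (iteratedDeriv n y) :=
      hy.differentiable_iteratedDeriv n (by exact_mod_cast WithTop.coe_lt_top _)
    exact (hd t).hasDerivAt
  have h2 : ∀ t : ℝ, iteratedDeriv 2 y t =
      ((t : ℂ) ^ 3 + a * ((μ ^ 2 : ℝ) : ℂ) * t + b * ((μ ^ 3 : ℝ) : ℂ)) * iteratedDeriv 0 y t := by
    intro t
    rw [iteratedDeriv_succ, iteratedDeriv_one, iteratedDeriv_zero, hode t, e2, ← e3]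
  have hrec := AiryType.recurrence (fun n => iteratedDeriv n y) hf _ _ h2
  have hy0 : ∀ t, HasDerivAt y (deriv y t) t := by
    intro t; simpa [iteratedDeriv_one] using hf 0 t
  have hy1 : ∀ t : ℝ, HasDerivAt (deriv y)
      (((t : ℂ) ^ 3 + a * ((μ ^ 2 : ℝ) : ℂ) * t + b * ((μ ^ 3 : ℝ) : ℂ)) * y t) t := by
    intro t
    have := hf 1 t
    rw [h2 t, iteratedDeriv_one, iteratedDeriv_zero] at this
    exact this
  have hen := AiryType.energy y (deriv y) _ hy0 hy1 T σ (1 + M) hT hσ1 (by linarith)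
    (by
      intro t ht
      rw [hσ2]
      exact (AiryType.pot_bounds M μ (μ + T) t a b hM ha hb hμ (by linarith)).1) x hx
  set V := ‖y T‖ + ‖deriv y T‖ with hV
  have hV0 : 0 ≤ V := by positivity
  set G := Real.exp ((2 * (1 + M) + 1) * (μ + T) ^ ((5 : ℝ) / 2)) * V with hG
  have hG0 : 0 ≤ G := by positivity
  have hle : σ * V * Real.exp ((1 + M) * σ * (2 * T)) ≤ G := by
    have t1 : σ ≤ Real.exp ((μ + T) ^ ((5 : ℝ) / 2)) := by
      have : σ ≤ σ * (μ + T) := by nlinarith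
      linarith [Real.add_one_le_exp ((μ + T) ^ ((5 : ℝ) / 2))]
    have t2 : (1 + M) * σ * (2 * T) ≤ (2 * (1 + M)) * (μ + T) ^ ((5 : ℝ) / 2) := by
      rw [← hσS]
      have : 0 ≤ (1 + M) * σ * (2 * μ) := by positivity
      nlinarith
    calc _ ≤ Real.exp ((μ + T) ^ ((5 : ℝ) / 2)) * V *
          Real.exp ((2 * (1 + M)) * (μ + T) ^ ((5 : ℝ) / 2)) := by gcongr
      _ = G := by
        rw [hG, add_mul _ 1, Real.exp_add, one_mul]; ring
  set N := (k : ℝ) + μ + |x| with hN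
  have hk0 : (0 : ℝ) ≤ k := by positivity
  have hx0 := abs_nonneg x
  have hN1 : 1 ≤ N := by linarith
  have hN0 : 0 ≤ N := by linarith
  obtain ⟨p0, p1, p2⟩ := AiryType.pot_bounds M μ N x a b hM ha hb hμ (by linarith)
  have hs1 : 1 ≤ N ^ ((3 : ℝ) / 2) := Real.one_le_rpow hN1 (by norm_num)
  have hs2 : (N ^ ((3 : ℝ) / 2)) ^ 2 = N ^ 3 := by
    rw [← Real.rpow_natCast, ← Real.rpow_mul hN0, ← Real.rpow_natCast]; norm_num
  have hsk : N ^ (3 * (k : ℝ) / 2) = (N ^ ((3 : ℝ) / 2)) ^ k := by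
    rw [← Real.rpow_natCast, ← Real.rpow_mul hN0]; congr 1; ring
  have main := AiryType.deriv_bound (fun n => iteratedDeriv n y x) _ _ _ M N
    ((8 + 2 * M) * N ^ ((3 : ℝ) / 2)) G hM hN0 hG0 (by nlinarith)
    (by
      rw [mul_pow, hs2]
      have : 0 ≤ N ^ 3 := by positivity
      apply mul_le_mul_of_nonneg_right _ this
      nlinarith)
    p0 p1 p2 k (by linarith) (fun j => hrec j x)
    (by simpa using hen.1.trans hle) (by simpa [iteratedDeriv_one] using hen.2.trans hle) k le_rfl
  rw [hsk, Real.rpow_one, Real.rpow_one]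
  have hlT : 1 ≤ lam * (1 + T) := by nlinarith
  calc _ ≤ _ := main
    _ = (8 + 2 * M) ^ k * (N ^ ((3 : ℝ) / 2)) ^ k * G * 1 := by rw [mul_pow]; ring
    _ ≤ (8 + 2 * M) ^ (k + 1) * (N ^ ((3 : ℝ) / 2)) ^ k * G * (lam * (1 + T)) := by
      gcongr
      · linarith
      · omega
    _ = _ := by rw [hG]; ring
end

section
/- Fix b₀, b₁, b₂ ∈ ℂ, s > 1 and h > 0, and set P = P_mod + b₀D₀ + b₁D₁ + b₂D₂. Assume the Cauchy problem for P is locally solvable in γ^(s) at the origin. Then there exists δ > 0 such that for every 0 < ε₁ < δ and every pair (u₀, u₁) with u₀, u₁ ∈ γ₀^(s,h)({|x'| ≤ ε₁}), there is a unique solution u ∈ C²(D_δ) of Pu = 0 in D_δ with D₀ʲu(0, x') = u_j(x') for j = 0, 1, and moreover for every compact set L ⊂ D_δ there exists C > 0, independent of the data (u₀, u₁), such that the C²-norm of u on L satisfies |u|_{C²(L)} ≤ C·Σ_{j=0}^{1} sup_{α, x'} |∂^α u_j(x')| / (h^|α|·(|α|!)^s). -/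
open Complex

/-- Iterated partial derivative in direction `j`. -/
noncomputable def pdIter {n : ℕ} (j : Fin n) (k : ℕ) (f : (Fin n → ℝ) → ℂ) :
    (Fin n → ℝ) → ℂ :=
  (pd j)^[k] f

/-- The multi-index partial derivative `∂^α f` on `ℝ²`. -/
noncomputable def pdMulti (α : Fin 2 → ℕ) (f : (Fin 2 → ℝ) → ℂ) : (Fin 2 → ℝ) → ℂ :=
  pdIter 0 (α 0) (pdIter 1 (α 1) f)

/-- The Gevrey class `γ^(s)(ℝ²)`. -/
def GevreyClass (s : ℝ) (f : (Fin 2 → ℝ) → ℂ) : Prop :=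
  ContDiff ℝ (⊤ : ℕ∞) f ∧ ∀ K : Set (Fin 2 → ℝ), IsCompact K →
    ∃ C > (0:ℝ), ∃ h > (0:ℝ), ∀ x ∈ K, ∀ α : Fin 2 → ℕ,
      ‖pdMulti α f x‖ ≤ C * h ^ (α 0 + α 1) * (Nat.factorial (α 0 + α 1) : ℝ) ^ s

/-- `u` is a `C²` solution of the Cauchy problem for the operator `P` on `U` with
Cauchy data `(u₀, u₁)` on `U ∩ {x₀ = 0}` (recall `D₀ = -i ∂₀`). -/
def IsCauchySolution (P : ((Fin 3 → ℝ) → ℂ) → (Fin 3 → ℝ) → ℂ) (U : Set (Fin 3 → ℝ))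
    (u₀ u₁ : (Fin 2 → ℝ) → ℂ) (u : (Fin 3 → ℝ) → ℂ) : Prop :=
  ContDiffOn ℝ 2 u U ∧ (∀ x ∈ U, P u x = 0) ∧
    ∀ x' : Fin 2 → ℝ, Fin.cons 0 x' ∈ U →
      u (Fin.cons 0 x') = u₀ x' ∧ -I * pd 0 u (Fin.cons 0 x') = u₁ x'

/-- The Cauchy problem for `P` is locally solvable in `γ^(s)` at the origin. -/
def LocallySolvable (P : ((Fin 3 → ℝ) → ℂ) → (Fin 3 → ℝ) → ℂ) (s : ℝ) : Prop :=
  ∀ u₀ u₁ : (Fin 2 → ℝ) → ℂ, GevreyClass s u₀ → GevreyClass s u₁ →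
    ∃ U ∈ nhds (0 : Fin 3 → ℝ), ∃ u : (Fin 3 → ℝ) → ℂ, IsCauchySolution P U u₀ u₁ u

/-- The lens-shaped region `D_δ = {x ∈ ℝ³ : |x'|² + |x₀| < δ}`. -/
def Dset (δ : ℝ) : Set (Fin 3 → ℝ) := {x | (x 1) ^ 2 + (x 2) ^ 2 + |x 0| < δ}

/-- `C` is an admissible constant in the `γ^(s,h)`-bounds for `f`, i.e.
`|∂^α f(x')| ≤ C·h^|α|·(|α|!)^s` for all `α` and `x'`.  The norm of
`γ₀^(s,h)(K)` is the least such `C`. -/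
def GevreyBound (s h C : ℝ) (f : (Fin 2 → ℝ) → ℂ) : Prop :=
  ∀ α : Fin 2 → ℕ, ∀ x : Fin 2 → ℝ,
    ‖pdMulti α f x‖ ≤ C * h ^ (α 0 + α 1) * (Nat.factorial (α 0 + α 1) : ℝ) ^ s

/-- `f ∈ γ₀^(s,h)({|x'| ≤ ε₁})`: a smooth function supported in `{|x'| ≤ ε₁}` with finite
`γ^(s,h)`-norm. -/
def MemGevreyZero (s h ε₁ : ℝ) (f : (Fin 2 → ℝ) → ℂ) : Prop :=
  ContDiff ℝ (⊤ : ℕ∞) f ∧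
    tsupport f ⊆ {x : Fin 2 → ℝ | (x 0) ^ 2 + (x 1) ^ 2 ≤ ε₁ ^ 2} ∧
    ∃ C : ℝ, GevreyBound s h C f

section
open Set Filter Topology Metric Function

theorem banach_cover {E : ℕ → Type*} {Y : Type*} [∀ n, NormedAddCommGroup (E n)]
    [∀ n, NormedSpace ℝ (E n)] [∀ n, CompleteSpace (E n)] [NormedAddCommGroup Y]
    [NormedSpace ℝ Y] [CompleteSpace Y] (f : ∀ n, E n →L[ℝ] Y)
    (hcov : ∀ y, ∃ n, ∃ x, f n x = y) :
    ∃ n, ∃ C > 0, ∀ y, ∃ x, f n x = y ∧ ‖x‖ ≤ C * ‖y‖ := by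
  have step1 : ∃ n, ∃ C ≥ 0, ∀ y, ∃ x, dist (f n x) y ≤ 1 / 2 * ‖y‖ ∧ ‖x‖ ≤ C * ‖y‖ := by
    have A : ⋃ p : ℕ × ℕ, closure (f p.1 '' ball 0 p.2) = Set.univ := by
      refine Subset.antisymm (subset_univ _) fun y _ => ?_
      rcases hcov y with ⟨m, x, hx⟩
      rcases exists_nat_gt ‖x‖ with ⟨n, hn⟩
      refine mem_iUnion.2 ⟨(m, n), subset_closure ?_⟩
      refine (mem_image _ _ _).2 ⟨x, ⟨?_, hx⟩⟩
      rwa [mem_ball, dist_eq_norm, sub_zero]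
    have : ∃ (p : ℕ × ℕ) (x : _), x ∈ interior (closure (f p.1 '' ball 0 p.2)) :=
      nonempty_interior_of_iUnion_of_closed (fun n => isClosed_closure) A
    simp only [mem_interior_iff_mem_nhds, Metric.mem_nhds_iff] at this
    rcases this with ⟨⟨m, n⟩, a, ε, ⟨εpos, H⟩⟩
    simp only at H
    refine ⟨m, (ε / 2)⁻¹ * 2 * n, by positivity, fun y => ?_⟩
    rcases eq_or_ne y 0 with rfl | hy
    · exact ⟨0, by simp⟩
    · have hy' : 0 < ‖y‖ := norm_pos_iff.2 hy
      let d : ℝ := (ε / 2) / ‖y‖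
      have hd : 0 < d := by positivity
      have hdy : ‖d • y‖ = ε / 2 := by
        rw [norm_smul, Real.norm_of_nonneg hd.le]; simp only [d]; field_simp
      let δ := d * ‖y‖ / 4
      have δpos : 0 < δ := by positivity
      have : a + d • y ∈ ball a ε := by
        simp [dist_eq_norm, hdy]; linarith
      rcases Metric.mem_closure_iff.1 (H this) _ δpos with ⟨z₁, z₁im, h₁⟩
      rcases (mem_image _ _ _).1 z₁im with ⟨x₁, hx₁, xz₁⟩
      rw [← xz₁] at h₁
      rw [mem_ball, dist_eq_norm, sub_zero] at hx₁
      have : a ∈ ball a ε := by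
        simp only [mem_ball, dist_self]
        exact εpos
      rcases Metric.mem_closure_iff.1 (H this) _ δpos with ⟨z₂, z₂im, h₂⟩
      rcases (mem_image _ _ _).1 z₂im with ⟨x₂, hx₂, xz₂⟩
      rw [← xz₂] at h₂
      rw [mem_ball, dist_eq_norm, sub_zero] at hx₂
      let x := x₁ - x₂
      have I : ‖f m x - d • y‖ ≤ 2 * δ :=
        calc
          ‖f m x - d • y‖ = ‖f m x₁ - (a + d • y) - (f m x₂ - a)‖ := by
            congr 1
            simp only [x, (f m).map_sub]
            abel
          _ ≤ ‖f m x₁ - (a + d • y)‖ + ‖f m x₂ - a‖ := norm_sub_le _ _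
          _ ≤ 2 * δ := by grind [dist_eq_norm']
      have J : ‖f m (d⁻¹ • x) - y‖ ≤ 1 / 2 * ‖y‖ :=
        calc
          ‖f m (d⁻¹ • x) - y‖ = ‖d⁻¹ • (f m x - d • y)‖ := by
            rw [(f m).map_smul, smul_sub, smul_smul, inv_mul_cancel₀ hd.ne', one_smul]
          _ = d⁻¹ * ‖f m x - d • y‖ := by rw [norm_smul, norm_inv, Real.norm_of_nonneg hd.le]
          _ ≤ d⁻¹ * (2 * δ) := by gcongr
          _ = 1 / 2 * ‖y‖ := by simp only [δ]; field_simp; norm_num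
      rw [← dist_eq_norm] at J
      have K : ‖d⁻¹ • x‖ ≤ (ε / 2)⁻¹ * 2 * ↑n * ‖y‖ :=
        calc
          ‖d⁻¹ • x‖ = d⁻¹ * ‖x₁ - x₂‖ := by rw [norm_smul, norm_inv, Real.norm_of_nonneg hd.le]
          _ ≤ d⁻¹ * (n + n) := by
            gcongr
            exact le_trans (norm_sub_le _ _) (by gcongr)
          _ = (ε / 2)⁻¹ * 2 * ↑n * ‖y‖ := by simp only [d]; field_simp; ring
      exact ⟨d⁻¹ • x, J, K⟩
  obtain ⟨m, C, C0, hC⟩ := step1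
  refine ⟨m, ?_⟩
  choose g hg using hC
  let h y := y - f m (g y)
  have hle : ∀ y, ‖h y‖ ≤ 1 / 2 * ‖y‖ := by
    intro y
    rw [← dist_eq_norm, dist_comm]
    exact (hg y).1
  refine ⟨2 * C + 1, by linarith, fun y => ?_⟩
  have hnle : ∀ n : ℕ, ‖h^[n] y‖ ≤ (1 / 2) ^ n * ‖y‖ := by
    intro n
    induction n with
    | zero => simp only [one_div, one_mul, iterate_zero_apply, pow_zero, le_rfl]
    | succ n IH =>
      rw [iterate_succ']
      apply le_trans (hle _) _
      rw [pow_succ', mul_assoc]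
      gcongr
  let u n := g (h^[n] y)
  have ule : ∀ n, ‖u n‖ ≤ (1 / 2) ^ n * (C * ‖y‖) := fun n ↦ by
    apply le_trans (hg _).2
    calc
      C * ‖h^[n] y‖ ≤ C * ((1 / 2) ^ n * ‖y‖) := by gcongr; exact hnle n
      _ = (1 / 2) ^ n * (C * ‖y‖) := by ring
  have sNu : Summable fun n => ‖u n‖ := by
    refine .of_nonneg_of_le (fun n => norm_nonneg _) ule ?_
    exact Summable.mul_right _ (summable_geometric_of_lt_one (by simp) (by norm_num))
  have su : Summable u := sNu.of_norm
  let x := tsum u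
  have x_ineq : ‖x‖ ≤ (2 * C + 1) * ‖y‖ :=
    calc
      ‖x‖ ≤ ∑' n, ‖u n‖ := norm_tsum_le_tsum_norm sNu
      _ ≤ ∑' n, (1 / 2) ^ n * (C * ‖y‖) :=
        sNu.tsum_le_tsum ule <| Summable.mul_right _ summable_geometric_two
      _ = (∑' n, (1 / 2) ^ n) * (C * ‖y‖) := tsum_mul_right
      _ = 2 * C * ‖y‖ := by rw [tsum_geometric_two, mul_assoc]
      _ ≤ 2 * C * ‖y‖ + ‖y‖ := le_add_of_nonneg_right (norm_nonneg y)
      _ = (2 * C + 1) * ‖y‖ := by ring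
  have fsumeq : ∀ n : ℕ, f m (∑ i ∈ Finset.range n, u i) = y - h^[n] y := by
    intro n
    induction n with
    | zero => simp
    | succ n IH => rw [Finset.sum_range_succ, (f m).map_add, IH, iterate_succ_apply', sub_add]
  have : Tendsto (fun n => ∑ i ∈ Finset.range n, u i) atTop (𝓝 x) := su.hasSum.tendsto_sum_nat
  have L₁ : Tendsto (fun n => f m (∑ i ∈ Finset.range n, u i)) atTop (𝓝 (f m x)) :=
    ((f m).continuous.tendsto _).comp this
  simp only [fsumeq] at L₁
  have L₂ : Tendsto (fun n => y - h^[n] y) atTop (𝓝 (y - 0)) := by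
    refine tendsto_const_nhds.sub ?_
    rw [tendsto_iff_norm_sub_tendsto_zero]
    simp only [sub_zero]
    refine squeeze_zero (fun _ => norm_nonneg _) hnle ?_
    rw [← zero_mul ‖y‖]
    refine (tendsto_pow_atTop_nhds_zero_of_lt_one ?_ ?_).mul tendsto_const_nhds <;> norm_num
  have feq : f m x = y - 0 := tendsto_nhds_unique L₁ L₂
  rw [sub_zero] at feq
  exact ⟨x, feq, x_ineq⟩

/-- Relational version: closed linear relations covering a Banach space. -/
theorem banach_rel {X Y : Type*} [NormedAddCommGroup X] [NormedSpace ℝ X] [CompleteSpace X]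
    [NormedAddCommGroup Y] [NormedSpace ℝ Y] [CompleteSpace Y] (S : Submodule ℝ Y)
    (hS : IsClosed (S : Set Y)) (R : ℕ → Submodule ℝ (X × Y))
    (hR : ∀ n, IsClosed (R n : Set (X × Y)))
    (hRS : ∀ n, ∀ p ∈ R n, p.2 ∈ S)
    (hcov : ∀ y ∈ S, ∃ n, ∃ x, (x, y) ∈ R n) :
    ∃ n, ∃ C > 0, ∀ y ∈ S, ∃ x, (x, y) ∈ R n ∧ ‖x‖ ≤ C * ‖y‖ := by
  have : CompleteSpace S := hS.completeSpace_coe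
  have : ∀ n, CompleteSpace (R n) := fun n => (hR n).completeSpace_coe
  let f : ∀ n, R n →L[ℝ] S := fun n =>
    ((ContinuousLinearMap.snd ℝ X Y).comp (R n).subtypeL).codRestrict S
      (fun p => hRS n p.1 p.2)
  obtain ⟨n, C, hC, H⟩ := banach_cover f (by
    rintro ⟨y, hy⟩
    obtain ⟨n, x, hx⟩ := hcov y hy
    exact ⟨n, ⟨(x, y), hx⟩, rfl⟩)
  refine ⟨n, C, hC, fun y hy => ?_⟩
  obtain ⟨⟨⟨x, y'⟩, hx⟩, h1, h2⟩ := H ⟨y, hy⟩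
  have h1' : y' = y := congrArg Subtype.val h1
  subst h1'
  refine ⟨x, hx, le_trans ?_ h2⟩
  exact norm_fst_le (x, y')
end

section
open Set Filter Topology Metric Function

theorem mom_aux1 {a b : ℝ} (ha : 0 ≤ a) (hab : a ≤ b) :
    (a + 2) * (a + 1) ≤ (b + 1) * (b + 2) := by nlinarith

theorem mom_aux2 {a b : ℝ} (ha : 0 ≤ a) (hab : a ≤ b) :
    a + 1 ≤ (b + 1) * (b + 2) := by nlinarith

theorem moment_int {K T N : ℝ} (hK : 0 < K) (n : ℕ) {f g : ℝ → ℂ}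
    (hf : ∀ t ∈ Icc 0 T, HasDerivAt f (g t) t) (hf0 : f 0 = 0) (hN : 0 ≤ N)
    (hg : ∀ t ∈ Icc 0 T, ‖g t‖ ≤ N * (1 / K + K * t) ^ n) :
    ∀ t ∈ Icc 0 T, (n + 1) * ‖f t‖ ≤ N / K * (1 / K + K * t) ^ (n + 1) := by
  intro t ht
  have := image_norm_le_of_norm_deriv_right_le_deriv_boundary (a := 0) (b := T) (f := f) (f' := g)
    (fun x hx => (hf x hx).continuousAt.continuousWithinAt)
    (fun x hx => (hf x (Ico_subset_Icc_self hx)).hasDerivWithinAt)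
    (B := fun t => N / K / (n + 1) * (1 / K + K * t) ^ (n + 1))
    (B' := fun t => N * (1 / K + K * t) ^ n) (by rw [hf0, norm_zero]; positivity)
    (by
      intro x
      have h1 : HasDerivAt (fun t : ℝ => 1 / K + K * t) K x := by
        simpa using ((hasDerivAt_id x).const_mul K).const_add (1 / K)
      have h2 := (h1.pow (n + 1)).const_mul (N / K / (n + 1))
      refine h2.congr_deriv ?_
      push_cast
      have : (n : ℝ) + 1 ≠ 0 := by positivity
      field_simp)
    (fun x hx => hg x (Ico_subset_Icc_self hx)) ht
  have h0 : (0 : ℝ) < n + 1 := by positivity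
  calc (n + 1) * ‖f t‖ ≤ (n + 1) * (N / K / (n + 1) * (1 / K + K * t) ^ (n + 1)) := by gcongr
    _ = _ := by field_simp

set_option maxHeartbeats 800000 in
theorem moments_step {K T N c : ℝ} (hc : 0 ≤ c) (hK : 100 * (1 + c) ≤ K)
    (hT : T * K ^ 2 ≤ 1)
    (A B E : ℕ → ℕ → ℝ → ℂ) (c0 c1 c2 ε : ℂ) (hc0 : ‖c0‖ ≤ c) (hc1 : ‖c1‖ ≤ c) (hc2 : ‖c2‖ ≤ c)
    (hε : ‖ε‖ = 1)
    (hA : ∀ j k, ∀ t ∈ Icc 0 T, HasDerivAt (A j k) (B j k t) t)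
    (hB : ∀ j k, ∀ t ∈ Icc 0 T, HasDerivAt (B j k) (E j k t) t)
    (hA0 : ∀ j k, A j k 0 = 0) (hB0 : ∀ j k, B j k 0 = 0)
    (hE : ∀ j k, ∀ t ∈ Icc 0 T, E j k t =
      2 * (2 * ε * E (j+1) (k+1) t - ε * (k * B (j+1) (k-1) t))
      + (4 * E (j+2) k t - (4 * j + 2) * B j k t + j * (j - 1) * A (j-2) k t)
      + (4 * E (j+3) (k+2) t - (4 * k + 2) * B (j+3) k t + k * (k - 1) * A (j+3) (k-2) t)
      - c0 * (ε * B j k t) - c1 * (2 * B (j+1) k t - j * A (j-1) k t)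
      - c2 * (2 * B j (k+1) t - k * A j (k-1) t)) (hN : 0 ≤ N)
    (hbd : ∀ j k, ∀ t ∈ Icc 0 T, ‖E j k t‖ ≤ N * (1 / K + K * t) ^ (j + k)) :
    (∀ j k, ∀ t ∈ Icc 0 T, ‖A j k t‖ ≤ N * (1 / K + K * t) ^ (j + k)) ∧
    ∀ j k, ∀ t ∈ Icc 0 T, ‖E j k t‖ ≤ N / 2 * (1 / K + K * t) ^ (j + k) := by
  have hKpos : 0 < K := by linarith
  have bB : ∀ j k, ∀ t ∈ Icc 0 T,
      ((j + k : ℕ) + 1) * ‖B j k t‖ ≤ N / K * (1 / K + K * t) ^ (j + k + 1) := fun j k =>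
    moment_int hKpos (j + k) (hB j k) (hB0 j k) hN (hbd j k)
  have bB' : ∀ j k, ∀ t ∈ Icc 0 T,
      ‖B j k t‖ ≤ N / K * (1 / K + K * t) ^ (j + k + 1) := fun j k t ht => by
    refine le_trans ?_ (bB j k t ht)
    have : (0:ℝ) ≤ (j + k : ℕ) := by positivity
    nlinarith [norm_nonneg (B j k t)]
  have bA : ∀ j k, ∀ t ∈ Icc 0 T,
      ((j + k : ℕ) + 1) * ((j + k : ℕ) + 2) * ‖A j k t‖ ≤ N / K / K * (1 / K + K * t) ^ (j + k + 2) := by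
    intro j k t ht
    have h0 : (0:ℝ) < (j + k : ℕ) + 1 := by positivity
    have := moment_int (T := T) (N := N / K / ((j + k : ℕ) + 1)) hKpos (j + k + 1) (hA j k) (hA0 j k)
      (by positivity) (by
        intro t ht
        have := bB j k t ht
        calc ‖B j k t‖ = (((j + k : ℕ) + 1) * ‖B j k t‖) / ((j + k : ℕ) + 1) := by field_simp
          _ ≤ (N / K * (1 / K + K * t) ^ (j + k + 1)) / ((j + k : ℕ) + 1) := by gcongr
          _ = _ := by ring) t ht
    calc ((j + k : ℕ) + 1) * ((j + k : ℕ) + 2) * ‖A j k t‖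
        = ((j + k : ℕ) + 1) * (((j + k + 1 : ℕ) + 1) * ‖A j k t‖) := by push_cast; ring
      _ ≤ ((j + k : ℕ) + 1) * (N / K / ((j + k : ℕ) + 1) / K * (1 / K + K * t) ^ (j + k + 1 + 1)) := by
        gcongr
      _ = _ := by field_simp
  have hKinv : K⁻¹ ≤ 1 / 100 := by
    rw [inv_le_comm₀ hKpos (by norm_num)]; norm_num; linarith
  have hcK : c * K⁻¹ ≤ 1 / 100 := by
    rw [← div_eq_mul_inv, div_le_iff₀ hKpos]; linarith
  have hKi0 : 0 < K⁻¹ := by positivity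
  have hρ : ∀ t ∈ Icc 0 T, 0 < 1 / K + K * t ∧ 1 / K + K * t ≤ 2 * K⁻¹ := by
    intro t ht
    have h0 : 0 ≤ K * t := mul_nonneg hKpos.le ht.1
    refine ⟨by positivity, ?_⟩
    have : K * t ≤ K⁻¹ := by
      rw [← one_div, le_div_iff₀ hKpos]
      nlinarith [ht.2]
    rw [one_div]; linarith
  constructor
  · intro j k t ht
    obtain ⟨r0, r1⟩ := hρ t ht
    have h1 := bA j k t ht
    set r := 1 / K + K * t
    have h2 : ‖A j k t‖ ≤ ((j + k : ℕ) + 1) * ((j + k : ℕ) + 2) * ‖A j k t‖ := by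
      have : (0:ℝ) ≤ (j + k : ℕ) := by positivity
      have : (1:ℝ) ≤ ((j + k : ℕ) + 1) * ((j + k : ℕ) + 2) := by nlinarith
      nlinarith [norm_nonneg (A j k t)]
    refine (h2.trans h1).trans ?_
    have : N / K / K * r ^ (j + k + 2) = N * r ^ (j + k) * (K⁻¹ * K⁻¹ * (r * r)) := by
      rw [div_eq_mul_inv, div_eq_mul_inv]; ring
    rw [this]
    have hN' : 0 ≤ N * r ^ (j + k) := by positivity
    have : K⁻¹ * K⁻¹ * (r * r) ≤ 1 := by
      have : r ≤ 1 := by linarith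
      have : r * r ≤ 1 := by nlinarith
      have : K⁻¹ * K⁻¹ ≤ 1 := by nlinarith
      have : 0 ≤ K⁻¹ * K⁻¹ := by positivity
      nlinarith
    nlinarith
  intro j k t ht
  obtain ⟨r0, r1⟩ := hρ t ht
  have eB := fun j k => bB j k t ht
  have eB' := fun j k => bB' j k t ht
  have eA := fun j k => bA j k t ht
  have eE := fun j k => hbd j k t ht
  rw [hE j k t ht]
  clear hE bB bB' bA hbd hA hB hA0 hB0
  set r := 1 / K + K * t with hr
  clear_value r
  set q := K⁻¹ with hq
  have hNK : N / K = N * q := by rw [hq, div_eq_mul_inv]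
  simp only [hNK] at eA
  simp only [hNK] at eB eB'
  have hNKK : N * q / K = N * q * q := by rw [div_eq_mul_inv, hq]
  simp only [hNKK] at eA
  set X := N * r ^ (j + k) with hX
  have hX0 : 0 ≤ X := by positivity
  have e1 : ‖E (j+1) (k+1) t‖ ≤ X * r ^ 2 := (eE _ _).trans (by rw [hX]; apply le_of_eq; ring)
  have e2 : ‖E (j+2) k t‖ ≤ X * r ^ 2 := (eE _ _).trans (by rw [hX]; apply le_of_eq; ring)
  have e3 : ‖E (j+3) (k+2) t‖ ≤ X * r ^ 5 := (eE _ _).trans (by rw [hX]; apply le_of_eq; ring)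
  have f1 : (k:ℝ) * ‖B (j+1) (k-1) t‖ ≤ X * q * r := by
    rcases k with _ | k
    · simp; positivity
    · have := eB (j+1) k
      simp only [Nat.add_sub_cancel]
      have h2 : N * q * r ^ (j + 1 + k + 1) = X * q * r := by rw [hX]; ring
      rw [h2] at this
      refine le_trans ?_ this
      gcongr
      push_cast
      have : (0:ℝ) ≤ j := by positivity
      linarith
  have f2 : (4 * j + 2) * ‖B j k t‖ ≤ 4 * (X * q * r) := by
    have := eB j k
    have h2 : N * q * r ^ (j + k + 1) = X * q * r := by rw [hX]; ring
    rw [h2] at this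
    refine le_trans ?_ (mul_le_mul_of_nonneg_left this (by norm_num : (0:ℝ) ≤ 4))
    rw [← mul_assoc]
    gcongr
    push_cast
    have : (0:ℝ) ≤ k := by positivity
    linarith
  have f3 : (4 * k + 2) * ‖B (j+3) k t‖ ≤ 4 * (X * q * r ^ 4) := by
    have := eB (j+3) k
    have h2 : N * q * r ^ (j + 3 + k + 1) = X * q * r ^ 4 := by rw [hX]; ring
    rw [h2] at this
    refine le_trans ?_ (mul_le_mul_of_nonneg_left this (by norm_num : (0:ℝ) ≤ 4))
    rw [← mul_assoc]
    gcongr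
    push_cast
    have : (0:ℝ) ≤ j := by positivity
    linarith
  have f4 : ‖B j k t‖ ≤ X * q * r := (eB' _ _).trans (by rw [hX]; apply le_of_eq; ring)
  have f5 : ‖B (j+1) k t‖ ≤ X * q * r ^ 2 := (eB' _ _).trans (by rw [hX]; apply le_of_eq; ring)
  have f6 : ‖B j (k+1) t‖ ≤ X * q * r ^ 2 := (eB' _ _).trans (by rw [hX]; apply le_of_eq; ring)
  have g1 : ‖(j * (j - 1) : ℂ)‖ * ‖A (j-2) k t‖ ≤ X * q * q := by
    rcases j with _ | _ | j
    · simp; positivity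
    · simp; positivity
    · have := eA j k
      have h2 : N * q * q * r ^ (j + k + 2) = X * q * q := by rw [hX]; ring
      rw [h2] at this
      refine le_trans ?_ this
      have : ‖(((j + 1 + 1 : ℕ) : ℂ) * (((j + 1 + 1 : ℕ) : ℂ) - 1))‖ = (j + 2) * (j + 1) := by
        have : (((j + 1 + 1 : ℕ) : ℂ) * (((j + 1 + 1 : ℕ) : ℂ) - 1)) = (((j+2)*(j+1) : ℕ) : ℂ) := by
          push_cast; ring
        rw [this, Complex.norm_natCast]; push_cast; ring
      rw [this]
      have e : j + 1 + 1 - 2 = j := by omega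
      rw [e]
      gcongr ?_ * _
      exact mom_aux1 (by positivity) (Nat.cast_le.mpr (by omega))
  have g2 : ‖(k * (k - 1) : ℂ)‖ * ‖A (j+3) (k-2) t‖ ≤ X * q * q * r ^ 3 := by
    rcases k with _ | _ | k
    · simp; positivity
    · simp; positivity
    · have := eA (j+3) k
      have h2 : N * q * q * r ^ (j + 3 + k + 2) = X * q * q * r ^ 3 := by rw [hX]; ring
      rw [h2] at this
      refine le_trans ?_ this
      have : ‖(((k + 1 + 1 : ℕ) : ℂ) * (((k + 1 + 1 : ℕ) : ℂ) - 1))‖ = (k + 2) * (k + 1) := by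
        have : (((k + 1 + 1 : ℕ) : ℂ) * (((k + 1 + 1 : ℕ) : ℂ) - 1)) = (((k+2)*(k+1) : ℕ) : ℂ) := by
          push_cast; ring
        rw [this, Complex.norm_natCast]; push_cast; ring
      rw [this]
      have e : k + 1 + 1 - 2 = k := by omega
      rw [e]
      gcongr ?_ * _
      exact mom_aux1 (by positivity) (Nat.cast_le.mpr (by omega))
  have g3 : (j:ℝ) * ‖A (j-1) k t‖ ≤ X * q * q * r := by
    rcases j with _ | j
    · simp; positivity
    · have := eA j k
      simp only [Nat.add_sub_cancel]
      have h2 : N * q * q * r ^ (j + k + 2) = X * q * q * r := by rw [hX]; ring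
      rw [h2] at this
      refine le_trans ?_ this
      gcongr ?_ * _
      rw [Nat.cast_add_one]
      exact mom_aux2 (by positivity) (Nat.cast_le.mpr (by omega))
  have g4 : (k:ℝ) * ‖A j (k-1) t‖ ≤ X * q * q * r := by
    rcases k with _ | k
    · simp; positivity
    · have := eA j k
      simp only [Nat.add_sub_cancel]
      have h2 : N * q * q * r ^ (j + k + 2) = X * q * q * r := by rw [hX]; ring
      rw [h2] at this
      refine le_trans ?_ this
      gcongr ?_ * _
      rw [Nat.cast_add_one]
      exact mom_aux2 (by positivity) (Nat.cast_le.mpr (by omega))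
  have n1 : ‖(4 * j + 2 : ℂ)‖ = 4 * j + 2 := by
    have : (4 * j + 2 : ℂ) = ((4 * j + 2 : ℕ) : ℂ) := by push_cast; ring
    rw [this, Complex.norm_natCast]; push_cast; ring
  have n2 : ‖(4 * k + 2 : ℂ)‖ = 4 * k + 2 := by
    have : (4 * k + 2 : ℂ) = ((4 * k + 2 : ℕ) : ℂ) := by push_cast; ring
    rw [this, Complex.norm_natCast]; push_cast; ring
  have t1 : ‖2 * (2 * ε * E (j+1) (k+1) t - ε * (k * B (j+1) (k-1) t))‖
      ≤ 2 * (2 * (X * r ^ 2) + X * q * r) := by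
    rw [norm_mul]
    simp only [Complex.norm_ofNat]
    gcongr
    refine (norm_sub_le _ _).trans ?_
    simp only [norm_mul, hε, Complex.norm_ofNat, Complex.norm_natCast]
    refine add_le_add ?_ ?_
    · linarith
    · linarith
  have t2 : ‖4 * E (j+2) k t - (4 * j + 2) * B j k t + j * (j - 1) * A (j-2) k t‖
      ≤ 4 * (X * r ^ 2) + 4 * (X * q * r) + X * q * q := by
    refine (norm_add_le _ _).trans (add_le_add ((norm_sub_le _ _).trans (add_le_add ?_ ?_)) ?_)
    · rw [norm_mul, Complex.norm_ofNat]; gcongr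
    · rw [norm_mul, n1]; exact f2
    · rw [norm_mul]; exact g1
  have t3 : ‖4 * E (j+3) (k+2) t - (4 * k + 2) * B (j+3) k t + k * (k - 1) * A (j+3) (k-2) t‖
      ≤ 4 * (X * r ^ 5) + 4 * (X * q * r ^ 4) + X * q * q * r ^ 3 := by
    refine (norm_add_le _ _).trans (add_le_add ((norm_sub_le _ _).trans (add_le_add ?_ ?_)) ?_)
    · rw [norm_mul, Complex.norm_ofNat]; gcongr
    · rw [norm_mul, n2]; exact f3
    · rw [norm_mul]; exact g2
  have t4 : ‖c0 * (ε * B j k t)‖ ≤ c * (X * q * r) := by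
    rw [norm_mul, norm_mul, hε, one_mul]; gcongr
  have t5 : ‖c1 * (2 * B (j+1) k t - j * A (j-1) k t)‖ ≤ c * (2 * (X * q * r ^ 2) + X * q * q * r) := by
    rw [norm_mul]
    gcongr
    refine (norm_sub_le _ _).trans (add_le_add ?_ ?_)
    · rw [norm_mul, Complex.norm_ofNat]; gcongr
    · rw [norm_mul, Complex.norm_natCast]; exact g3
  have t6 : ‖c2 * (2 * B j (k+1) t - k * A j (k-1) t)‖ ≤ c * (2 * (X * q * r ^ 2) + X * q * q * r) := by
    rw [norm_mul]
    gcongr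
    refine (norm_sub_le _ _).trans (add_le_add ?_ ?_)
    · rw [norm_mul, Complex.norm_ofNat]; gcongr
    · rw [norm_mul, Complex.norm_natCast]; exact g4
  refine (norm_sub_le_of_le (norm_sub_le_of_le (norm_sub_le_of_le
    (norm_add_le_of_le (norm_add_le_of_le t1 t2) t3) t4) t5) t6).trans ?_
  have hr' : r ≤ 1 / 50 := by linarith
  have key : 2 * (2 * r ^ 2 + q * r) + (4 * r ^ 2 + 4 * (q * r) + q * q)
      + (4 * r ^ 5 + 4 * (q * r ^ 4) + q * q * r ^ 3) + c * q * r + 2 * (c * q * (2 * r ^ 2 + q * r))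
      ≤ 1 / 2 := by
    have a1 : r ^ 2 ≤ (1/50) ^ 2 := by gcongr
    have a2 : r ^ 3 ≤ (1/50) ^ 3 := by gcongr
    have a3 : r ^ 4 ≤ (1/50) ^ 4 := by gcongr
    have a4 : r ^ 5 ≤ (1/50) ^ 5 := by gcongr
    have a5 : q * r ≤ 1/100 * (1/50) := by gcongr
    have a6 : q * q ≤ 1/100 * (1/100) := by gcongr
    have a7 : q * r ^ 4 ≤ 1/100 * (1/50) ^ 4 := by gcongr
    have a8 : q * q * r ^ 3 ≤ 1/100 * (1/100) * (1/50) ^ 3 := by gcongr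
    have a9 : c * q * r ≤ 1/100 * (1/50) := by gcongr
    have a10 : c * q * (2 * r ^ 2 + q * r) ≤ 1/100 * (2 * (1/50)^2 + 1/100 * (1/50)) := by gcongr
    norm_num at *
    linarith
  have := mul_le_mul_of_nonneg_left key hX0
  have hX2 : N / 2 * r ^ (j + k) = X * (1 / 2) := by rw [hX]; ring
  rw [hX2]
  refine le_trans (le_of_eq ?_) this
  ring

theorem moments_zero {K T N c : ℝ} (hc : 0 ≤ c) (hK : 100 * (1 + c) ≤ K)
    (hT : T * K ^ 2 ≤ 1)
    (A B E : ℕ → ℕ → ℝ → ℂ) (c0 c1 c2 ε : ℂ) (hc0 : ‖c0‖ ≤ c) (hc1 : ‖c1‖ ≤ c) (hc2 : ‖c2‖ ≤ c)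
    (hε : ‖ε‖ = 1)
    (hA : ∀ j k, ∀ t ∈ Icc 0 T, HasDerivAt (A j k) (B j k t) t)
    (hB : ∀ j k, ∀ t ∈ Icc 0 T, HasDerivAt (B j k) (E j k t) t)
    (hA0 : ∀ j k, A j k 0 = 0) (hB0 : ∀ j k, B j k 0 = 0)
    (hE : ∀ j k, ∀ t ∈ Icc 0 T, E j k t =
      2 * (2 * ε * E (j+1) (k+1) t - ε * (k * B (j+1) (k-1) t))
      + (4 * E (j+2) k t - (4 * j + 2) * B j k t + j * (j - 1) * A (j-2) k t)
      + (4 * E (j+3) (k+2) t - (4 * k + 2) * B (j+3) k t + k * (k - 1) * A (j+3) (k-2) t)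
      - c0 * (ε * B j k t) - c1 * (2 * B (j+1) k t - j * A (j-1) k t)
      - c2 * (2 * B j (k+1) t - k * A j (k-1) t)) (hN : 0 ≤ N)
    (hbd : ∀ j k, ∀ t ∈ Icc 0 T, ‖E j k t‖ ≤ N * (1 / K + K * t) ^ (j + k)) :
    ∀ j k, ∀ t ∈ Icc 0 T, A j k t = 0 := by
  have H : ∀ n : ℕ, ∀ j k, ∀ t ∈ Icc 0 T, ‖E j k t‖ ≤ N * (1/2) ^ n * (1 / K + K * t) ^ (j + k) := by
    intro n
    induction n with
    | zero => simpa using hbd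
    | succ n ih =>
      have := (moments_step hc hK hT A B E c0 c1 c2 ε hc0 hc1 hc2 hε hA hB hA0 hB0 hE
        (by positivity) ih).2
      intro j k t ht
      refine (this j k t ht).trans (le_of_eq ?_)
      ring
  intro j k t ht
  rw [← norm_le_zero_iff]
  have h2 : Tendsto (fun n : ℕ => N * (1/2) ^ n * (1 / K + K * t) ^ (j + k)) atTop
      (𝓝 (N * 0 * (1 / K + K * t) ^ (j + k))) :=
    ((tendsto_pow_atTop_nhds_zero_of_lt_one (by norm_num) (by norm_num)).const_mul N).mul_const _
  rw [mul_zero, zero_mul] at h2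
  refine ge_of_tendsto' h2 fun n => ?_
  exact (moments_step hc hK hT A B E c0 c1 c2 ε hc0 hc1 hc2 hε hA hB hA0 hB0 hE
        (by positivity) (H n)).1 j k t ht
end

section
open Set Filter Topology Metric Function MeasureTheory

theorem real_mom_zero (φ : (Fin 2 → ℝ) → ℝ) (hφ : Continuous φ) (hc : HasCompactSupport φ)
    (hm : ∀ j k : ℕ, ∫ x, φ x * x 0 ^ j * x 1 ^ k = 0) : ∀ x, φ x = 0 := by
  have hi : ∀ g : (Fin 2 → ℝ) → ℝ, Continuous g → Integrable (fun x => φ x * g x) := fun g hg =>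
    (hφ.mul hg).integrable_of_hasCompactSupport hc.mul_right
  have hp : ∀ p : MvPolynomial (Fin 2) ℝ, ∫ x, φ x * MvPolynomial.eval x p = 0 := by
    intro p
    induction p using MvPolynomial.induction_on' with
    | monomial u a =>
      have : ∀ x : Fin 2 → ℝ, φ x * MvPolynomial.eval x (MvPolynomial.monomial u a)
          = a * (φ x * x 0 ^ (u 0) * x 1 ^ (u 1)) := by
        intro x
        rw [MvPolynomial.eval_monomial, Finsupp.prod_fintype _ _ (by simp)]
        simp [Fin.prod_univ_two]; ring
      simp_rw [this]
      rw [integral_const_mul, hm, mul_zero]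
    | add p q hp hq =>
      simp_rw [map_add, mul_add]
      rw [integral_add (hi _ p.continuous_eval) (hi _ q.continuous_eval), hp, hq, add_zero]
  let K := tsupport φ
  have hK : IsCompact K := hc
  have : CompactSpace K := isCompact_iff_compactSpace.mp hK
  let co : Fin 2 → C(K, ℝ) := fun i => ⟨fun x => x.1 i, (continuous_apply i).comp continuous_subtype_val⟩
  let A : Subalgebra ℝ C(K, ℝ) := (MvPolynomial.aeval co).range
  have hco : ∀ (p : MvPolynomial (Fin 2) ℝ) (x : K),
      (MvPolynomial.aeval co p) x = MvPolynomial.eval x.1 p := by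
    intro p x
    induction p using MvPolynomial.induction_on with
    | C a => simp
    | add p q hp hq => simp [hp, hq]
    | mul_X p i hp => simp [hp, co]
  have hA : A.SeparatesPoints := by
    intro x y hxy
    have : x.1 ≠ y.1 := fun h => hxy (Subtype.ext h)
    obtain ⟨i, hi⟩ := Function.ne_iff.mp this
    refine ⟨_, ⟨co i, ⟨MvPolynomial.X i, by simp⟩, rfl⟩, hi⟩
  have htop := ContinuousMap.subalgebra_topologicalClosure_eq_top_of_separatesPoints A hA
  let f : C(K, ℝ) := ⟨fun x => φ x.1, by fun_prop⟩
  have hf : f ∈ A.topologicalClosure := by rw [htop]; trivial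
  have hf' : f ∈ closure (A : Set C(K, ℝ)) := hf
  have hIle : ∫ x, φ x * φ x ≤ 0 := by
    have : ∀ η > (0:ℝ), ∫ x, φ x * φ x ≤ η * ∫ x, |φ x| := by
      intro η hη
      obtain ⟨g, ⟨p, rfl⟩, hg⟩ := Metric.mem_closure_iff.mp hf' η hη
      have h1 : ∫ x, φ x * φ x = ∫ x, φ x * (φ x - MvPolynomial.eval x p) := by
        simp_rw [mul_sub]
        rw [integral_sub (hi _ hφ) (hi _ p.continuous_eval), hp, sub_zero]
      rw [h1, ← integral_const_mul]
      refine integral_mono (hi _ (hφ.sub p.continuous_eval))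
        ((hφ.abs.integrable_of_hasCompactSupport (hc.comp_left (g := fun t : ℝ => |t|) abs_zero)).const_mul η) ?_
      intro x
      by_cases hx : x ∈ K
      · have h2 := ContinuousMap.dist_apply_le_dist (f := f) (g := MvPolynomial.aeval co p) ⟨x, hx⟩
        rw [hco] at h2
        have h3 : |φ x - MvPolynomial.eval x p| ≤ η := h2.trans hg.le
        calc φ x * (φ x - MvPolynomial.eval x p) ≤ |φ x * (φ x - MvPolynomial.eval x p)| := le_abs_self _
          _ = |φ x| * |φ x - MvPolynomial.eval x p| := abs_mul _ _
          _ ≤ |φ x| * η := by gcongr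
          _ = _ := mul_comm _ _
      · have : φ x = 0 := image_eq_zero_of_notMem_tsupport hx
        simp [this]
    have ht : Tendsto (fun η : ℝ => η * ∫ x, |φ x|) (𝓝[>] 0) (𝓝 (0 * ∫ x, |φ x|)) :=
      (tendsto_id.mono_left nhdsWithin_le_nhds).mul_const _
    rw [zero_mul] at ht
    exact ge_of_tendsto ht (eventually_mem_nhdsWithin.mono fun η hη => this η hη)
  have h0 : ∫ x, φ x * φ x = 0 := le_antisymm hIle (integral_nonneg fun x => mul_self_nonneg _)
  intro x
  by_contra hx
  exact absurd h0 ((hφ.mul hφ).integral_pos_of_hasCompactSupport_nonneg_nonzero (μ := volume)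
    (hc.mul_right) (fun x => mul_self_nonneg _) (x := x) (by simpa using hx)).ne'

theorem cplx_mom_zero (φ : (Fin 2 → ℝ) → ℂ) (hφ : Continuous φ) (hc : HasCompactSupport φ)
    (hm : ∀ j k : ℕ, ∫ x, φ x * (x 0 : ℂ) ^ j * (x 1 : ℂ) ^ k = 0) : ∀ x, φ x = 0 := by
  have hi : ∀ j k : ℕ, Integrable (fun x => φ x * (x 0 : ℂ) ^ j * (x 1 : ℂ) ^ k) := fun j k =>
    Continuous.integrable_of_hasCompactSupport (by fun_prop) (hc.mul_right.mul_right)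
  intro x
  apply Complex.ext
  · refine real_mom_zero (fun x => (φ x).re) (by fun_prop) (hc.comp_left (g := Complex.re) rfl) ?_ x
    intro j k
    have := congrArg Complex.re (hm j k)
    have h2 := integral_re (hi j k)
    simp only [RCLike.re_to_complex] at h2
    rw [← h2] at this
    rw [← Complex.zero_re, ← this]
    congr 1; ext x
    rw [← Complex.ofReal_pow, ← Complex.ofReal_pow, Complex.re_mul_ofReal, Complex.re_mul_ofReal]
  · refine real_mom_zero (fun x => (φ x).im) (by fun_prop) (hc.comp_left (g := Complex.im) rfl) ?_ x
    intro j k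
    have := congrArg Complex.im (hm j k)
    have h2 := integral_im (hi j k)
    simp only [RCLike.im_to_complex] at h2
    rw [← h2] at this
    rw [← Complex.zero_im, ← this]
    congr 1; ext x
    rw [← Complex.ofReal_pow, ← Complex.ofReal_pow, Complex.im_mul_ofReal, Complex.im_mul_ofReal]
end

section
open Set Filter Topology Metric Function MeasureTheory

noncomputable def Zx (ε : ℝ) {F : Type*} [Zero F] (f : (Fin 3 → ℝ) → F) : (Fin 3 → ℝ) → F :=
  fun x => if 0 < ε * x 0 then f x else 0

def Om (ε δ : ℝ) : Set (Fin 3 → ℝ) := {x | x 1 ^ 2 + x 2 ^ 2 + ε * x 0 < δ}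

noncomputable def Ph (ε t : ℝ) (y : Fin 2 → ℝ) : Fin 3 → ℝ :=
  ![ε * (t - y 0 ^ 2 - y 1 ^ 2), y 0, y 1]

noncomputable def Mo (ε : ℝ) (F : (Fin 3 → ℝ) → ℂ) (j k : ℕ) (t : ℝ) : ℂ :=
  ∫ y : Fin 2 → ℝ, F (Ph ε t y) * (y 0 : ℂ) ^ j * (y 1 : ℂ) ^ k

def GoodF (ε δ : ℝ) (F : (Fin 3 → ℝ) → ℂ) : Prop :=
  ContinuousOn F (Om ε δ) ∧ ∀ x, ε * x 0 ≤ 0 → F x = 0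

theorem om_open (ε δ : ℝ) : IsOpen (Om ε δ) :=
  isOpen_lt (by fun_prop) continuous_const

theorem ph_mem {ε δ t : ℝ} (hε : ε * ε = 1) (ht : t < δ) (y : Fin 2 → ℝ) : Ph ε t y ∈ Om ε δ := by
  simp only [Om, Ph, mem_ofPred_eq, Matrix.cons_val]
  have : ε * (ε * (t - y 0 ^ 2 - y 1 ^ 2)) = t - y 0 ^ 2 - y 1 ^ 2 := by
    rw [← mul_assoc, hε, one_mul]
  linarith

theorem ph_cont (ε : ℝ) : Continuous (fun p : ℝ × (Fin 2 → ℝ) => Ph ε p.1 p.2) := by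
  refine continuous_pi fun i => ?_
  fin_cases i <;> simp [Ph] <;> fun_prop

theorem ph_zero {ε δ t : ℝ} (hε : ε * ε = 1) {F : (Fin 3 → ℝ) → ℂ} (hF : GoodF ε δ F)
    {y : Fin 2 → ℝ} (hy : t ≤ y 0 ^ 2 + y 1 ^ 2) : F (Ph ε t y) = 0 := by
  apply hF.2
  simp only [Ph, Matrix.cons_val]
  rw [← mul_assoc, hε, one_mul]; linarith

theorem disc_compact (t : ℝ) : IsCompact {y : Fin 2 → ℝ | y 0 ^ 2 + y 1 ^ 2 ≤ t} := by
  refine isCompact_of_isClosed_isBounded (isClosed_le (by fun_prop) continuous_const) ?_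
  refine isBounded_closedBall.subset (s := _) (t := closedBall 0 (|t| + 1)) ?_
  intro y hy
  rw [mem_closedBall_zero_iff, pi_norm_le_iff_of_nonneg (by positivity)]
  have hy' : y 0 ^ 2 + y 1 ^ 2 ≤ t := hy
  have ht := le_abs_self t
  intro i
  rw [Real.norm_eq_abs]
  fin_cases i
  · apply abs_le_of_sq_le_sq _ (by positivity)
    simp only [Fin.zero_eta]
    nlinarith [sq_nonneg (y 1), abs_nonneg t]
  · apply abs_le_of_sq_le_sq _ (by positivity)
    simp only [Fin.mk_one]
    nlinarith [sq_nonneg (y 0), abs_nonneg t]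

theorem good_cont {ε δ t : ℝ} (hε : ε * ε = 1) (ht : t < δ) {F : (Fin 3 → ℝ) → ℂ}
    (hF : GoodF ε δ F) : Continuous (fun y => F (Ph ε t y)) :=
  hF.1.comp_continuous ((ph_cont ε).comp (by fun_prop : Continuous fun y => (t, y)))
    (fun y => ph_mem hε ht y)

theorem good_cs {ε δ t : ℝ} (hε : ε * ε = 1) {F : (Fin 3 → ℝ) → ℂ}
    (hF : GoodF ε δ F) : HasCompactSupport (fun y => F (Ph ε t y)) := by
  refine HasCompactSupport.intro (disc_compact t) ?_
  intro y hy
  simp only [mem_ofPred_eq, not_le] at hy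
  exact ph_zero hε hF hy.le

theorem good_int {ε δ t : ℝ} (hε : ε * ε = 1) (ht : t < δ) {F : (Fin 3 → ℝ) → ℂ}
    (hF : GoodF ε δ F) (j k : ℕ) :
    Integrable (fun y : Fin 2 → ℝ => F (Ph ε t y) * (y 0 : ℂ) ^ j * (y 1 : ℂ) ^ k) := by
  have := good_cont hε ht hF
  exact Continuous.integrable_of_hasCompactSupport
    ((this.mul (by fun_prop)).mul (by fun_prop)) (good_cs hε hF).mul_right.mul_right

theorem ph_deriv_t (ε t : ℝ) (y : Fin 2 → ℝ) :
    HasDerivAt (fun s => Ph ε s y) (ε • Pi.single 0 1) t := by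
  rw [hasDerivAt_pi]
  intro i
  fin_cases i
  · simpa [Ph] using ((((hasDerivAt_id t).sub_const (y 0 ^ 2)).sub_const (y 1 ^ 2)).const_mul ε)
  · simpa [Ph] using hasDerivAt_const t (y 0)
  · simpa [Ph] using hasDerivAt_const t (y 1)

theorem good_unif {ε δ T : ℝ} (hε : ε * ε = 1) (hT : T < δ) (a : ℝ) {F : (Fin 3 → ℝ) → ℂ}
    (hF : GoodF ε δ F) : ∃ M ≥ 0, ∀ t ∈ Icc a T, ∀ y, ‖F (Ph ε t y)‖ ≤ M := by
  have hc : IsCompact (Icc a T ×ˢ {y : Fin 2 → ℝ | y 0 ^ 2 + y 1 ^ 2 ≤ T}) :=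
    isCompact_Icc.prod (disc_compact T)
  have hcon : ContinuousOn (fun p : ℝ × (Fin 2 → ℝ) => F (Ph ε p.1 p.2))
      (Icc a T ×ˢ {y : Fin 2 → ℝ | y 0 ^ 2 + y 1 ^ 2 ≤ T}) :=
    hF.1.comp (ph_cont ε).continuousOn (fun p hp => ph_mem hε (hp.1.2.trans_lt hT) _)
  obtain ⟨M, hM⟩ := hc.exists_bound_of_continuousOn hcon
  refine ⟨max M 0, le_max_right _ _, fun t ht y => ?_⟩
  by_cases hy : y 0 ^ 2 + y 1 ^ 2 ≤ T
  · exact (hM (t, y) ⟨ht, hy⟩).trans (le_max_left _ _)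
  · rw [ph_zero hε hF (by linarith [ht.2]), norm_zero]; exact le_max_right _ _

theorem mo_deriv {ε δ t : ℝ} (hε : ε * ε = 1) (ht : t < δ) {F G : (Fin 3 → ℝ) → ℂ}
    {F' : (Fin 3 → ℝ) → (Fin 3 → ℝ) →L[ℝ] ℂ} (hF : GoodF ε δ F) (hG : GoodF ε δ G)
    (hF' : ∀ x ∈ Om ε δ, HasFDerivAt F (F' x) x) (hFG : ∀ x ∈ Om ε δ, F' x (Pi.single 0 1) = G x)
    (j k : ℕ) : HasDerivAt (Mo ε F j k) (ε * Mo ε G j k t) t := by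
  obtain ⟨T, htT, hTδ⟩ := exists_between ht
  obtain ⟨M, hM0, hM⟩ := good_unif hε hTδ (t - 1) hG
  obtain ⟨M', hM'⟩ := (disc_compact T).exists_bound_of_continuousOn
    (f := fun y : Fin 2 → ℝ => (y 0 : ℂ) ^ j * (y 1 : ℂ) ^ k) (by fun_prop)
  have hε1 : |ε| = 1 := by
    have : |ε| * |ε| = 1 := by rw [← abs_mul, hε, abs_one]
    nlinarith [abs_nonneg ε]
  have key := (hasDerivAt_integral_of_dominated_loc_of_deriv_le (μ := volume) (x₀ := t)
    (s := Ioo (t - 1) T)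
    (F := fun s (y : Fin 2 → ℝ) => F (Ph ε s y) * (y 0 : ℂ) ^ j * (y 1 : ℂ) ^ k)
    (F' := fun s (y : Fin 2 → ℝ) => (ε : ℂ) * (G (Ph ε s y) * (y 0 : ℂ) ^ j * (y 1 : ℂ) ^ k))
    (bound := indicator {y : Fin 2 → ℝ | y 0 ^ 2 + y 1 ^ 2 ≤ T} (fun _ => M * M'))
    (Ioo_mem_nhds (by linarith) htT)
    ?_ (good_int hε ht hF j k) ((good_int hε ht hG j k).const_mul _).aestronglyMeasurable
    ?_ ?_ ?_).2
  · rw [integral_const_mul] at key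
    exact key
  · filter_upwards [Ioo_mem_nhds (by linarith : t - 1 < t) htT] with s hs
    exact (good_int hε (hs.2.trans hTδ) hF j k).aestronglyMeasurable
  · refine Eventually.of_forall fun y s hs => ?_
    by_cases hy : y ∈ {y : Fin 2 → ℝ | y 0 ^ 2 + y 1 ^ 2 ≤ T}
    · rw [indicator_of_mem hy, norm_mul, Complex.norm_real, Real.norm_eq_abs, hε1, one_mul,
        mul_assoc, norm_mul]
      gcongr
      · exact hM s (Ioo_subset_Icc_self hs) y
      · exact hM' y hy
    · rw [indicator_of_notMem hy]
      simp only [mem_ofPred_eq, not_le] at hy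
      rw [ph_zero hε hG (by linarith [hs.2])]
      simp
  · exact (integrable_indicator_iff (disc_compact T).measurableSet).mpr
      (integrableOn_const (disc_compact T).measure_lt_top.ne)
  · refine Eventually.of_forall fun y s hs => ?_
    have hm := ph_mem hε (hs.2.trans hTδ) y
    have h1 := (hF' _ hm).comp_hasDerivAt s (ph_deriv_t ε s y)
    rw [map_smul, hFG _ hm] at h1
    refine ((h1.mul_const _).mul_const _).congr_deriv ?_
    simp [Complex.real_smul]; ring

noncomputable def dPh (ε : ℝ) (y : Fin 2 → ℝ) : (Fin 2 → ℝ) →L[ℝ] (Fin 3 → ℝ) :=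
  ContinuousLinearMap.pi ![(-2 * ε * y 0) • ContinuousLinearMap.proj 0
    + (-2 * ε * y 1) • ContinuousLinearMap.proj 1,
    ContinuousLinearMap.proj 0, ContinuousLinearMap.proj 1]

theorem ph_fderiv (ε t : ℝ) (y : Fin 2 → ℝ) : HasFDerivAt (fun y => Ph ε t y) (dPh ε y) y := by
  rw [hasFDerivAt_pi']
  have h0 : HasFDerivAt (fun y : Fin 2 → ℝ => y 0) (ContinuousLinearMap.proj (R := ℝ) 0) y :=
    hasFDerivAt_apply 0 y
  have h1 : HasFDerivAt (fun y : Fin 2 → ℝ => y 1) (ContinuousLinearMap.proj (R := ℝ) 1) y :=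
    hasFDerivAt_apply 1 y
  intro i
  fin_cases i
  · have := ((((h0.pow 2).const_sub t).sub (h1.pow 2)).const_mul ε)
    refine this.congr_fderiv ?_
    ext v
    simp [dPh]; ring
  · exact h0
  · exact h1

theorem dPh_single0 (ε : ℝ) (y : Fin 2 → ℝ) :
    dPh ε y (Pi.single 0 1) = Pi.single 1 1 - (2 * ε * y 0) • Pi.single 0 1 := by
  ext i; fin_cases i <;> simp [dPh]

theorem dPh_single1 (ε : ℝ) (y : Fin 2 → ℝ) :
    dPh ε y (Pi.single 1 1) = Pi.single 2 1 - (2 * ε * y 1) • Pi.single 0 1 := by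
  ext i; fin_cases i <;> simp [dPh]

/-- integration by parts for moments, first spatial direction -/
theorem mo_parts0 {ε δ t : ℝ} (hε : ε * ε = 1) (ht : t < δ) {F G G1 : (Fin 3 → ℝ) → ℂ}
    {F' : (Fin 3 → ℝ) → (Fin 3 → ℝ) →L[ℝ] ℂ} (hF : GoodF ε δ F) (hG : GoodF ε δ G)
    (hG1 : GoodF ε δ G1)
    (hF' : ∀ x ∈ Om ε δ, HasFDerivAt F (F' x) x) (hFG : ∀ x ∈ Om ε δ, F' x (Pi.single 0 1) = G x)
    (hFG1 : ∀ x ∈ Om ε δ, F' x (Pi.single 1 1) = G1 x) (j k : ℕ) :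
    Mo ε G1 j k t = 2 * ε * Mo ε G (j + 1) k t - j * Mo ε F (j - 1) k t := by
  have hd : ∀ y, HasFDerivAt (fun y => F (Ph ε t y)) ((F' (Ph ε t y)).comp (dPh ε y)) y := fun y =>
    (hF' _ (ph_mem hε ht y)).comp y (ph_fderiv ε t y)
  have hp : ∀ y : Fin 2 → ℝ, HasFDerivAt (fun y : Fin 2 → ℝ => (y 0 : ℂ) ^ j * (y 1 : ℂ) ^ k)
      (fderiv ℝ (fun y : Fin 2 → ℝ => (y 0 : ℂ) ^ j * (y 1 : ℂ) ^ k) y) y := fun y =>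
    DifferentiableAt.hasFDerivAt (by fun_prop)
  have hv : ∀ y : Fin 2 → ℝ, fderiv ℝ (fun y : Fin 2 → ℝ => (y 0 : ℂ) ^ j * (y 1 : ℂ) ^ k) y
      (Pi.single 0 1) = j * (y 0 : ℂ) ^ (j - 1) * (y 1 : ℂ) ^ k := by
    intro y
    have h0 : HasFDerivAt (fun y : Fin 2 → ℝ => (y 0 : ℂ))
        (Complex.ofRealCLM.comp (ContinuousLinearMap.proj (R := ℝ) 0)) y :=
      Complex.ofRealCLM.hasFDerivAt.comp y (hasFDerivAt_apply 0 y)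
    have h1 : HasFDerivAt (fun y : Fin 2 → ℝ => (y 1 : ℂ))
        (Complex.ofRealCLM.comp (ContinuousLinearMap.proj (R := ℝ) 1)) y :=
      Complex.ofRealCLM.hasFDerivAt.comp y (hasFDerivAt_apply 1 y)
    have h2 : HasFDerivAt (fun y : Fin 2 → ℝ => (y 0 : ℂ) ^ j * (y 1 : ℂ) ^ k) _ y :=
      (h0.pow j).mul (h1.pow k)
    rw [h2.fderiv]
    simp; try ring
  have e1 : ∀ y, ((F' (Ph ε t y)).comp (dPh ε y)) (Pi.single 0 1)
      = G1 (Ph ε t y) - 2 * ε * y 0 * G (Ph ε t y) := by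
    intro y
    rw [ContinuousLinearMap.comp_apply, dPh_single0, map_sub, map_smul, hFG _ (ph_mem hε ht y),
      hFG1 _ (ph_mem hε ht y), Complex.real_smul]
    push_cast; ring
  have iG1 := good_int hε ht hG1 j k
  have iG := (good_int hε ht hG (j + 1) k).const_mul (2 * ε : ℂ)
  have iF := (good_int hε ht hF (j - 1) k).const_mul (j : ℂ)
  have E1 : (fun y : Fin 2 → ℝ => (G1 (Ph ε t y) - 2 * ε * y 0 * G (Ph ε t y)) *
      ((y 0 : ℂ) ^ j * (y 1 : ℂ) ^ k)) = fun y : Fin 2 → ℝ =>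
      G1 (Ph ε t y) * (y 0 : ℂ) ^ j * (y 1 : ℂ) ^ k
      - (2 * ε : ℂ) * (G (Ph ε t y) * (y 0 : ℂ) ^ (j + 1) * (y 1 : ℂ) ^ k) := by
    ext y; ring
  have E2 : (fun y : Fin 2 → ℝ => F (Ph ε t y) * (j * (y 0 : ℂ) ^ (j - 1) * (y 1 : ℂ) ^ k))
      = fun y : Fin 2 → ℝ => (j : ℂ) * (F (Ph ε t y) * (y 0 : ℂ) ^ (j - 1) * (y 1 : ℂ) ^ k) := by
    ext y; ring
  have key := integral_bilinear_hasFDerivAt_right_eq_neg_left_of_integrable (μ := volume)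
    (v := Pi.single 0 1)
    (B := ContinuousLinearMap.mul ℝ ℂ) (f := fun y => F (Ph ε t y))
    (f' := fun y => (F' (Ph ε t y)).comp (dPh ε y))
    (g := fun y : Fin 2 → ℝ => (y 0 : ℂ) ^ j * (y 1 : ℂ) ^ k) (g' := fun y =>
      (fderiv ℝ (fun y : Fin 2 → ℝ => (y 0 : ℂ) ^ j * (y 1 : ℂ) ^ k) y))
    (by simp only [e1, ContinuousLinearMap.mul_apply']; rw [E1]; exact iG1.sub iG)
    (by simp only [hv, ContinuousLinearMap.mul_apply']; rw [E2]; exact iF)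
    (by simp only [ContinuousLinearMap.mul_apply']; simpa only [mul_assoc] using good_int hε ht hF j k)
    (fun y _ => hd y) (fun y _ => hp y)
  simp only [e1, hv, ContinuousLinearMap.mul_apply'] at key
  rw [E1, E2, integral_sub iG1 iG, integral_const_mul, integral_const_mul] at key
  simp only [Mo]
  linear_combination key

theorem mo_parts1 {ε δ t : ℝ} (hε : ε * ε = 1) (ht : t < δ) {F G G1 : (Fin 3 → ℝ) → ℂ}
    {F' : (Fin 3 → ℝ) → (Fin 3 → ℝ) →L[ℝ] ℂ} (hF : GoodF ε δ F) (hG : GoodF ε δ G)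
    (hG1 : GoodF ε δ G1)
    (hF' : ∀ x ∈ Om ε δ, HasFDerivAt F (F' x) x) (hFG : ∀ x ∈ Om ε δ, F' x (Pi.single 0 1) = G x)
    (hFG1 : ∀ x ∈ Om ε δ, F' x (Pi.single 2 1) = G1 x) (j k : ℕ) :
    Mo ε G1 j k t = 2 * ε * Mo ε G j (k + 1) t - k * Mo ε F j (k - 1) t := by
  have hd : ∀ y, HasFDerivAt (fun y => F (Ph ε t y)) ((F' (Ph ε t y)).comp (dPh ε y)) y := fun y =>
    (hF' _ (ph_mem hε ht y)).comp y (ph_fderiv ε t y)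
  have hp : ∀ y : Fin 2 → ℝ, HasFDerivAt (fun y : Fin 2 → ℝ => (y 0 : ℂ) ^ j * (y 1 : ℂ) ^ k)
      (fderiv ℝ (fun y : Fin 2 → ℝ => (y 0 : ℂ) ^ j * (y 1 : ℂ) ^ k) y) y := fun y =>
    DifferentiableAt.hasFDerivAt (by fun_prop)
  have hv : ∀ y : Fin 2 → ℝ, fderiv ℝ (fun y : Fin 2 → ℝ => (y 0 : ℂ) ^ j * (y 1 : ℂ) ^ k) y
      (Pi.single 1 1) = k * (y 0 : ℂ) ^ j * (y 1 : ℂ) ^ (k - 1) := by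
    intro y
    have h0 : HasFDerivAt (fun y : Fin 2 → ℝ => (y 0 : ℂ))
        (Complex.ofRealCLM.comp (ContinuousLinearMap.proj (R := ℝ) 0)) y :=
      Complex.ofRealCLM.hasFDerivAt.comp y (hasFDerivAt_apply 0 y)
    have h1 : HasFDerivAt (fun y : Fin 2 → ℝ => (y 1 : ℂ))
        (Complex.ofRealCLM.comp (ContinuousLinearMap.proj (R := ℝ) 1)) y :=
      Complex.ofRealCLM.hasFDerivAt.comp y (hasFDerivAt_apply 1 y)
    have h2 : HasFDerivAt (fun y : Fin 2 → ℝ => (y 0 : ℂ) ^ j * (y 1 : ℂ) ^ k) _ y :=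
      (h0.pow j).mul (h1.pow k)
    rw [h2.fderiv]
    simp; try ring
  have e1 : ∀ y, ((F' (Ph ε t y)).comp (dPh ε y)) (Pi.single 1 1)
      = G1 (Ph ε t y) - 2 * ε * y 1 * G (Ph ε t y) := by
    intro y
    rw [ContinuousLinearMap.comp_apply, dPh_single1, map_sub, map_smul, hFG _ (ph_mem hε ht y),
      hFG1 _ (ph_mem hε ht y), Complex.real_smul]
    push_cast; ring
  have iG1 := good_int hε ht hG1 j k
  have iG := (good_int hε ht hG j (k + 1)).const_mul (2 * ε : ℂ)
  have iF := (good_int hε ht hF j (k - 1)).const_mul (k : ℂ)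
  have E1 : (fun y : Fin 2 → ℝ => (G1 (Ph ε t y) - 2 * ε * y 1 * G (Ph ε t y)) *
      ((y 0 : ℂ) ^ j * (y 1 : ℂ) ^ k)) = fun y : Fin 2 → ℝ =>
      G1 (Ph ε t y) * (y 0 : ℂ) ^ j * (y 1 : ℂ) ^ k
      - (2 * ε : ℂ) * (G (Ph ε t y) * (y 0 : ℂ) ^ j * (y 1 : ℂ) ^ (k + 1)) := by
    ext y; ring
  have E2 : (fun y : Fin 2 → ℝ => F (Ph ε t y) * (k * (y 0 : ℂ) ^ j * (y 1 : ℂ) ^ (k - 1)))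
      = fun y : Fin 2 → ℝ => (k : ℂ) * (F (Ph ε t y) * (y 0 : ℂ) ^ j * (y 1 : ℂ) ^ (k - 1)) := by
    ext y; ring
  have key := integral_bilinear_hasFDerivAt_right_eq_neg_left_of_integrable (μ := volume)
    (v := Pi.single 1 1)
    (B := ContinuousLinearMap.mul ℝ ℂ) (f := fun y => F (Ph ε t y))
    (f' := fun y => (F' (Ph ε t y)).comp (dPh ε y))
    (g := fun y : Fin 2 → ℝ => (y 0 : ℂ) ^ j * (y 1 : ℂ) ^ k) (g' := fun y =>
      (fderiv ℝ (fun y : Fin 2 → ℝ => (y 0 : ℂ) ^ j * (y 1 : ℂ) ^ k) y))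
    (by simp only [e1, ContinuousLinearMap.mul_apply']; rw [E1]; exact iG1.sub iG)
    (by simp only [hv, ContinuousLinearMap.mul_apply']; rw [E2]; exact iF)
    (by simp only [ContinuousLinearMap.mul_apply']; simpa only [mul_assoc] using good_int hε ht hF j k)
    (fun y _ => hd y) (fun y _ => hp y)
  simp only [e1, hv, ContinuousLinearMap.mul_apply'] at key
  rw [E1, E2, integral_sub iG1 iG, integral_const_mul, integral_const_mul] at key
  simp only [Mo]
  linear_combination key

/-- a priori bound for moments -/
theorem mo_bound {ε δ T K : ℝ} (hε : ε * ε = 1) (hT : T < δ) (hK : 0 < K) {F : (Fin 3 → ℝ) → ℂ}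
    (hF : GoodF ε δ F) : ∃ N ≥ 0, ∀ j k, ∀ t ∈ Icc 0 T,
      ‖Mo ε F j k t‖ ≤ N * (1 / K + K * t) ^ (j + k) := by
  obtain ⟨M, hM0, hM⟩ := good_unif hε hT 0 hF
  refine ⟨M * (volume {y : Fin 2 → ℝ | y 0 ^ 2 + y 1 ^ 2 ≤ T}).toReal, by positivity, ?_⟩
  intro j k t ht
  have hr : ∀ z : ℝ, z ^ 2 ≤ t → |z| ≤ 1 / K + K * t := by
    intro z hz
    have ht0 := ht.1
    apply abs_le_of_sq_le_sq _ (by positivity)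
    have : (1 / K + K * t) ^ 2 = (1 / K) ^ 2 + 2 * t + (K * t) ^ 2 := by
      field_simp; ring
    nlinarith [sq_nonneg (1 / K), sq_nonneg (K * t)]
  have h0 : 0 ≤ 1 / K + K * t := (abs_nonneg (0:ℝ)).trans (hr 0 (by simpa using ht.1))
  have hset : Mo ε F j k t = ∫ y in {y : Fin 2 → ℝ | y 0 ^ 2 + y 1 ^ 2 ≤ T},
      F (Ph ε t y) * (y 0 : ℂ) ^ j * (y 1 : ℂ) ^ k := by
    rw [setIntegral_eq_integral_of_forall_compl_eq_zero]
    · rfl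
    · intro y hy
      simp only [mem_ofPred_eq, not_le] at hy
      rw [ph_zero hε hF (by linarith [ht.2])]; simp
  rw [hset]
  refine (norm_setIntegral_le_of_norm_le_const (C := M * (1 / K + K * t) ^ (j + k))
    (disc_compact T).measure_lt_top ?_).trans (le_of_eq ?_)
  · intro y hy
    by_cases hy' : t ≤ y 0 ^ 2 + y 1 ^ 2
    · rw [ph_zero hε hF hy', zero_mul, zero_mul, norm_zero]
      exact mul_nonneg hM0 (pow_nonneg h0 _)
    · rw [norm_mul, norm_mul, norm_pow, norm_pow, Complex.norm_real, Complex.norm_real, pow_add,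
        mul_assoc]
      gcongr
      · exact hM t ht y
      · exact hr _ (by nlinarith [sq_nonneg (y 1)])
      · exact hr _ (by nlinarith [sq_nonneg (y 0)])
  · rw [Measure.real]; ring
end

section
open Set Filter Topology Metric Function MeasureTheory

theorem dset_open (δ : ℝ) : IsOpen (Dset δ) :=
  isOpen_lt (by fun_prop) continuous_const

theorem clm_pi_ext {n : ℕ} {L M : (Fin n → ℝ) →L[ℝ] ℂ}
    (h : ∀ j, L (Pi.single j 1) = M (Pi.single j 1)) : L = M := by
  apply ContinuousLinearMap.coe_injective
  refine LinearMap.pi_ext' fun i => LinearMap.ext_ring ?_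
  simpa using h i

theorem pd_contDiffOn {n : ℕ} {m k : WithTop ℕ∞} {f : (Fin n → ℝ) → ℂ} {U : Set (Fin n → ℝ)}
    (hf : ContDiffOn ℝ k f U) (hU : IsOpen U) (hm : m + 1 ≤ k) (j : Fin n) :
    ContDiffOn ℝ m (pd j f) U :=
  (hf.fderiv_of_isOpen hU hm).clm_apply contDiffOn_const

theorem pd_pd {n : ℕ} {f : (Fin n → ℝ) → ℂ} {x : Fin n → ℝ} (hf : ContDiffAt ℝ 2 f x)
    (i j : Fin n) : pd i (pd j f) x = fderiv ℝ (fderiv ℝ f) x (Pi.single i 1) (Pi.single j 1) := by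
  have hd : DifferentiableAt ℝ (fderiv ℝ f) x :=
    (hf.fderiv_right (m := 1) (by norm_num)).differentiableAt (by norm_num)
  have : pd j f = fun y => (fderiv ℝ f y) (Pi.single j 1) := rfl
  rw [pd, this, fderiv_clm_apply hd (differentiableAt_const _)]
  simp

theorem pd_symm {n : ℕ} {f : (Fin n → ℝ) → ℂ} {x : Fin n → ℝ} (hf : ContDiffAt ℝ 2 f x)
    (i j : Fin n) : pd i (pd j f) x = pd j (pd i f) x := by
  rw [pd_pd hf, pd_pd hf]
  exact (hf.isSymmSndFDerivAt (by simp)).eq _ _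

theorem pd_tangential {δ : ℝ} {f : (Fin 3 → ℝ) → ℂ} (h0 : ∀ x ∈ Dset δ, x 0 = 0 → f x = 0)
    {x : Fin 3 → ℝ} (hx : x ∈ Dset δ) (hx0 : x 0 = 0) (hd : DifferentiableAt ℝ f x)
    {j : Fin 3} (hj : j ≠ 0) : pd j f x = 0 := by
  have hl : HasDerivAt (fun s : ℝ => x + s • (Pi.single j 1 : Fin 3 → ℝ)) (Pi.single j 1) 0 := by
    simpa using ((hasDerivAt_id (0:ℝ)).smul_const (Pi.single j 1 : Fin 3 → ℝ)).const_add x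
  have hd' : HasFDerivAt f (fderiv ℝ f x) (x + (0:ℝ) • (Pi.single j 1 : Fin 3 → ℝ)) := by
    simpa using hd.hasFDerivAt
  have h1 := hd'.comp_hasDerivAt (0:ℝ) hl
  have h2 : (f ∘ fun s : ℝ => x + s • (Pi.single j 1 : Fin 3 → ℝ)) =ᶠ[𝓝 0] fun _ => 0 := by
    have hm : ∀ᶠ s : ℝ in 𝓝 0, x + s • (Pi.single j 1 : Fin 3 → ℝ) ∈ Dset δ := by
      refine hl.continuousAt.eventually ((dset_open δ).mem_nhds ?_)
      simpa using hx
    filter_upwards [hm] with s hs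
    refine h0 _ hs ?_
    simp [hx0, Pi.single_eq_of_ne hj.symm]
  exact h1.unique ((hasDerivAt_const (0:ℝ) (0:ℂ)).congr_of_eventuallyEq h2)

theorem om_dset {ε δ : ℝ} (hε : ε * ε = 1) {x : Fin 3 → ℝ} (hx : x ∈ Om ε δ) (h : 0 ≤ ε * x 0) :
    x ∈ Dset δ := by
  have hε1 : |ε| = 1 := by
    have : |ε| * |ε| = 1 := by rw [← abs_mul, hε, abs_one]
    nlinarith [abs_nonneg ε]
  have : |x 0| = ε * x 0 := by
    rw [← abs_of_nonneg h, abs_mul, hε1, one_mul]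
  have hx' : x 1 ^ 2 + x 2 ^ 2 + ε * x 0 < δ := hx
  change x 1 ^ 2 + x 2 ^ 2 + |x 0| < δ
  rw [this]; exact hx'

theorem zx_pos {ε : ℝ} {F : Type*} [Zero F] {f : (Fin 3 → ℝ) → F} {x : Fin 3 → ℝ}
    (h : 0 < ε * x 0) : Zx ε f x = f x := if_pos h

theorem zx_neg {ε : ℝ} {F : Type*} [Zero F] {f : (Fin 3 → ℝ) → F} {x : Fin 3 → ℝ}
    (h : ε * x 0 ≤ 0) : Zx ε f x = 0 := if_neg (not_lt.mpr h)

theorem zx_norm_le {ε : ℝ} {f : (Fin 3 → ℝ) → ℂ} (x : Fin 3 → ℝ) : ‖Zx ε f x‖ ≤ ‖f x‖ := by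
  unfold Zx; split_ifs
  · exact le_rfl
  · simp

theorem zx_ev_pos {ε : ℝ} {F : Type*} [Zero F] (f : (Fin 3 → ℝ) → F) {x : Fin 3 → ℝ}
    (h : 0 < ε * x 0) : Zx ε f =ᶠ[𝓝 x] f := by
  have : ∀ᶠ y : Fin 3 → ℝ in 𝓝 x, 0 < ε * y 0 :=
    (by fun_prop : Continuous fun y : Fin 3 → ℝ => ε * y 0).continuousAt.eventually_const_lt h
  filter_upwards [this] with y hy using zx_pos hy

theorem zx_ev_neg {ε : ℝ} {F : Type*} [Zero F] (f : (Fin 3 → ℝ) → F) {x : Fin 3 → ℝ}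
    (h : ε * x 0 < 0) : Zx ε f =ᶠ[𝓝 x] fun _ => 0 := by
  have : ∀ᶠ y : Fin 3 → ℝ in 𝓝 x, ε * y 0 < 0 :=
    (by fun_prop : Continuous fun y : Fin 3 → ℝ => ε * y 0).continuousAt.eventually_lt_const h
  filter_upwards [this] with y hy using zx_neg hy.le

theorem plane_of {ε : ℝ} (hε : ε * ε = 1) {x : Fin 3 → ℝ} (h : ε * x 0 = 0) : x 0 = 0 := by
  rcases mul_eq_zero.mp h with h | h
  · rw [h] at hε; norm_num at hε
  · exact h

theorem zx_good {ε δ : ℝ} (hε : ε * ε = 1) {f : (Fin 3 → ℝ) → ℂ} (hf : ContinuousOn f (Dset δ))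
    (h0 : ∀ x ∈ Dset δ, x 0 = 0 → f x = 0) : GoodF ε δ (Zx ε f) := by
  refine ⟨fun x hx => ContinuousAt.continuousWithinAt ?_, fun x hx => zx_neg hx⟩
  rcases lt_trichotomy (ε * x 0) 0 with h | h | h
  · exact (continuousAt_const (y := (0:ℂ))).congr (zx_ev_neg f h).symm
  · have hxD := om_dset hε hx h.ge
    have hfx := h0 x hxD (plane_of hε h)
    have hc := hf.continuousAt ((dset_open δ).mem_nhds hxD)
    rw [ContinuousAt, hfx] at hc
    rw [ContinuousAt, zx_neg h.le]
    exact squeeze_zero_norm zx_norm_le (by simpa using hc.norm)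
  · have hxD := om_dset hε hx h.le
    exact (hf.continuousAt ((dset_open δ).mem_nhds hxD)).congr (zx_ev_pos f h).symm

theorem zx_fderiv {ε δ : ℝ} (hε : ε * ε = 1) {f : (Fin 3 → ℝ) → ℂ}
    (hf : ∀ x ∈ Dset δ, DifferentiableAt ℝ f x)
    (h0 : ∀ x ∈ Dset δ, x 0 = 0 → f x = 0) (h1 : ∀ i, ∀ x ∈ Dset δ, x 0 = 0 → pd i f x = 0) :
    ∀ x ∈ Om ε δ, HasFDerivAt (Zx ε f) (Zx ε (fderiv ℝ f) x) x := by
  intro x hx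
  rcases lt_trichotomy (ε * x 0) 0 with h | h | h
  · rw [zx_neg h.le]
    exact (hasFDerivAt_const (0:ℂ) x).congr_of_eventuallyEq (zx_ev_neg f h)
  · have hxD := om_dset hε hx h.ge
    have hx0 := plane_of hε h
    have hfx := h0 x hxD hx0
    have hf' : fderiv ℝ f x = 0 := clm_pi_ext fun j => h1 j x hxD hx0
    have hd := (hf x hxD).hasFDerivAt
    rw [hf', hasFDerivAt_iff_isLittleO] at hd
    rw [zx_neg h.le, hasFDerivAt_iff_isLittleO, zx_neg h.le]
    simp only [hfx, sub_zero, _root_.zero_apply] at hd ⊢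
    exact (Asymptotics.IsBigO.of_bound' (Eventually.of_forall zx_norm_le)).trans_isLittleO hd
  · have hxD := om_dset hε hx h.le
    rw [zx_pos h]
    exact (hf x hxD).hasFDerivAt.congr_of_eventuallyEq (zx_ev_pos f h)

theorem zx_fderiv_pd (ε : ℝ) (f : (Fin 3 → ℝ) → ℂ) (i : Fin 3) (x : Fin 3 → ℝ) :
    Zx ε (fderiv ℝ f) x (Pi.single i 1) = Zx ε (pd i f) x := by
  unfold Zx; split_ifs
  · rfl
  · rfl
end

section
open Set Filter Topology Metric Function MeasureTheory

theorem mo_congr {ε δ t : ℝ} (hε : ε * ε = 1) (ht : t < δ) {F G : (Fin 3 → ℝ) → ℂ}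
    (h : ∀ x ∈ Om ε δ, F x = G x) (j k : ℕ) : Mo ε F j k t = Mo ε G j k t := by
  unfold Mo; congr 1; ext y; rw [h _ (ph_mem hε ht y)]

theorem mo_lin {ε δ t : ℝ} (hε : ε * ε = 1) (ht : t < δ)
    {G G20 G11 G22 F0 F1 F2 : (Fin 3 → ℝ) → ℂ} {c0 c1 c2 : ℂ}
    (h20 : GoodF ε δ G20) (h11 : GoodF ε δ G11) (h22 : GoodF ε δ G22)
    (h0 : GoodF ε δ F0) (h1 : GoodF ε δ F1) (h2 : GoodF ε δ F2)
    (h : ∀ x ∈ Om ε δ, G x = 2 * (x 1 : ℂ) * G20 x + G11 x + (x 1 : ℂ) ^ 3 * G22 x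
      - c0 * F0 x - c1 * F1 x - c2 * F2 x) (j k : ℕ) :
    Mo ε G j k t = 2 * Mo ε G20 (j + 1) k t + Mo ε G11 j k t + Mo ε G22 (j + 3) k t
      - c0 * Mo ε F0 j k t - c1 * Mo ε F1 j k t - c2 * Mo ε F2 j k t := by
  have i1 := (good_int hε ht h20 (j + 1) k).const_mul 2
  have i2 := good_int hε ht h11 j k
  have i3 := good_int hε ht h22 (j + 3) k
  have i4 := (good_int hε ht h0 j k).const_mul c0
  have i5 := (good_int hε ht h1 j k).const_mul c1
  have i6 := (good_int hε ht h2 j k).const_mul c2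
  have ad : ∀ {f g : (Fin 2 → ℝ) → ℂ}, Integrable f → Integrable g →
    Integrable (fun a => f a + g a) := fun hf hg => hf.add hg
  have su : ∀ {f g : (Fin 2 → ℝ) → ℂ}, Integrable f → Integrable g →
    Integrable (fun a => f a - g a) := fun hf hg => hf.sub hg
  have k1 := ad i1 i2
  have k2 := ad k1 i3
  have k3 := su k2 i4
  have k4 := su k3 i5
  unfold Mo
  rw [← integral_const_mul, ← integral_const_mul, ← integral_const_mul, ← integral_const_mul,
    ← integral_add i1 i2, ← integral_add k1 i3, ← integral_sub k2 i4,
    ← integral_sub k3 i5, ← integral_sub k4 i6]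
  congr 1; ext y
  rw [h _ (ph_mem hε ht y)]
  simp only [Ph, Matrix.cons_val]
  ring

theorem uniq_half {b₀ b₁ b₂ : ℂ} {c K δ ε : ℝ} (hc : 0 ≤ c) (hK : 100 * (1 + c) ≤ K)
    (hδ : δ * K ^ 2 ≤ 1) (hb0 : ‖b₀‖ ≤ c) (hb1 : ‖b₁‖ ≤ c) (hb2 : ‖b₂‖ ≤ c) (hε : ε * ε = 1)
    {w : (Fin 3 → ℝ) → ℂ} (hw : ContDiffOn ℝ 2 w (Dset δ))
    (hP : ∀ x ∈ Dset δ, Pop b₀ b₁ b₂ w x = 0)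
    (hw0 : ∀ x ∈ Dset δ, x 0 = 0 → w x = 0) (hw1 : ∀ x ∈ Dset δ, x 0 = 0 → pd 0 w x = 0) :
    ∀ x ∈ Dset δ, 0 < ε * x 0 → w x = 0 := by
  have hO := dset_open δ
  have hKpos : 0 < K := by linarith
  have hwat : ∀ x ∈ Dset δ, ContDiffAt ℝ 2 w x := fun x hx => hw.contDiffAt (hO.mem_nhds hx)
  have hpdC : ∀ i, ContDiffOn ℝ 1 (pd i w) (Dset δ) := fun i =>
    pd_contDiffOn hw hO (by norm_num) i
  have hpdD : ∀ i, ∀ x ∈ Dset δ, DifferentiableAt ℝ (pd i w) x := fun i x hx =>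
    ((hpdC i).contDiffAt (hO.mem_nhds hx)).differentiableAt (by norm_num)
  have hwD : ∀ x ∈ Dset δ, DifferentiableAt ℝ w x := fun x hx =>
    (hwat x hx).differentiableAt (by norm_num)
  have hppC : ∀ i j, ContinuousOn (pd i (pd j w)) (Dset δ) := fun i j =>
    (pd_contDiffOn (m := 0) (hpdC j) hO (by norm_num) i).continuousOn
  have p1 : ∀ i, ∀ x ∈ Dset δ, x 0 = 0 → pd i w x = 0 := by
    intro i x hx hx0
    by_cases hi : i = 0
    · subst hi; exact hw1 x hx hx0
    · exact pd_tangential hw0 hx hx0 (hwD x hx) hi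
  have p2' : ∀ i j, i ≠ 0 → ∀ x ∈ Dset δ, x 0 = 0 → pd i (pd j w) x = 0 := by
    intro i j hi x hx hx0
    exact pd_tangential (p1 j) hx hx0 (hpdD j x hx) hi
  have p2 : ∀ i j, ∀ x ∈ Dset δ, x 0 = 0 → pd i (pd j w) x = 0 := by
    intro i j x hx hx0
    by_cases hi : i = 0
    · by_cases hj : j = 0
      · subst hi; subst hj
        have := hP x hx
        simp only [Pop, Pmod, p1 _ x hx hx0, p2' 2 0 (by decide) x hx hx0,
          p2' 1 1 (by decide) x hx hx0, p2' 2 2 (by decide) x hx hx0] at this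
        simpa using this
      · rw [pd_symm (hwat x hx)]; exact p2' j i hj x hx hx0
    · exact p2' i j hi x hx hx0
  have gw : GoodF ε δ (Zx ε w) := zx_good hε hw.continuousOn hw0
  have gp : ∀ i, GoodF ε δ (Zx ε (pd i w)) := fun i => zx_good hε (hpdC i).continuousOn (p1 i)
  have gpp : ∀ i j, GoodF ε δ (Zx ε (pd i (pd j w))) := fun i j => zx_good hε (hppC i j) (p2 i j)
  have dw := zx_fderiv hε hwD hw0 p1
  have dp : ∀ i, ∀ x ∈ Om ε δ, HasFDerivAt (Zx ε (pd i w)) (Zx ε (fderiv ℝ (pd i w)) x) x :=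
    fun i => zx_fderiv hε (hpdD i) (p1 i) (fun j => p2 j i)
  have hεC : (ε : ℂ) * ε = 1 := by exact_mod_cast hε
  have hε1 : ‖(ε : ℂ)‖ = 1 := by
    have : ‖(ε : ℂ)‖ * ‖(ε : ℂ)‖ = 1 := by rw [← norm_mul, hεC, norm_one]
    nlinarith [norm_nonneg (ε : ℂ)]
  intro x hx hx0
  set T := x 1 ^ 2 + x 2 ^ 2 + ε * x 0 with hT
  have hxO : T < δ := by
    have h1 : x 1 ^ 2 + x 2 ^ 2 + |x 0| < δ := hx
    have h2 : ε * x 0 ≤ |x 0| := by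
      have : |ε * x 0| = |x 0| := by
        have : |ε| = 1 := by simpa using hε1
        rw [abs_mul, this, one_mul]
      rw [← this]; exact le_abs_self _
    linarith
  have hT0 : 0 ≤ T := by positivity
  have hTK : T * K ^ 2 ≤ 1 := le_trans (by gcongr) hδ
  obtain ⟨N, hN0, hN⟩ := mo_bound hε hxO hKpos (gpp 0 0)
  have hZ0 : ∀ F, GoodF ε δ F → ∀ j k, Mo ε F j k 0 = 0 := by
    intro F hF j k
    unfold Mo
    have : ∀ y : Fin 2 → ℝ, F (Ph ε 0 y) = 0 := fun y => ph_zero hε hF (by positivity)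
    simp [this]
  have main := moments_zero hc hK hTK (fun j k => Mo ε (Zx ε w) j k)
    (fun j k t => ε * Mo ε (Zx ε (pd 0 w)) j k t) (fun j k => Mo ε (Zx ε (pd 0 (pd 0 w))) j k)
    (-Complex.I * b₀) (-Complex.I * b₁) (-Complex.I * b₂) ε (by simpa using hb0)
    (by simpa using hb1) (by simpa using hb2) hε1
    (fun j k t ht => mo_deriv hε (ht.2.trans_lt hxO) gw (gp 0) dw
      (fun x _ => zx_fderiv_pd ε w 0 x) j k)
    (fun j k t ht => by
      have := (mo_deriv hε (ht.2.trans_lt hxO) (gp 0) (gpp 0 0) (dp 0)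
        (fun x _ => zx_fderiv_pd ε (pd 0 w) 0 x) j k).const_mul (ε : ℂ)
      rwa [← mul_assoc, hεC, one_mul] at this)
    (hZ0 _ gw) (fun j k => by rw [hZ0 _ (gp 0), mul_zero])
    (by
      intro j k t ht
      have htδ := ht.2.trans_lt hxO
      have hpde : ∀ x ∈ Om ε δ, Zx ε (pd 0 (pd 0 w)) x = 2 * (x 1 : ℂ) * Zx ε (pd 2 (pd 0 w)) x
          + Zx ε (pd 1 (pd 1 w)) x + (x 1 : ℂ) ^ 3 * Zx ε (pd 2 (pd 2 w)) x
          - (-Complex.I * b₀) * Zx ε (pd 0 w) x - (-Complex.I * b₁) * Zx ε (pd 1 w) x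
          - (-Complex.I * b₂) * Zx ε (pd 2 w) x := by
        intro x hx
        by_cases h : 0 < ε * x 0
        · have := hP x (om_dset hε hx h.le)
          simp only [zx_pos h]
          simp only [Pop, Pmod] at this
          linear_combination this
        · simp only [zx_neg (not_lt.mp h)]; ring
      have L := mo_lin hε htδ (gpp 2 0) (gpp 1 1) (gpp 2 2) (gp 0) (gp 1) (gp 2) hpde j k
      have A20 := fun j k => mo_parts1 hε htδ (gp 0) (gpp 0 0) (gpp 2 0) (dp 0)
        (fun x _ => zx_fderiv_pd ε (pd 0 w) 0 x) (fun x _ => zx_fderiv_pd ε (pd 0 w) 2 x) j k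
      have A10 := fun j k => mo_parts0 hε htδ (gp 0) (gpp 0 0) (gpp 1 0) (dp 0)
        (fun x _ => zx_fderiv_pd ε (pd 0 w) 0 x) (fun x _ => zx_fderiv_pd ε (pd 0 w) 1 x) j k
      have A1 := fun j k => mo_parts0 hε htδ gw (gp 0) (gp 1) dw
        (fun x _ => zx_fderiv_pd ε w 0 x) (fun x _ => zx_fderiv_pd ε w 1 x) j k
      have A2 := fun j k => mo_parts1 hε htδ gw (gp 0) (gp 2) dw
        (fun x _ => zx_fderiv_pd ε w 0 x) (fun x _ => zx_fderiv_pd ε w 2 x) j k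
      have A11 := fun j k => mo_parts0 hε htδ (gp 1) (gpp 0 1) (gpp 1 1) (dp 1)
        (fun x _ => zx_fderiv_pd ε (pd 1 w) 0 x) (fun x _ => zx_fderiv_pd ε (pd 1 w) 1 x) j k
      have A22 := fun j k => mo_parts1 hε htδ (gp 2) (gpp 0 2) (gpp 2 2) (dp 2)
        (fun x _ => zx_fderiv_pd ε (pd 2 w) 0 x) (fun x _ => zx_fderiv_pd ε (pd 2 w) 2 x) j k
      have sy : ∀ i, ∀ x ∈ Om ε δ, Zx ε (pd 0 (pd i w)) x = Zx ε (pd i (pd 0 w)) x := by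
        intro i x hx
        by_cases h : 0 < ε * x 0
        · rw [zx_pos h, zx_pos h, pd_symm (hwat x (om_dset hε hx h.le))]
        · rw [zx_neg (not_lt.mp h), zx_neg (not_lt.mp h)]
      have S01 := fun j k => mo_congr hε htδ (sy 1) j k
      have S02 := fun j k => mo_congr hε htδ (sy 2) j k
      have q11 : ∀ j k : ℕ, Mo ε (Zx ε (pd 1 (pd 1 w))) j k t
          = 4 * Mo ε (Zx ε (pd 0 (pd 0 w))) (j + 2) k t
            - (4 * j + 2) * (ε * Mo ε (Zx ε (pd 0 w)) j k t)
            + j * (j - 1) * Mo ε (Zx ε w) (j - 2) k t := by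
        intro j k
        rw [A11, S01, A10, A1]
        rcases j with _ | j
        · simp only [Nat.zero_add, Nat.cast_zero, Nat.cast_one, zero_mul,
            Nat.sub_self, mul_zero, Nat.reduceAdd]
          linear_combination (4 * Mo ε (Zx ε (pd 0 (pd 0 w))) 2 k t) * hεC
        · simp only [Nat.add_sub_cancel]
          have e : j + 1 - 2 = j - 1 := by omega
          rw [e]
          push_cast
          linear_combination (4 * Mo ε (Zx ε (pd 0 (pd 0 w))) (j + 1 + 1 + 1) k t) * hεC
      have q22 : ∀ j k : ℕ, Mo ε (Zx ε (pd 2 (pd 2 w))) j k t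
          = 4 * Mo ε (Zx ε (pd 0 (pd 0 w))) j (k + 2) t
            - (4 * k + 2) * (ε * Mo ε (Zx ε (pd 0 w)) j k t)
            + k * (k - 1) * Mo ε (Zx ε w) j (k - 2) t := by
        intro j k
        rw [A22, S02, A20, A2]
        rcases k with _ | k
        · simp only [Nat.zero_add, Nat.cast_zero, Nat.cast_one, zero_mul,
            Nat.sub_self, mul_zero, Nat.reduceAdd]
          linear_combination (4 * Mo ε (Zx ε (pd 0 (pd 0 w))) j 2 t) * hεC
        · simp only [Nat.add_sub_cancel]
          have e : k + 1 - 2 = k - 1 := by omega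
          rw [e]
          push_cast
          linear_combination (4 * Mo ε (Zx ε (pd 0 (pd 0 w))) j (k + 1 + 1 + 1) t) * hεC
      rw [L, A20, q11, q22, A1, A2]
      linear_combination (-2 * k * Mo ε (Zx ε (pd 0 w)) (j + 1) (k - 1) t
        - (-Complex.I * b₀) * Mo ε (Zx ε (pd 0 w)) j k t) * (-hεC))
    hN0 hN
  have mz := cplx_mom_zero (fun y => Zx ε w (Ph ε T y)) (good_cont hε hxO gw) (good_cs hε gw)
    (fun j k => main j k T ⟨hT0, le_rfl⟩) ![x 1, x 2]
  have hPh : Ph ε T ![x 1, x 2] = x := by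
    ext i
    fin_cases i
    · simp only [Ph, hT, Matrix.cons_val, Fin.zero_eta]
      linear_combination (x 0) * hε
    · simp [Ph]
    · simp [Ph]
  simp only [hPh] at mz
  rwa [zx_pos hx0] at mz
end

section
open Set Filter Topology Metric Function MeasureTheory

theorem pd_congr {n : ℕ} {u v : (Fin n → ℝ) → ℂ} {U : Set (Fin n → ℝ)} (hU : IsOpen U)
    (h : EqOn u v U) (i : Fin n) : EqOn (pd i u) (pd i v) U := by
  intro x hx
  have : u =ᶠ[𝓝 x] v := h.eventuallyEq_of_mem (hU.mem_nhds hx)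
  simp only [pd, this.fderiv_eq]

theorem pd_sub_on {n : ℕ} {u v : (Fin n → ℝ) → ℂ} {U : Set (Fin n → ℝ)}
    (hu : ∀ x ∈ U, DifferentiableAt ℝ u x) (hv : ∀ x ∈ U, DifferentiableAt ℝ v x) (i : Fin n) :
    EqOn (pd i (fun y => u y - v y)) (fun y => pd i u y - pd i v y) U := by
  intro x hx
  simp only [pd]
  rw [fderiv_fun_sub (hu x hx) (hv x hx)]
  rfl

theorem uniq_full {b₀ b₁ b₂ : ℂ} {c K δ : ℝ} (hc : 0 ≤ c) (hK : 100 * (1 + c) ≤ K)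
    (hδ : δ * K ^ 2 ≤ 1) (hb0 : ‖b₀‖ ≤ c) (hb1 : ‖b₁‖ ≤ c) (hb2 : ‖b₂‖ ≤ c)
    {u₀ u₁ : (Fin 2 → ℝ) → ℂ} {u v : (Fin 3 → ℝ) → ℂ}
    (hu : IsCauchySolution (Pop b₀ b₁ b₂) (Dset δ) u₀ u₁ u)
    (hv : IsCauchySolution (Pop b₀ b₁ b₂) (Dset δ) u₀ u₁ v) : EqOn u v (Dset δ) := by
  obtain ⟨hu2, hPu, hu0⟩ := hu
  obtain ⟨hv2, hPv, hv0⟩ := hv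
  have hO := dset_open δ
  have D0 : ∀ {f : (Fin 3 → ℝ) → ℂ}, ContDiffOn ℝ 2 f (Dset δ) →
      ∀ x ∈ Dset δ, DifferentiableAt ℝ f x := fun hf x hx =>
    (hf.contDiffAt (hO.mem_nhds hx)).differentiableAt (by norm_num)
  have D1 : ∀ {f : (Fin 3 → ℝ) → ℂ}, ContDiffOn ℝ 2 f (Dset δ) → ∀ i,
      ∀ x ∈ Dset δ, DifferentiableAt ℝ (pd i f) x := fun hf i x hx =>
    ((pd_contDiffOn (m := 1) hf hO (by norm_num) i).contDiffAt (hO.mem_nhds hx)).differentiableAt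
      (by norm_num)
  set w : (Fin 3 → ℝ) → ℂ := fun y => u y - v y with hw
  have e1 : ∀ i, EqOn (pd i w) (fun y => pd i u y - pd i v y) (Dset δ) := fun i =>
    pd_sub_on (D0 hu2) (D0 hv2) i
  have e2 : ∀ i j, EqOn (pd i (pd j w)) (fun y => pd i (pd j u) y - pd i (pd j v) y) (Dset δ) :=
    fun i j => (pd_congr hO (e1 j) i).trans (pd_sub_on (D1 hu2 j) (D1 hv2 j) i)
  have hw2 : ContDiffOn ℝ 2 w (Dset δ) := hu2.sub hv2
  have hPw : ∀ x ∈ Dset δ, Pop b₀ b₁ b₂ w x = 0 := by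
    intro x hx
    have h1 := hPu x hx
    have h2 := hPv x hx
    simp only [Pop, Pmod] at h1 h2 ⊢
    rw [e2 0 0 hx, e2 2 0 hx, e2 1 1 hx, e2 2 2 hx, e1 0 hx, e1 1 hx, e1 2 hx]
    linear_combination h1 - h2
  have hcons : ∀ x : Fin 3 → ℝ, x 0 = 0 → (Fin.cons 0 ![x 1, x 2] : Fin 3 → ℝ) = x := by
    intro x hx
    ext i; fin_cases i
    · exact hx.symm
    · rfl
    · rfl
  have hw0 : ∀ x ∈ Dset δ, x 0 = 0 → w x = 0 := by
    intro x hx hx0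
    have h := hcons x hx0
    have h1 := hu0 ![x 1, x 2]; have h2 := hv0 ![x 1, x 2]
    rw [h] at h1 h2
    simp only [hw]
    rw [(h1 hx).1, (h2 hx).1, sub_self]
  have hw1 : ∀ x ∈ Dset δ, x 0 = 0 → pd 0 w x = 0 := by
    intro x hx hx0
    have h := hcons x hx0
    have h1 := hu0 ![x 1, x 2]; have h2 := hv0 ![x 1, x 2]
    rw [h] at h1 h2
    rw [e1 0 hx]
    have h3 := (h1 hx).2.trans (h2 hx).2.symm
    have h4 := mul_left_cancel₀ (neg_ne_zero.mpr Complex.I_ne_zero) h3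
    simp only [h4, sub_self]
  intro x hx
  have : w x = 0 := by
    rcases lt_trichotomy (x 0) 0 with h | h | h
    · exact uniq_half (ε := -1) hc hK hδ hb0 hb1 hb2 (by norm_num) hw2 hPw hw0 hw1 x hx (by linarith)
    · exact hw0 x hx h
    · exact uniq_half (ε := 1) hc hK hδ hb0 hb1 hb2 (by norm_num) hw2 hPw hw0 hw1 x hx (by linarith)
  exact sub_eq_zero.mp this
end

section
open Set Filter Topology Metric Function MeasureTheory

/-- Bounded families of complex numbers. -/
noncomputable abbrev BFam (ι : Type) := lp (fun _ : ι => ℂ) (⊤ : ENNReal)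

/-- The linear form with prescribed values on the standard basis. -/
noncomputable def dsum (n : ℕ) : (Fin n → ℂ) →L[ℝ] ((Fin n → ℝ) →L[ℝ] ℂ) :=
  LinearMap.toContinuousLinearMap
    { toFun := fun a => ∑ i, (ContinuousLinearMap.proj (R := ℝ) (φ := fun _ : Fin n => ℝ) i).smulRight (a i)
      map_add' := by
        intro a b
        ext v
        simp [smul_add, Finset.sum_add_distrib]
      map_smul' := by
        intro c a
        ext v
        simp [Finset.mul_sum, mul_left_comm] }

theorem dsum_single {n : ℕ} (a : Fin n → ℂ) (i : Fin n) : dsum n a (Pi.single i 1) = a i := by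
  simp [dsum, Pi.single_apply]

theorem hasFDerivAt_dsum {n : ℕ} {f : (Fin n → ℝ) → ℂ} {x : Fin n → ℝ}
    (h : DifferentiableAt ℝ f x) : HasFDerivAt f (dsum n fun i => pd i f x) x := by
  have := h.hasFDerivAt
  convert this using 1
  apply clm_pi_ext
  intro j
  rw [dsum_single]; rfl

theorem pd_of_hasFDerivAt_dsum {n : ℕ} {f : (Fin n → ℝ) → ℂ} {x : Fin n → ℝ} {a : Fin n → ℂ}
    (h : HasFDerivAt f (dsum n a) x) (i : Fin n) : pd i f x = a i := by
  rw [pd, h.fderiv, dsum_single]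

theorem contDiffOn_succ_of_dsum {n : ℕ} {f : (Fin n → ℝ) → ℂ} {O : Set (Fin n → ℝ)}
    (hO : IsOpen O) {a : Fin n → (Fin n → ℝ) → ℂ} {m : ℕ}
    (h : ∀ x ∈ O, HasFDerivAt f (dsum n fun i => a i x) x)
    (ha : ∀ i, ContDiffOn ℝ m (a i) O) : ContDiffOn ℝ (m + 1 : ℕ) f O := by
  have : ((m + 1 : ℕ) : WithTop ℕ∞) = (m : WithTop ℕ∞) + 1 := by push_cast; rfl
  rw [this, contDiffOn_succ_iff_fderiv_of_isOpen hO]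
  refine ⟨fun x hx => (h x hx).differentiableAt.differentiableWithinAt, fun h => ?_, ?_⟩
  · exact absurd h (by simp)
  · have h1 : ContDiffOn ℝ m (fun x => dsum n fun i => a i x) O :=
      (dsum n).contDiff.comp_contDiffOn (contDiffOn_pi.2 ha)
    exact h1.congr fun x hx => (h x hx).fderiv

/-- Families obeying a derivative relation. -/
noncomputable def HD {ι : Type} {n : ℕ} (O : Set (Fin n → ℝ)) (k0 : (Fin n → ℝ) → ι)
    (k : Fin n → (Fin n → ℝ) → ι) (wt : ℝ) : Submodule ℝ (BFam ι) where
  carrier := {g | ∀ x ∈ O, HasFDerivAt (fun y => g (k0 y)) (dsum n fun i => (wt : ℂ) * g (k i x)) x}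
  zero_mem' := by
    intro x _
    have : (dsum n fun i => (wt : ℂ) * (0 : BFam ι) (k i x)) = 0 := by
      simp only [lp.coeFn_zero, Pi.zero_apply, mul_zero]
      exact (dsum n).map_zero
    rw [this]
    exact hasFDerivAt_const (0:ℂ) x
  add_mem' := by
    intro f g hf hg x hx
    have := (hf x hx).add (hg x hx)
    rw [← map_add] at this
    have e : (fun i => (wt : ℂ) * (f + g) (k i x))
        = (fun i => (wt : ℂ) * f (k i x)) + fun i => (wt : ℂ) * g (k i x) := by
      funext i
      simp [mul_add]
    rw [e]
    exact this
  smul_mem' := by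
    intro c f hf x hx
    have := (hf x hx).const_smul c
    rw [← map_smul] at this
    have e : (fun i => (wt : ℂ) * (c • f) (k i x)) = c • fun i => (wt : ℂ) * f (k i x) := by
      funext i
      simp [mul_left_comm]
    rw [e]
    exact this

theorem bfam_uniform {ι : Type} {n : ℕ} {f : ℕ → BFam ι} {g : BFam ι}
    (h : Tendsto f atTop (𝓝 g)) (O : Set (Fin n → ℝ)) (k0 : (Fin n → ℝ) → ι) :
    TendstoUniformlyOn (fun m y => f m (k0 y)) (fun y => g (k0 y)) atTop O := by
  rw [Metric.tendstoUniformlyOn_iff]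
  intro ε hε
  filter_upwards [(Metric.tendsto_nhds.1 h) ε hε] with m hm y _
  refine lt_of_le_of_lt ?_ hm
  rw [dist_comm, dist_eq_norm, dist_eq_norm]
  exact lp.norm_apply_le_norm (by simp) (f m - g) (k0 y)

theorem hd_closed {ι : Type} {n : ℕ} {O : Set (Fin n → ℝ)} (hO : IsOpen O)
    (k0 : (Fin n → ℝ) → ι) (k : Fin n → (Fin n → ℝ) → ι) (wt : ℝ) :
    IsClosed (HD O k0 k wt : Set (BFam ι)) := by
  refine IsSeqClosed.isClosed ?_
  intro f g hf hfg x hx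
  refine hasFDerivAt_of_tendstoUniformlyOn (l := atTop) hO
    (f' := fun m x => dsum n fun i => (wt : ℂ) * f m (k i x))
    (g' := fun x => dsum n fun i => (wt : ℂ) * g (k i x)) (f := fun m y => f m (k0 y))
    ?_ (fun m y hy => hf m y hy) (fun y hy => (bfam_uniform hfg O k0).tendsto_at hy) hx
  refine (dsum n).uniformContinuous.comp_tendstoUniformlyOn ?_
  rw [Metric.tendstoUniformlyOn_iff]
  intro ε hε
  have hall : ∀ᶠ m in atTop, ∀ i, ∀ y ∈ O,
      dist ((wt : ℂ) * g (k i y)) ((wt : ℂ) * f m (k i y)) < ε := by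
    rw [eventually_all]
    intro i
    have := (uniformContinuous_const_smul (M := ℂ) (wt : ℂ)).comp_tendstoUniformlyOn
      (bfam_uniform hfg O (k i))
    exact (Metric.tendstoUniformlyOn_iff.1 this) ε hε
  filter_upwards [hall] with m hm y hy
  exact (dist_pi_lt_iff hε).2 fun i => hm i y hy

/-- Families obeying a continuity condition. -/
noncomputable def CO {ι : Type} {n : ℕ} (O : Set (Fin n → ℝ)) (k0 : (Fin n → ℝ) → ι) :
    Submodule ℝ (BFam ι) where
  carrier := {g | ContinuousOn (fun y => g (k0 y)) O}
  zero_mem' := continuousOn_const (c := (0:ℂ))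
  add_mem' := fun hf hg => ContinuousOn.add hf hg
  smul_mem' := fun c _ hf => ContinuousOn.const_smul hf c

theorem co_closed {ι : Type} {n : ℕ} (O : Set (Fin n → ℝ))
    (k0 : (Fin n → ℝ) → ι) : IsClosed (CO O k0 : Set (BFam ι)) := by
  refine IsSeqClosed.isClosed ?_
  intro f g hf hfg
  exact (bfam_uniform hfg O k0).continuousOn (Eventually.frequently (Eventually.of_forall hf))

theorem bfam_le {ι : Type} (g : BFam ι) (i : ι) : ‖g i‖ ≤ ‖g‖ :=
  lp.norm_apply_le_norm (by simp) g i

theorem bfam_mk {ι : Type} (f : ι → ℂ) (C : ℝ) (hC : 0 ≤ C) (h : ∀ i, ‖f i‖ ≤ C) :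
    ∃ g : BFam ι, (∀ i, g i = f i) ∧ ‖g‖ ≤ C := by
  refine ⟨⟨f, memℓp_infty ⟨C, ?_⟩⟩, fun i => rfl, lp.norm_le_of_forall_le hC h⟩
  rintro _ ⟨i, rfl⟩
  exact h i

/-- Evaluation. -/
noncomputable def bev {ι : Type} (i : ι) : BFam ι →L[ℝ] ℂ :=
  lp.evalCLM ℝ (fun _ : ι => ℂ) (⊤ : ENNReal) i

theorem bev_apply {ι : Type} (i : ι) (g : BFam ι) : bev i g = g i := rfl
end

section
open Set Filter Topology Metric Function MeasureTheory

theorem hfd_congr {n : ℕ} {f : (Fin n → ℝ) → ℂ} {x : Fin n → ℝ} {a b : Fin n → ℂ}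
    (h : HasFDerivAt f (dsum n a) x) (he : ∀ i, b i = a i) : HasFDerivAt f (dsum n b) x := by
  have : b = a := funext he
  rw [this]; exact h

theorem pd_smooth {n : ℕ} {f : (Fin n → ℝ) → ℂ} (hf : ContDiff ℝ (⊤ : ℕ∞) f) (j : Fin n) :
    ContDiff ℝ (⊤ : ℕ∞) (pd j f) := by
  rw [← contDiffOn_univ] at hf ⊢
  exact pd_contDiffOn hf isOpen_univ (by rfl) j

theorem pdIter_smooth {n : ℕ} {f : (Fin n → ℝ) → ℂ} (hf : ContDiff ℝ (⊤ : ℕ∞) f) (j : Fin n)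
    (k : ℕ) : ContDiff ℝ (⊤ : ℕ∞) (pdIter j k f) := by
  induction k with
  | zero => exact hf
  | succ k ih =>
    have : pdIter j (k + 1) f = pd j (pdIter j k f) := Function.iterate_succ_apply' _ _ _
    rw [this]; exact pd_smooth ih j

theorem pdIter_succ {n : ℕ} (f : (Fin n → ℝ) → ℂ) (j : Fin n)
    (k : ℕ) : pdIter j (k + 1) f = pd j (pdIter j k f) := Function.iterate_succ_apply' _ _ _

theorem pd_pdIter_comm {n : ℕ} {f : (Fin n → ℝ) → ℂ} (hf : ContDiff ℝ (⊤ : ℕ∞) f) (i j : Fin n)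
    (k : ℕ) : pd i (pdIter j k f) = pdIter j k (pd i f) := by
  induction k with
  | zero => rfl
  | succ k ih =>
    rw [pdIter_succ, pdIter_succ, ← ih]
    funext x
    exact pd_symm (contDiff_infty.1 (pdIter_smooth hf j k) 2).contDiffAt i j

theorem pdMulti_hasFDerivAt {f : (Fin 2 → ℝ) → ℂ} (hf : ContDiff ℝ (⊤ : ℕ∞) f) (p q : ℕ)
    (x : Fin 2 → ℝ) : HasFDerivAt (pdMulti ![p, q] f)
      (dsum 2 fun i => if i = 0 then pdMulti ![p + 1, q] f x else pdMulti ![p, q + 1] f x) x := by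
  have hsm : ContDiff ℝ (⊤ : ℕ∞) (pdMulti ![p, q] f) := pdIter_smooth (pdIter_smooth hf 1 q) 0 p
  have := hasFDerivAt_dsum (hsm.differentiable (by simp) x)
  convert this using 2
  funext i
  fin_cases i
  · simp [pdMulti, pdIter_succ]
  · have h1 := pd_pdIter_comm (pdIter_smooth hf 1 q) 1 0 p
    simp [pdMulti, pdIter_succ, h1]

/-- The Gevrey weight. -/
noncomputable def Wg (s h : ℝ) (n : ℕ) : ℝ := h ^ n * (Nat.factorial n : ℝ) ^ s

theorem wg_pos {s h : ℝ} (hh : 0 < h) (n : ℕ) : 0 < Wg s h n := by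
  unfold Wg
  have : (0:ℝ) < (Nat.factorial n : ℝ) := by exact_mod_cast Nat.factorial_pos n
  positivity

theorem wg_zero {s h : ℝ} : Wg s h 0 = 1 := by simp [Wg]

abbrev YI := Fin 2 × (ℕ × ℕ) × (Fin 2 → ℝ)

/-- The closed space of Gevrey data. -/
noncomputable def SData (s h : ℝ) : Submodule ℝ (BFam YI) :=
  ⨅ e : Fin 2, ⨅ p : ℕ, ⨅ q : ℕ, HD univ (fun x => (e, (p, q), x))
    (fun i x => (e, (if i = 0 then (p + 1, q) else (p, q + 1)), x))
    (Wg s h (p + q + 1) / Wg s h (p + q))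

theorem sdata_mem {s h : ℝ} {y : BFam YI} : y ∈ SData s h ↔ ∀ e p q,
    y ∈ HD univ (fun x => (e, (p, q), x))
    (fun i x => (e, (if i = 0 then (p + 1, q) else (p, q + 1)), x))
    (Wg s h (p + q + 1) / Wg s h (p + q)) := by
  simp only [SData, Submodule.mem_iInf]

theorem sdata_closed (s h : ℝ) : IsClosed (SData s h : Set (BFam YI)) := by
  have : (SData s h : Set (BFam YI)) = ⋂ e : Fin 2, ⋂ p : ℕ, ⋂ q : ℕ,
      ((HD univ (fun x => (e, (p, q), x))
    (fun i x => (e, (if i = 0 then (p + 1, q) else (p, q + 1)), x))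
    (Wg s h (p + q + 1) / Wg s h (p + q)) : Submodule ℝ (BFam YI)) : Set (BFam YI)) := by
    ext y
    simp only [SetLike.mem_coe, sdata_mem, mem_iInter]
  rw [this]
  exact isClosed_iInter fun e => isClosed_iInter fun p => isClosed_iInter fun q =>
    hd_closed isOpen_univ _ _ _

theorem gevrey_nonneg {s h N : ℝ} {f : (Fin 2 → ℝ) → ℂ} (hN : GevreyBound s h N f) : 0 ≤ N := by
  have := (norm_nonneg _).trans (hN 0 0)
  simpa using this

theorem data_to {s h : ℝ} (hh : 0 < h) (f : Fin 2 → (Fin 2 → ℝ) → ℂ)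
    (hf : ∀ e, ContDiff ℝ (⊤ : ℕ∞) (f e)) (N : Fin 2 → ℝ) (hN : ∀ e, GevreyBound s h (N e) (f e)) :
    ∃ y ∈ SData s h, (∀ e x, y (e, (0, 0), x) = f e x) ∧ ‖y‖ ≤ N 0 + N 1 := by
  have hN0 : ∀ e, 0 ≤ N e := fun e => gevrey_nonneg (hN e)
  obtain ⟨y, hy, hyN⟩ := bfam_mk
    (fun k : YI => pdMulti ![k.2.1.1, k.2.1.2] (f k.1) k.2.2 / (Wg s h (k.2.1.1 + k.2.1.2) : ℂ))
    (N 0 + N 1) (add_nonneg (hN0 0) (hN0 1)) (by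
      rintro ⟨e, ⟨p, q⟩, x⟩
      have h1 := hN e ![p, q] x
      have hw := wg_pos (s := s) hh (p + q)
      have h2 : N e ≤ N 0 + N 1 := by
        fin_cases e
        · simpa using hN0 1
        · simpa using hN0 0
      simp only [norm_div, Complex.norm_real, Real.norm_eq_abs, abs_of_pos hw]
      rw [div_le_iff₀ hw]
      refine le_trans ?_ (mul_le_mul_of_nonneg_right h2 hw.le)
      simpa [Wg, mul_assoc] using h1)
  refine ⟨y, sdata_mem.2 fun e p q x _ => ?_, fun e x => ?_, hyN⟩
  · simp only [hy]
    have h1 := (pdMulti_hasFDerivAt (hf e) p q x).const_smul ((Wg s h (p + q))⁻¹ : ℝ)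
    rw [← map_smul] at h1
    have hw := (wg_pos (s := s) hh (p + q)).ne'
    have hw1 := (wg_pos (s := s) hh (p + q + 1)).ne'
    have hwc : (Wg s h (p + q) : ℂ) ≠ 0 := by exact_mod_cast hw
    have hwc1 : (Wg s h (p + q + 1) : ℂ) ≠ 0 := by exact_mod_cast hw1
    have e1 : (((Wg s h (p + q))⁻¹ : ℝ) • pdMulti ![p, q] (f e))
        = fun y => pdMulti ![p, q] (f e) y / (Wg s h (p + q) : ℂ) := by
      funext y
      simp [div_eq_inv_mul]
    rw [e1] at h1
    refine hfd_congr h1 fun i => ?_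
    fin_cases i
    · have : p + 1 + q = p + q + 1 := by ring
      simp [this]
      field_simp
    · have : p + (q + 1) = p + q + 1 := by ring
      simp [this]
      field_simp
  · rw [hy]
    simp [wg_zero, pdMulti, pdIter]

theorem family_pdMulti {F : ℕ → ℕ → (Fin 2 → ℝ) → ℂ}
    (hF : ∀ p q x, HasFDerivAt (F p q) (dsum 2 fun i => if i = 0 then F (p + 1) q x
      else F p (q + 1) x) x) :
    ContDiff ℝ (⊤ : ℕ∞) (F 0 0) ∧ ∀ α : Fin 2 → ℕ, pdMulti α (F 0 0) = F (α 0) (α 1) := by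
  constructor
  · have key : ∀ n : ℕ, ∀ p q, ContDiffOn ℝ n (F p q) univ := by
      intro n
      induction n with
      | zero =>
        intro p q
        exact contDiffOn_zero.2 fun x _ => (hF p q x).continuousAt.continuousWithinAt
      | succ n ih =>
        intro p q
        refine contDiffOn_succ_of_dsum isOpen_univ
          (a := fun i x => if i = 0 then F (p + 1) q x else F p (q + 1) x)
          (fun x _ => hF p q x) ?_
        intro i
        by_cases hi : i = 0
        · simpa [hi] using ih (p + 1) q
        · simpa [hi] using ih p (q + 1)
    rw [contDiff_infty]
    intro n
    exact contDiffOn_univ.1 (key n 0 0)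
  · have h1 : ∀ q, pdIter 1 q (F 0 0) = F 0 q := by
      intro q
      induction q with
      | zero => rfl
      | succ q ih =>
        rw [pdIter_succ, ih]
        funext x
        simpa using pd_of_hasFDerivAt_dsum (hF 0 q x) 1
    have h0 : ∀ p q, pdIter 0 p (F 0 q) = F p q := by
      intro p q
      induction p with
      | zero => rfl
      | succ p ih =>
        rw [pdIter_succ, ih]
        funext x
        simpa using pd_of_hasFDerivAt_dsum (hF p q x) 0
    intro α
    rw [pdMulti, h1, h0]

theorem data_from {s h : ℝ} (hh : 0 < h) {y : BFam YI} (hy : y ∈ SData s h) (e : Fin 2) :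
    GevreyClass s (fun x => y (e, (0, 0), x)) := by
  rw [sdata_mem] at hy
  obtain ⟨h1, h2⟩ := family_pdMulti (F := fun p q x => (Wg s h (p + q) : ℂ) * y (e, (p, q), x)) (by
    intro p q x
    have h1 := (hy e p q x (mem_univ _)).const_smul (Wg s h (p + q))
    rw [← map_smul] at h1
    have hw := (wg_pos (s := s) hh (p + q)).ne'
    have hwc : (Wg s h (p + q) : ℂ) ≠ 0 := by exact_mod_cast hw
    have e1 : ((Wg s h (p + q)) • fun x => y (e, (p, q), x))
        = fun x => (Wg s h (p + q) : ℂ) * y (e, (p, q), x) := by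
      funext y
      simp
    rw [e1] at h1
    refine hfd_congr h1 fun i => ?_
    fin_cases i
    · have : p + 1 + q = p + q + 1 := by ring
      simp [this]
      field_simp
    · have : p + (q + 1) = p + q + 1 := by ring
      simp [this]
      field_simp)
  have e0 : (fun x => (Wg s h (0 + 0) : ℂ) * y (e, (0, 0), x)) = fun x => y (e, (0, 0), x) := by
    funext x; simp [wg_zero]
  rw [e0] at h1 h2
  refine ⟨h1, fun K _ => ⟨‖y‖ + 1, by positivity, h, hh, fun x _ α => ?_⟩⟩
  rw [h2 α]
  have hw := wg_pos (s := s) hh (α 0 + α 1)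
  have := bfam_le y (e, (α 0, α 1), x)
  rw [norm_mul, Complex.norm_real, Real.norm_eq_abs, abs_of_pos hw, mul_assoc, mul_comm]
  exact mul_le_mul_of_nonneg_right (by linarith) hw.le
end

section
open Set Filter Topology Metric Function MeasureTheory

abbrev JI := Option (Fin 3 × Option (Fin 3))
abbrev XI := JI × (Fin 3 → ℝ)

/-- Bounded two-jets on `D`. -/
noncomputable def JSub (D : Set (Fin 3 → ℝ)) : Submodule ℝ (BFam XI) :=
  HD D (fun x => (none, x)) (fun i x => (some (i, none), x)) 1 ⊓
  ((⨅ i : Fin 3, HD D (fun x => (some (i, none), x)) (fun j x => (some (i, some j), x)) 1) ⊓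
  ⨅ i : Fin 3, ⨅ j : Fin 3, CO D (fun x => (some (i, some j), x)))

theorem isClosed_submodule_iInf {ι : Sort*} {E : Type*} [NormedAddCommGroup E] [NormedSpace ℝ E]
    {S : ι → Submodule ℝ E} (h : ∀ i, IsClosed (S i : Set E)) :
    IsClosed ((⨅ i, S i : Submodule ℝ E) : Set E) := by
  rw [Submodule.coe_iInf]; exact isClosed_iInter h

theorem isClosed_submodule_inf {E : Type*} [NormedAddCommGroup E] [NormedSpace ℝ E]
    {S T : Submodule ℝ E} (hS : IsClosed (S : Set E)) (hT : IsClosed (T : Set E)) :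
    IsClosed ((S ⊓ T : Submodule ℝ E) : Set E) := by
  rw [Submodule.coe_inf]; exact hS.inter hT

theorem jsub_closed {D : Set (Fin 3 → ℝ)} (hD : IsOpen D) : IsClosed (JSub D : Set (BFam XI)) :=
  isClosed_submodule_inf (hd_closed hD _ _ _) (isClosed_submodule_inf
    (isClosed_submodule_iInf fun _ => hd_closed hD _ _ _)
    (isClosed_submodule_iInf fun _ => isClosed_submodule_iInf fun _ => co_closed _ _))

theorem jsub_mem {D : Set (Fin 3 → ℝ)} {g : BFam XI} : g ∈ JSub D ↔
    (∀ x ∈ D, HasFDerivAt (fun y => g (none, y)) (dsum 3 fun i => g (some (i, none), x)) x) ∧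
    (∀ i, ∀ x ∈ D, HasFDerivAt (fun y => g (some (i, none), y))
      (dsum 3 fun j => g (some (i, some j), x)) x) ∧
    (∀ i j, ContinuousOn (fun y => g (some (i, some j), y)) D) := by
  simp only [JSub, Submodule.mem_inf, Submodule.mem_iInf]
  simp [HD, CO]
  exact fun _ _ => Iff.rfl

/-- The operator on jets. -/
noncomputable def Pj (b₀ b₁ b₂ : ℂ) (x : Fin 3 → ℝ) : BFam XI →L[ℝ] ℂ :=
  bev (some (0, some 0), x) - (2 * (x 1 : ℂ)) • bev (some (0, some 2), x)
    - bev (some (1, some 1), x) - ((x 1 : ℂ) ^ 3) • bev (some (2, some 2), x)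
    + (b₀ * -Complex.I) • bev (some (0, none), x) + (b₁ * -Complex.I) • bev (some (1, none), x)
    + (b₂ * -Complex.I) • bev (some (2, none), x)

theorem pj_eq {b₀ b₁ b₂ : ℂ} {x : Fin 3 → ℝ} {g : BFam XI} {u : (Fin 3 → ℝ) → ℂ}
    (h1 : ∀ i, g (some (i, none), x) = pd i u x)
    (h2 : ∀ i j, g (some (i, some j), x) = pd j (pd i u) x) :
    Pj b₀ b₁ b₂ x g = Pop b₀ b₁ b₂ u x := by
  simp only [Pj, ContinuousLinearMap.add_apply, ContinuousLinearMap.sub_apply,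
    ContinuousLinearMap.smul_apply, bev_apply, h1, h2, Pop, Pmod, smul_eq_mul]
  ring

/-- The first data relation. -/
noncomputable def Q0 (x : Fin 2 → ℝ) : (BFam XI × BFam YI) →L[ℝ] ℂ :=
  (bev ((none, Fin.cons 0 x) : XI)).comp (ContinuousLinearMap.fst ℝ _ _)
    - (bev ((0, (0, 0), x) : YI)).comp (ContinuousLinearMap.snd ℝ _ _)

/-- The second data relation. -/
noncomputable def Q1 (x : Fin 2 → ℝ) : (BFam XI × BFam YI) →L[ℝ] ℂ :=
  (-Complex.I) • (bev ((some (0, none), Fin.cons 0 x) : XI)).comp (ContinuousLinearMap.fst ℝ _ _)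
    - (bev ((1, (0, 0), x) : YI)).comp (ContinuousLinearMap.snd ℝ _ _)

/-- The solution relation on `D`. -/
noncomputable def RSub (b₀ b₁ b₂ : ℂ) (s h : ℝ) (D : Set (Fin 3 → ℝ)) :
    Submodule ℝ (BFam XI × BFam YI) :=
  (JSub D).comap (ContinuousLinearMap.fst ℝ (BFam XI) (BFam YI)).toLinearMap ⊓
  ((SData s h).comap (ContinuousLinearMap.snd ℝ (BFam XI) (BFam YI)).toLinearMap ⊓
  ((⨅ x : Fin 3 → ℝ, ⨅ _ : x ∈ D,
    LinearMap.ker ((Pj b₀ b₁ b₂ x).comp (ContinuousLinearMap.fst ℝ (BFam XI) (BFam YI))).toLinearMap) ⊓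
  ⨅ x : Fin 2 → ℝ, ⨅ _ : (Fin.cons 0 x : Fin 3 → ℝ) ∈ D,
    (LinearMap.ker (Q0 x).toLinearMap ⊓ LinearMap.ker (Q1 x).toLinearMap)))

theorem rsub_closed (b₀ b₁ b₂ : ℂ) (s h : ℝ) {D : Set (Fin 3 → ℝ)} (hD : IsOpen D) :
    IsClosed (RSub b₀ b₁ b₂ s h D : Set (BFam XI × BFam YI)) := by
  refine isClosed_submodule_inf ?_ (isClosed_submodule_inf ?_ (isClosed_submodule_inf ?_ ?_))
  · exact (jsub_closed hD).preimage continuous_fst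
  · exact (sdata_closed s h).preimage continuous_snd
  · exact isClosed_submodule_iInf fun x => isClosed_submodule_iInf fun _ =>
      ContinuousLinearMap.isClosed_ker _
  · exact isClosed_submodule_iInf fun x => isClosed_submodule_iInf fun _ =>
      isClosed_submodule_inf (ContinuousLinearMap.isClosed_ker _) (ContinuousLinearMap.isClosed_ker _)

theorem rsub_mem {b₀ b₁ b₂ : ℂ} {s h : ℝ} {D : Set (Fin 3 → ℝ)} {g : BFam XI} {y : BFam YI} :
    (g, y) ∈ RSub b₀ b₁ b₂ s h D ↔ g ∈ JSub D ∧ y ∈ SData s h ∧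
      (∀ x ∈ D, Pj b₀ b₁ b₂ x g = 0) ∧ ∀ x : Fin 2 → ℝ, (Fin.cons 0 x : Fin 3 → ℝ) ∈ D →
        g (none, Fin.cons 0 x) = y (0, (0, 0), x) ∧
        -Complex.I * g (some (0, none), Fin.cons 0 x) = y (1, (0, 0), x) := by
  simp only [RSub, Submodule.mem_inf, Submodule.mem_iInf, Submodule.mem_comap, LinearMap.mem_ker]
  simp only [ContinuousLinearMap.coe_coe, ContinuousLinearMap.coe_fst', ContinuousLinearMap.coe_snd',
    ContinuousLinearMap.comp_apply, Q0, Q1, ContinuousLinearMap.sub_apply,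
    ContinuousLinearMap.smul_apply, sub_eq_zero, bev_apply, smul_eq_mul]

theorem rsub_sol {b₀ b₁ b₂ : ℂ} {s h : ℝ} {D : Set (Fin 3 → ℝ)} (hD : IsOpen D)
    {g : BFam XI} {y : BFam YI} (hg : (g, y) ∈ RSub b₀ b₁ b₂ s h D) :
    IsCauchySolution (Pop b₀ b₁ b₂) D (fun x => y (0, (0, 0), x)) (fun x => y (1, (0, 0), x))
      (fun x => g (none, x)) ∧
    (∀ i, ∀ x ∈ D, pd i (fun x => g (none, x)) x = g (some (i, none), x)) ∧
    (∀ i j, ∀ x ∈ D, pd j (pd i (fun x => g (none, x))) x = g (some (i, some j), x)) := by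
  obtain ⟨hJ, -, hP, hQ⟩ := rsub_mem.1 hg
  obtain ⟨h0, h1, h2⟩ := jsub_mem.1 hJ
  have e1 : ∀ i, ∀ x ∈ D, pd i (fun x => g (none, x)) x = g (some (i, none), x) :=
    fun i x hx => pd_of_hasFDerivAt_dsum (h0 x hx) i
  have e2 : ∀ i j, ∀ x ∈ D, pd j (pd i (fun x => g (none, x))) x = g (some (i, some j), x) := by
    intro i j x hx
    rw [pd_congr hD (e1 i) j hx]
    exact pd_of_hasFDerivAt_dsum (h1 i x hx) j
  refine ⟨⟨?_, ?_, ?_⟩, e1, e2⟩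
  · refine contDiffOn_succ_of_dsum hD (m := 1) (a := fun i x => g (some (i, none), x)) h0 ?_
    intro i
    refine contDiffOn_succ_of_dsum hD (m := 0) (a := fun j x => g (some (i, some j), x)) (h1 i) ?_
    intro j
    exact contDiffOn_zero.2 (h2 i j)
  · intro x hx
    rw [← pj_eq (g := g) (fun i => (e1 i x hx).symm) (fun i j => (e2 i j x hx).symm)]
    exact hP x hx
  · intro x hx
    rw [e1 0 _ hx]
    exact hQ x hx

/-- The jets of a function. -/
noncomputable def jet (u : (Fin 3 → ℝ) → ℂ) : JI → (Fin 3 → ℝ) → ℂ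
  | none => u
  | some (i, none) => pd i u
  | some (i, some j) => pd j (pd i u)

theorem sol_rsub {b₀ b₁ b₂ : ℂ} {s h : ℝ} {D : Set (Fin 3 → ℝ)} (hD : IsOpen D)
    {y : BFam YI} (hy : y ∈ SData s h) {u : (Fin 3 → ℝ) → ℂ}
    (hu : IsCauchySolution (Pop b₀ b₁ b₂) D (fun x => y (0, (0, 0), x)) (fun x => y (1, (0, 0), x)) u)
    {M : ℝ} (hM0 : 0 ≤ M) (hM : ∀ k, ∀ x ∈ D, ‖jet u k x‖ ≤ M) :
    ∃ g, (g, y) ∈ RSub b₀ b₁ b₂ s h D := by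
  classical
  obtain ⟨g, hg, -⟩ := bfam_mk (fun k : XI => if k.2 ∈ D then jet u k.1 k.2 else 0) M hM0 (by
    rintro ⟨k, x⟩
    by_cases hx : x ∈ D
    · simpa [hx] using hM k x hx
    · simpa [hx] using hM0)
  have hgD : ∀ k, ∀ x ∈ D, g (k, x) = jet u k x := by
    intro k x hx
    rw [hg]; simp [hx]
  obtain ⟨hu2, hP, hQ⟩ := hu
  have hu1 : ∀ i, ContDiffOn ℝ 1 (pd i u) D := fun i => pd_contDiffOn hu2 hD (by norm_num) i
  have hc : ∀ {f : (Fin 3 → ℝ) → ℂ} {k : JI} {L : (Fin 3 → ℝ) →L[ℝ] ℂ} {x}, x ∈ D →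
      (∀ z ∈ D, g (k, z) = f z) → HasFDerivAt f L x → HasFDerivAt (fun z => g (k, z)) L x := by
    intro f k L x hx he hf
    refine hf.congr_of_eventuallyEq ?_
    filter_upwards [hD.mem_nhds hx] with z hz using he z hz
  refine ⟨g, rsub_mem.2 ⟨jsub_mem.2 ⟨?_, ?_, ?_⟩, hy, ?_, ?_⟩⟩
  · intro x hx
    refine hc hx (hgD none) (hfd_congr (hasFDerivAt_dsum ((hu2.contDiffAt
      (hD.mem_nhds hx)).differentiableAt (by norm_num))) fun i => hgD _ x hx)
  · intro i x hx
    refine hc hx (hgD (some (i, none))) (hfd_congr (hasFDerivAt_dsum (((hu1 i).contDiffAt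
      (hD.mem_nhds hx)).differentiableAt (by norm_num))) fun j => hgD _ x hx)
  · intro i j
    exact (pd_contDiffOn (m := 0) (hu1 i) hD (by norm_num) j).continuousOn.congr (hgD _)
  · intro x hx
    rw [pj_eq (u := u) (fun i => hgD _ x hx) (fun i j => hgD _ x hx)]
    exact hP x hx
  · intro x hx
    rw [hgD _ _ hx, hgD _ _ hx]
    exact hQ x hx
end

section
open Set Filter Topology Metric Function MeasureTheory

theorem dset_small {δ₀ : ℝ} {V : Set (Fin 3 → ℝ)} (hV : V ∈ 𝓝 (0 : Fin 3 → ℝ)) :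
    ∃ n : ℕ, Dset (δ₀ / (n + 1)) ⊆ V := by
  obtain ⟨ρ, hρ, hb⟩ := Metric.mem_nhds_iff.1 hV
  have ht : Tendsto (fun n : ℕ => δ₀ / ((n : ℝ) + 1)) atTop (𝓝 0) :=
    tendsto_const_div_atTop_nhds_zero_nat δ₀ |>.comp (tendsto_add_atTop_nat 1) |>.congr (by
      intro n; simp)
  have h1 := ht.eventually (gt_mem_nhds hρ)
  have h2 := ht.eventually (gt_mem_nhds (by positivity : 0 < ρ ^ 2))
  obtain ⟨n, hn1, hn2⟩ := (h1.and h2).exists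
  refine ⟨n, fun x hx => hb ?_⟩
  have hx' : x 1 ^ 2 + x 2 ^ 2 + |x 0| < δ₀ / (n + 1) := hx
  rw [mem_ball, dist_zero_right, pi_norm_lt_iff hρ]
  have a1 := sq_nonneg (x 1)
  have a2 := sq_nonneg (x 2)
  have a0 := abs_nonneg (x 0)
  intro i
  fin_cases i
  · show ‖x 0‖ < ρ
    rw [Real.norm_eq_abs]; linarith
  · show ‖x 1‖ < ρ
    rw [Real.norm_eq_abs]
    exact abs_lt_of_sq_lt_sq (by linarith) hρ.le
  · show ‖x 2‖ < ρ
    rw [Real.norm_eq_abs]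
    exact abs_lt_of_sq_lt_sq (by linarith) hρ.le

theorem sol_mono {P : ((Fin 3 → ℝ) → ℂ) → (Fin 3 → ℝ) → ℂ} {U V : Set (Fin 3 → ℝ)}
    {u₀ u₁ : (Fin 2 → ℝ) → ℂ} {u : (Fin 3 → ℝ) → ℂ} (h : IsCauchySolution P U u₀ u₁ u)
    (hV : V ⊆ U) : IsCauchySolution P V u₀ u₁ u :=
  ⟨h.1.mono hV, fun x hx => h.2.1 x (hV hx), fun x hx => h.2.2 x (hV hx)⟩

theorem jet_bdd {U : Set (Fin 3 → ℝ)} (hU : U ∈ 𝓝 (0 : Fin 3 → ℝ)) {u : (Fin 3 → ℝ) → ℂ}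
    (hu : ContDiffOn ℝ 2 u U) : ∃ M ≥ 0, ∀ᶠ x in 𝓝 (0 : Fin 3 → ℝ), ∀ k, ‖jet u k x‖ ≤ M := by
  have h0 : (0 : Fin 3 → ℝ) ∈ interior U := mem_interior_iff_mem_nhds.2 hU
  have hO : IsOpen (interior U) := isOpen_interior
  have hu' := hu.mono interior_subset
  have hu1 : ∀ i, ContDiffOn ℝ 1 (pd i u) (interior U) :=
    fun i => pd_contDiffOn hu' hO (by norm_num) i
  have hc : ∀ k, ContinuousAt (jet u k) 0 := by
    rintro (_ | ⟨i, _ | j⟩)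
    · exact hu'.continuousOn.continuousAt (hO.mem_nhds h0)
    · exact (hu1 i).continuousOn.continuousAt (hO.mem_nhds h0)
    · exact (pd_contDiffOn (m := 0) (hu1 i) hO (by norm_num) j).continuousOn.continuousAt
        (hO.mem_nhds h0)
  refine ⟨∑ k, (‖jet u k 0‖ + 1), Finset.sum_nonneg fun k _ => by positivity, ?_⟩
  rw [eventually_all]
  intro k
  filter_upwards [(hc k).norm.eventually (gt_mem_nhds (lt_add_one ‖jet u k 0‖))] with x hx
  exact hx.le.trans (Finset.single_le_sum (f := fun k => ‖jet u k 0‖ + 1)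
    (fun k _ => by positivity) (Finset.mem_univ k))

theorem main_exists (b₀ b₁ b₂ : ℂ) (s h : ℝ) (hh : 0 < h)
    (hsolv : LocallySolvable (Pop b₀ b₁ b₂) s) (δ₀ : ℝ) :
    ∃ n : ℕ, ∃ C > 0, ∀ y ∈ SData s h, ∃ g,
      (g, y) ∈ RSub b₀ b₁ b₂ s h (Dset (δ₀ / (n + 1))) ∧ ‖g‖ ≤ C * ‖y‖ := by
  refine banach_rel (SData s h) (sdata_closed s h)
    (fun n : ℕ => RSub b₀ b₁ b₂ s h (Dset (δ₀ / (n + 1))))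
    (fun n => rsub_closed _ _ _ _ _ (dset_open _)) ?_ ?_
  · rintro n ⟨g, y⟩ hp
    exact (rsub_mem.1 hp).2.1
  · intro y hy
    obtain ⟨U, hU, u, hu⟩ := hsolv _ _ (data_from hh hy 0) (data_from hh hy 1)
    obtain ⟨M, hM0, hM⟩ := jet_bdd hU hu.1
    obtain ⟨n, hn⟩ := dset_small (δ₀ := δ₀) (inter_mem hU hM)
    exact ⟨n, sol_rsub (dset_open _) hy (sol_mono hu fun x hx => (hn hx).1) hM0
      fun k x hx => (hn hx).2 k⟩

theorem final_thm (b₀ b₁ b₂ : ℂ) (s h : ℝ) (hh : 0 < h)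
    (hsolv : LocallySolvable (Pop b₀ b₁ b₂) s) :
    ∃ δ > (0:ℝ),
      (∀ ε₁ : ℝ, 0 < ε₁ → ε₁ < δ → ∀ u₀ u₁ : (Fin 2 → ℝ) → ℂ,
        MemGevreyZero s h ε₁ u₀ → MemGevreyZero s h ε₁ u₁ →
          (∃ u : (Fin 3 → ℝ) → ℂ, IsCauchySolution (Pop b₀ b₁ b₂) (Dset δ) u₀ u₁ u) ∧
          (∀ u v : (Fin 3 → ℝ) → ℂ, IsCauchySolution (Pop b₀ b₁ b₂) (Dset δ) u₀ u₁ u →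
            IsCauchySolution (Pop b₀ b₁ b₂) (Dset δ) u₀ u₁ v →
            Set.EqOn u v (Dset δ))) ∧
      (∀ L : Set (Fin 3 → ℝ), IsCompact L → L ⊆ Dset δ →
        ∃ C > (0:ℝ), ∀ ε₁ : ℝ, 0 < ε₁ → ε₁ < δ → ∀ u₀ u₁ : (Fin 2 → ℝ) → ℂ,
          MemGevreyZero s h ε₁ u₀ → MemGevreyZero s h ε₁ u₁ →
          ∀ u : (Fin 3 → ℝ) → ℂ, IsCauchySolution (Pop b₀ b₁ b₂) (Dset δ) u₀ u₁ u →
          ∀ N₀ N₁ : ℝ, GevreyBound s h N₀ u₀ → GevreyBound s h N₁ u₁ →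
            ∀ x ∈ L, ‖u x‖ ≤ C * (N₀ + N₁) ∧
              (∀ i : Fin 3, ‖pd i u x‖ ≤ C * (N₀ + N₁)) ∧
              (∀ i j : Fin 3, ‖pd i (pd j u) x‖ ≤ C * (N₀ + N₁))) := by
  set c : ℝ := ‖b₀‖ + ‖b₁‖ + ‖b₂‖ with hcdef
  have n0 := norm_nonneg b₀
  have n1 := norm_nonneg b₁
  have n2 := norm_nonneg b₂
  have hc : 0 ≤ c := by positivity
  set K : ℝ := 100 * (1 + c) with hK
  have hKpos : 0 < K := by positivity
  obtain ⟨n, C, hC, hmain⟩ := main_exists b₀ b₁ b₂ s h hh hsolv (1 / K ^ 2)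
  set δ : ℝ := 1 / K ^ 2 / (n + 1) with hδ
  have hδpos : 0 < δ := by positivity
  have hδK : δ * K ^ 2 ≤ 1 := by
    have : δ * K ^ 2 = 1 / (n + 1) := by rw [hδ]; field_simp
    rw [this, div_le_one (by positivity)]
    have : (0:ℝ) ≤ n := Nat.cast_nonneg n
    linarith
  have huniq : ∀ {u₀ u₁ : (Fin 2 → ℝ) → ℂ} {u v : (Fin 3 → ℝ) → ℂ},
      IsCauchySolution (Pop b₀ b₁ b₂) (Dset δ) u₀ u₁ u →
      IsCauchySolution (Pop b₀ b₁ b₂) (Dset δ) u₀ u₁ v → EqOn u v (Dset δ) :=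
    fun hu hv => uniq_full hc le_rfl hδK (by linarith) (by linarith) (by linarith) hu hv
  have hex : ∀ (u₀ u₁ : (Fin 2 → ℝ) → ℂ), ContDiff ℝ (⊤ : ℕ∞) u₀ → ContDiff ℝ (⊤ : ℕ∞) u₁ →
      ∀ N₀ N₁, GevreyBound s h N₀ u₀ → GevreyBound s h N₁ u₁ → ∃ u,
        IsCauchySolution (Pop b₀ b₁ b₂) (Dset δ) u₀ u₁ u ∧
        ∀ k, ∀ x ∈ Dset δ, ‖jet u k x‖ ≤ C * (N₀ + N₁) := by
    intro u₀ u₁ h0 h1 N₀ N₁ hN0 hN1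
    obtain ⟨y, hy, hyd, hyN⟩ := data_to hh ![u₀, u₁] (by
      intro e; fin_cases e
      · exact h0
      · exact h1) ![N₀, N₁] (by
      intro e; fin_cases e
      · exact hN0
      · exact hN1)
    obtain ⟨g, hg, hgN⟩ := hmain y hy
    obtain ⟨hsol, e1, e2⟩ := rsub_sol (dset_open _) hg
    have d0 : (fun x => y (0, (0, 0), x)) = u₀ := funext fun x => hyd 0 x
    have d1 : (fun x => y (1, (0, 0), x)) = u₁ := funext fun x => hyd 1 x
    rw [d0, d1] at hsol
    have hle : ∀ k, ‖g k‖ ≤ C * (N₀ + N₁) := fun k =>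
      (bfam_le g k).trans (hgN.trans (mul_le_mul_of_nonneg_left hyN hC.le))
    refine ⟨_, hsol, ?_⟩
    rintro (_ | ⟨i, _ | j⟩) x hx
    · exact hle _
    · show ‖pd i _ x‖ ≤ _
      rw [e1 i x hx]; exact hle _
    · show ‖pd j (pd i _) x‖ ≤ _
      rw [e2 i j x hx]; exact hle _
  refine ⟨δ, hδpos, ?_, ?_⟩
  · intro ε₁ _ _ u₀ u₁ hu0 hu1
    obtain ⟨N₀, hN0⟩ := hu0.2.2
    obtain ⟨N₁, hN1⟩ := hu1.2.2
    obtain ⟨u, hu, -⟩ := hex u₀ u₁ hu0.1 hu1.1 N₀ N₁ hN0 hN1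
    exact ⟨⟨u, hu⟩, fun u v => huniq⟩
  · intro L _ hL
    refine ⟨C, hC, ?_⟩
    intro ε₁ _ _ u₀ u₁ hu0 hu1 u hu N₀ N₁ hN0 hN1 x hx
    obtain ⟨v, hv, hvN⟩ := hex u₀ u₁ hu0.1 hu1.1 N₀ N₁ hN0 hN1
    have hxD := hL hx
    have q0 := huniq hu hv
    have q1 := fun i => pd_congr (dset_open δ) q0 i
    have q2 := fun i j => pd_congr (dset_open δ) (q1 i) j
    refine ⟨?_, fun i => ?_, fun i j => ?_⟩
    · rw [q0 hxD]; exact hvN none x hxD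
    · rw [q1 i hxD]; exact hvN (some (i, none)) x hxD
    · rw [q2 j i hxD]; exact hvN (some (j, some i)) x hxD
end

/-- If the Cauchy problem for `P = P_mod + b₀D₀ + b₁D₁ + b₂D₂` is locally solvable in
`γ^(s)` at the origin, then there is `δ > 0` such that for any `0 < ε₁ < δ` and any data
`u₀, u₁ ∈ γ₀^(s,h)({|x'| ≤ ε₁})` there is a unique `C²` solution of the Cauchy problem on
`D_δ`, and for every compact `L ⊆ D_δ` there is `C > 0`, independent of the data, with
`|u|_{C²(L)} ≤ C·Σ_{j=0,1} sup_{α,x'} |∂^α u_j(x')|/(h^|α|(|α|!)^s)` (expressed here via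
arbitrary admissible bounding constants `N₀, N₁` for the data). -/
theorem a_priori_estimate_from_solvability (b₀ b₁ b₂ : ℂ) (s h : ℝ) (hs : 1 < s)
    (hh : 0 < h) (hsolv : LocallySolvable (Pop b₀ b₁ b₂) s) :
    ∃ δ > (0:ℝ),
      (∀ ε₁ : ℝ, 0 < ε₁ → ε₁ < δ → ∀ u₀ u₁ : (Fin 2 → ℝ) → ℂ,
        MemGevreyZero s h ε₁ u₀ → MemGevreyZero s h ε₁ u₁ →
          (∃ u : (Fin 3 → ℝ) → ℂ, IsCauchySolution (Pop b₀ b₁ b₂) (Dset δ) u₀ u₁ u) ∧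
          (∀ u v : (Fin 3 → ℝ) → ℂ, IsCauchySolution (Pop b₀ b₁ b₂) (Dset δ) u₀ u₁ u →
            IsCauchySolution (Pop b₀ b₁ b₂) (Dset δ) u₀ u₁ v →
            Set.EqOn u v (Dset δ))) ∧
      (∀ L : Set (Fin 3 → ℝ), IsCompact L → L ⊆ Dset δ →
        ∃ C > (0:ℝ), ∀ ε₁ : ℝ, 0 < ε₁ → ε₁ < δ → ∀ u₀ u₁ : (Fin 2 → ℝ) → ℂ,
          MemGevreyZero s h ε₁ u₀ → MemGevreyZero s h ε₁ u₁ →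
          ∀ u : (Fin 3 → ℝ) → ℂ, IsCauchySolution (Pop b₀ b₁ b₂) (Dset δ) u₀ u₁ u →
          ∀ N₀ N₁ : ℝ, GevreyBound s h N₀ u₀ → GevreyBound s h N₁ u₁ →
            ∀ x ∈ L, ‖u x‖ ≤ C * (N₀ + N₁) ∧
              (∀ i : Fin 3, ‖pd i u x‖ ≤ C * (N₀ + N₁)) ∧
              (∀ i j : Fin 3, ‖pd i (pd j u) x‖ ≤ C * (N₀ + N₁))) := by
  exact final_thm b₀ b₁ b₂ s h hh hsolv
end
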